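/- arXiv:1801.01310 — 2 statements merged into one kernel-verified Lean document; each statement's English description precedes it below -/
import Mathlib

section
/- Let G be a vertex-minimal counterexample to 'Δ(H) ≥ 9 implies χ(H) ≤ max{Δ(H) − 1, ω(H)}'. Then for every vertex u of G, the graph G − u satisfies χ(G − u) = Δ(G) − 1. -/
open SimpleGraph Finset

/-!
If `Δ(G - u) < Δ(G)`, Brooks' theorem with `Δ(G) - 1` colours bounds `χ(G - u)`, since it also
shows `ω(G) ≤ Δ(G) - 1`: otherwise `G` would be `ω(G)`-colourable. If `Δ(G - u) = Δ(G)`, minimality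
applies. Equality holds because giving `u` a fresh colour extends any colouring of `G - u`.

Brooks' theorem is proved following Lovász. A vertex-critical obstruction to `k`-colouring has no
cut vertex and is `k`-regular. Unless it is complete, it contains a vertex `v` with nonadjacent
neighbours `a` and `b` such that deleting `a` and `b` leaves it connected. Colour `a` and `b` alike
and then the other vertices greedily, always keeping the uncoloured part attached to `v`: each
vertex other than `v` still has an uncoloured neighbour when its turn comes, and `v`, coloured last,
sees the colour of `a` and `b` twice.
-/

section Coloring

variable {V α : Type*} {G : SimpleGraph V} {s t : Finset V} {f : V → α}

/-- `f` restricts to a proper colouring of the induced subgraph `G[s]`. The colouring is a total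
function, with irrelevant values outside `s`, so that colourings of subgraphs can be extended
and glued without changing types. -/
def IsProperOn (G : SimpleGraph V) (f : V → α) (s : Finset V) : Prop :=
  ∀ ⦃a⦄, a ∈ s → ∀ ⦃b⦄, b ∈ s → G.Adj a b → f a ≠ f b

theorem IsProperOn.mono (hf : IsProperOn G f t) (hst : s ⊆ t) : IsProperOn G f s :=
  fun _ ha _ hb => hf (hst ha) (hst hb)

variable [DecidableEq V]

theorem IsProperOn.exists_glue {g : V → α} (hf : IsProperOn G f s) (hg : IsProperOn G g t)
    {c : V} (hc : s ∩ t ⊆ {c}) (hadj : ∀ a ∈ s \ t, ∀ b ∈ t \ s, ¬G.Adj a b) :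
    ∃ h : V → α, IsProperOn G h (s ∪ t) := by
  classical
  let σ : Equiv.Perm α := Equiv.swap (g c) (f c)
  have hσg : IsProperOn G (σ ∘ g) t := fun a ha b hb hab h => hg ha hb hab (σ.injective h)
  have hagree : ∀ a ∈ s, a ∈ t → σ (g a) = f a := fun a has hat => by
    obtain rfl : a = c := mem_singleton.1 (hc (mem_inter.2 ⟨has, hat⟩))
    exact Equiv.swap_apply_left _ _
  refine ⟨fun a => if a ∈ s then f a else σ (g a), fun a ha b hb hab => ?_⟩
  have hba := hab.symm
  grind [IsProperOn]

variable [DecidableRel G.Adj] [Fintype α]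

theorem IsProperOn.exists_update_insert [DecidableEq α] (hf : IsProperOn G f s) {v : V}
    (hv : #({w ∈ s | G.Adj v w}.image f) < Fintype.card α) :
    ∃ c, IsProperOn G (Function.update f v c) (insert v s) := by
  obtain ⟨c, -, hc⟩ := exists_mem_notMem_of_card_lt_card (hv.trans_eq card_univ.symm)
  have hcw : ∀ w ∈ s, G.Adj v w → f w ≠ c := fun w hws hvw h =>
    hc (mem_image.2 ⟨w, mem_filter.2 ⟨hws, hvw⟩, h⟩)
  refine ⟨c, fun a ha b hb hab => ?_⟩
  have hba := hab.symm
  have hne := hab.ne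
  grind [IsProperOn]

theorem IsProperOn.exists_update_insert_of_eq (hf : IsProperOn G f s) {v a b : V}
    (ha : a ∈ s) (hb : b ∈ s) (hva : G.Adj v a) (hvb : G.Adj v b) (hab : a ≠ b) (hfab : f a = f b)
    (hdeg : #{w ∈ s | G.Adj v w} ≤ Fintype.card α) :
    ∃ c, IsProperOn G (Function.update f v c) (insert v s) := by
  classical
  refine hf.exists_update_insert ((card_image_le.lt_of_ne fun h => hab ?_).trans_le hdeg)
  exact card_image_iff.1 h (by simp [ha, hva]) (by simp [hb, hvb]) hfab

theorem IsProperOn.exists_extend (hf : IsProperOn G f s) (hst : Disjoint s t)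
    (hdeg : ∀ U ⊆ t, U.Nonempty → ∃ v ∈ U, #{w ∈ s ∪ U | G.Adj v w} < Fintype.card α) :
    ∃ g : V → α, IsProperOn G g (s ∪ t) ∧ ∀ a ∈ s, g a = f a := by
  classical
  induction t using Finset.strongInduction with
  | H t ih =>
    rcases t.eq_empty_or_nonempty with rfl | ht
    · exact ⟨f, by rwa [union_empty], fun _ _ => rfl⟩
    obtain ⟨v, hvt, hv⟩ := hdeg t Subset.rfl ht
    obtain ⟨g, hg, hgf⟩ := ih (t.erase v) (erase_ssubset hvt)
      (hst.mono_right (erase_subset v t)) fun U hU => hdeg U (hU.trans (erase_subset v t))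
    have hcard : #({w ∈ s ∪ t.erase v | G.Adj v w}.image g) < Fintype.card α :=
      calc #({w ∈ s ∪ t.erase v | G.Adj v w}.image g)
        _ ≤ #{w ∈ s ∪ t.erase v | G.Adj v w} := card_image_le
        _ ≤ #{w ∈ s ∪ t | G.Adj v w} := by gcongr; exact erase_subset v t
        _ < Fintype.card α := hv
    obtain ⟨c, hc⟩ := hg.exists_update_insert hcard
    refine ⟨Function.update g v c, ?_, fun a ha => ?_⟩
    · rwa [← union_insert, insert_erase hvt] at hc
    · rw [Function.update_of_ne (hst.forall_ne_finset ha hvt), hgf a ha]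

end Coloring

section Separation

variable {V : Type*} {G : SimpleGraph V} {s U : Finset V} {c : V}

/-- `U` is one side of a separation of the induced subgraph `G[s]`: a nonempty proper part of `s`
without edges to the rest of `s`. -/
structure IsSeparation (G : SimpleGraph V) (s U : Finset V) : Prop where
  nonempty : U.Nonempty
  ssubset : U ⊂ s
  not_adj : ∀ a ∈ U, ∀ b ∈ s, b ∉ U → ¬G.Adj a b

/-- The induced subgraph `G[s]` has no separation, that is, it is empty or connected. -/
def PreconnectedOn (G : SimpleGraph V) (s : Finset V) : Prop :=
  ∀ U, ¬IsSeparation G s U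

theorem PreconnectedOn.exists_adj (hs : PreconnectedOn G s) (hU : U.Nonempty) (hUs : U ⊂ s) :
    ∃ a ∈ U, ∃ b ∈ s, b ∉ U ∧ G.Adj a b := by
  by_contra! h
  exact hs U ⟨hU, hUs, h⟩

theorem PreconnectedOn.exists_adj_adj_not_adj {x y : V} (hs : PreconnectedOn G s) (hx : x ∈ s)
    (hy : y ∈ s) (hxy : x ≠ y) (hnadj : ¬G.Adj x y) :
    ∃ v ∈ s, ∃ z ∈ s, G.Adj v x ∧ G.Adj v z ∧ x ≠ z ∧ ¬G.Adj x z := by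
  classical
  obtain ⟨v, hv, z, hz, hzN, hvz⟩ := hs.exists_adj (U := {w ∈ s | x = w ∨ G.Adj x w})
    ⟨x, by simp [hx]⟩ ⟨filter_subset _ _, fun h => by simpa [hxy, hnadj] using h hy⟩
  obtain ⟨hvs, rfl | hxv⟩ := mem_filter.1 hv
  · exact absurd (mem_filter.2 ⟨hz, .inr hvz⟩) hzN
  · rw [mem_filter, not_and, not_or] at hzN
    exact ⟨v, hvs, z, hz, hxv.symm, hvz, hzN hz⟩

theorem IsSeparation.sdiff [DecidableEq V] (hU : IsSeparation G s U) :
    IsSeparation G s (s \ U) where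
  nonempty := sdiff_nonempty.2 hU.ssubset.2
  ssubset := sdiff_ssubset hU.ssubset.1 hU.nonempty
  not_adj a ha b hb hbU hab := by
    obtain ⟨has, haU⟩ := mem_sdiff.1 ha
    exact hU.not_adj b (by grind) a has haU hab.symm

theorem exists_isSeparation_notMem (hs : ¬PreconnectedOn G s) (c : V) :
    ∃ U, IsSeparation G s U ∧ c ∉ U := by
  classical
  obtain ⟨U, hU⟩ := not_forall_not.1 hs
  by_cases hc : c ∈ U
  · exact ⟨s \ U, hU.sdiff, fun h => (mem_sdiff.1 h).2 hc⟩
  · exact ⟨U, hU, hc⟩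

variable [DecidableEq V]

theorem IsSeparation.inter_erase (hs : PreconnectedOn G s)
    (hU : IsSeparation G (s.erase c) U) {a : V} (ha : a ∈ U) {P : Finset V}
    (hP : IsSeparation G (s.erase a) P) (hcP : c ∉ P) :
    IsSeparation G (s.erase a) (U ∩ P) := by
  have hPs : P ⊆ s := hP.ssubset.subset.trans (erase_subset a s)
  have has : a ∈ s := mem_of_mem_erase (hU.ssubset.subset ha)
  have haP : a ∉ P := fun h => notMem_erase a s (hP.ssubset.subset h)
  refine ⟨?_, inter_subset_right.trans_ssubset hP.ssubset, fun x hx y hy hyUP hxy => ?_⟩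
  · by_contra hdisj
    have hPU : ∀ x ∈ P, x ∉ U := fun x hxP hxU =>
      hdisj ⟨x, mem_inter.2 ⟨hxU, hxP⟩⟩
    refine hs P ⟨hP.nonempty, ⟨hPs, fun h => haP (h has)⟩, fun x hx y hy hyP hxy => ?_⟩
    rcases eq_or_ne y a with rfl | hya
    · exact hU.not_adj y ha x (by grind) (hPU x hx) hxy.symm
    · exact hP.not_adj x hx y (mem_erase.2 ⟨hya, hy⟩) hyP hxy
  · obtain ⟨hxU, hxP⟩ := mem_inter.1 hx
    by_cases hyP : y ∈ P
    · exact hU.not_adj x hxU y (by grind) (by grind) hxy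
    · exact hP.not_adj x hxP y hy hyP hxy

-- The last separation found in this descent cuts off an end block of `G[s]`.
theorem IsSeparation.exists_subset_forall_preconnectedOn_erase (hs : PreconnectedOn G s)
    (hU : IsSeparation G (s.erase c) U) :
    ∃ c', ∃ U' ⊆ U, IsSeparation G (s.erase c') U' ∧ ∀ a ∈ U', PreconnectedOn G (s.erase a) := by
  induction U using Finset.strongInduction generalizing c with
  | H U ih =>
    by_cases hcut : ∀ a ∈ U, PreconnectedOn G (s.erase a)
    · exact ⟨c, U, Subset.rfl, hU, hcut⟩
    push Not at hcut
    obtain ⟨a, haU, ha⟩ := hcut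
    obtain ⟨P, hP, hcP⟩ := exists_isSeparation_notMem ha c
    have haP : a ∉ P := fun h => notMem_erase a s (hP.ssubset.subset h)
    obtain ⟨c', U', hU', hsep, hpre⟩ :=
      ih (U ∩ P) ⟨inter_subset_left, fun h => haP (mem_inter.1 (h haU)).2⟩
        (hU.inter_erase hs haU hP hcP)
    exact ⟨c', U', hU'.trans inter_subset_left, hsep, hpre⟩

theorem IsSeparation.preconnectedOn_erase_erase (hU : IsSeparation G (s.erase c) U) {a b : V}
    (ha : a ∈ U) (hb : b ∈ s.erase c \ U) (hsa : PreconnectedOn G (s.erase a))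
    (hsb : PreconnectedOn G (s.erase b)) : PreconnectedOn G ((s.erase a).erase b) := by
  by_contra hsab
  obtain ⟨W, hW, hcW⟩ := exists_isSeparation_notMem hsab c
  have hWs : W ⊆ (s.erase a).erase b := hW.ssubset.subset
  by_cases hWU : (W ∩ U).Nonempty
  · refine hsa (W ∩ U) ⟨hWU, ?_, fun x hx y hy hyWU hxy => ?_⟩
    · exact inter_subset_left.trans_ssubset (hW.ssubset.trans_subset (erase_subset _ _))
    · have hxW := hW.not_adj x (mem_inter.1 hx).1 y
      have hxU := hU.not_adj x (mem_inter.1 hx).2 y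
      grind
  · refine hsb W ⟨hW.nonempty, ?_, fun x hx y hy hyW hxy => ?_⟩
    · exact hW.ssubset.trans_subset (by rw [erase_right_comm]; exact erase_subset _ _)
    · have hxW := hW.not_adj x hx y
      have hax := hU.not_adj a ha x
      have hxU : x ∉ U := fun hxU => hWU ⟨x, mem_inter.2 ⟨hx, hxU⟩⟩
      have hyx := hxy.symm
      grind

theorem PreconnectedOn.of_erase {x w : V} (hx : PreconnectedOn G (s.erase x)) (hw : w ∈ s)
    (hxw : G.Adj x w) : PreconnectedOn G s := by
  by_contra hs
  obtain ⟨U, hU, hxU⟩ := exists_isSeparation_notMem hs x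
  have hUx : U ⊆ s.erase x := subset_erase.2 ⟨hU.ssubset.subset, hxU⟩
  rcases hUx.eq_or_ssubset with rfl | hssub
  · have hxs : x ∈ s := by_contra fun h => hU.ssubset.ne (erase_eq_of_notMem h)
    exact hU.not_adj w (mem_erase.2 ⟨hxw.ne', hw⟩) x hxs hxU hxw.symm
  · exact hx U ⟨hU.nonempty, hssub, fun a ha b hb => hU.not_adj a ha b (mem_of_mem_erase hb)⟩

theorem IsSeparation.exists_adj_of_erase {x : V} (hU : IsSeparation G ((s.erase x).erase c) U)
    (hc : PreconnectedOn G (s.erase c)) : ∃ a ∈ U, G.Adj x a := by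
  have hssub : U ⊂ s.erase c := hU.ssubset.trans_subset (erase_subset_erase c (erase_subset x s))
  obtain ⟨a, ha, b, hb, hbU, hab⟩ := hc.exists_adj hU.nonempty hssub
  obtain rfl : b = x := by
    by_contra hbx
    exact hU.not_adj a ha b (by grind) hbU hab
  exact ⟨a, ha, hab.symm⟩

theorem IsSeparation.exists_adj_adj_not_adj {x : V} (hU : IsSeparation G ((s.erase x).erase c) U)
    (hcut : ∀ a, PreconnectedOn G (s.erase a)) :
    ∃ a ∈ s, ∃ b ∈ s, G.Adj x a ∧ G.Adj x b ∧ a ≠ b ∧ ¬G.Adj a b ∧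
      PreconnectedOn G (((s.erase x).erase a).erase b) := by
  obtain ⟨c₁, U₁, hU₁, hsep₁, hpre₁⟩ :=
    hU.exists_subset_forall_preconnectedOn_erase (hcut x)
  obtain ⟨c₂, U₂, hU₂, hsep₂, hpre₂⟩ :=
    hU.sdiff.exists_subset_forall_preconnectedOn_erase (hcut x)
  obtain ⟨a, ha, hxa⟩ := hsep₁.exists_adj_of_erase (hcut c₁)
  obtain ⟨b, hb, hxb⟩ := hsep₂.exists_adj_of_erase (hcut c₂)
  have haU : a ∈ U := hU₁ ha
  obtain ⟨hbs, hbU⟩ := mem_sdiff.1 (hU₂ hb)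
  refine ⟨a, ?_, b, ?_, hxa, hxb, ?_, hU.not_adj a haU b hbs hbU, ?_⟩
  · exact mem_of_mem_erase (mem_of_mem_erase (hU.ssubset.subset haU))
  · exact mem_of_mem_erase (mem_of_mem_erase hbs)
  · exact fun hab => hbU (hab ▸ haU)
  · exact hU.preconnectedOn_erase_erase haU (hU₂ hb) (hpre₁ a ha) (hpre₂ b hb)

theorem exists_adj_adj_not_adj_preconnectedOn [DecidableRel G.Adj]
    (hcut : ∀ a, PreconnectedOn G (s.erase a)) (hdeg : ∀ v ∈ s, 3 ≤ #{w ∈ s | G.Adj v w})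
    (hclique : ¬G.IsClique s) :
    ∃ v ∈ s, ∃ a ∈ s, ∃ b ∈ s, G.Adj v a ∧ G.Adj v b ∧ a ≠ b ∧ ¬G.Adj a b ∧
      PreconnectedOn G ((s.erase a).erase b) := by
  obtain ⟨x, hx, y, hy, hxy, hnadj⟩ : ∃ x ∈ s, ∃ y ∈ s, x ≠ y ∧ ¬G.Adj x y := by
    simpa [isClique_iff, Set.Pairwise] using hclique
  have hthird : ∀ a b, ∃ w ∈ (s.erase a).erase b, G.Adj x w := fun a b => by
    obtain ⟨w, hw, hwab⟩ := exists_mem_notMem_of_card_lt_card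
      ((card_le_two (a := a) (b := b)).trans_lt (hdeg x hx))
    exact ⟨w, by grind⟩
  by_cases hxcut : ∀ c, PreconnectedOn G ((s.erase x).erase c)
  · obtain ⟨w, hw, hxw⟩ := hthird x x
    have hs : PreconnectedOn G s := (hcut x).of_erase (by grind) hxw
    obtain ⟨v, hv, z, hz, hvx, hvz, hxz, hnadj⟩ := hs.exists_adj_adj_not_adj hx hy hxy hnadj
    exact ⟨v, hv, x, hx, z, hz, hvx, hvz, hxz, hnadj, hxcut z⟩
  · push Not at hxcut
    obtain ⟨c, hc⟩ := hxcut
    obtain ⟨U, hU⟩ := not_forall_not.1 hc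
    obtain ⟨a, ha, b, hb, hxa, hxb, hab, hnadj, hpre⟩ := hU.exists_adj_adj_not_adj hcut
    obtain ⟨w, hw, hxw⟩ := hthird a b
    rw [erase_right_comm (s := s), erase_right_comm] at hpre
    exact ⟨x, hx, a, ha, b, hb, hxa, hxb, hab, hnadj, hpre.of_erase hw hxw⟩

end Separation

section Brooks

variable {V α : Type*} {G : SimpleGraph V} {s t : Finset V} {f : V → α}

/-- The induced subgraph `G[s]` is vertex-critical for colourings by `α`: it has no such
colouring, but `G[t]` has one for every proper subset `t` of `s`. -/
structure IsCriticalOn (G : SimpleGraph V) (α : Type*) (s : Finset V) : Prop where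
  not_isProperOn : ∀ f : V → α, ¬IsProperOn G f s
  exists_isProperOn : ∀ t ⊂ s, ∃ f : V → α, IsProperOn G f t

theorem IsCriticalOn.preconnectedOn_erase [DecidableEq V] (hs : IsCriticalOn G α s) (c : V) :
    PreconnectedOn G (s.erase c) := by
  intro U hU
  have hUs : U ⊆ s := hU.ssubset.subset.trans (erase_subset c s)
  have hssub : s ∩ insert c U ⊂ s := by
    obtain ⟨y, hy, hyU⟩ := exists_of_ssubset hU.ssubset
    exact ⟨inter_subset_left, fun h => by grind⟩
  obtain ⟨f, hf⟩ := hs.exists_isProperOn _ hssub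
  obtain ⟨g, hg⟩ := hs.exists_isProperOn _ (sdiff_ssubset hUs hU.nonempty)
  obtain ⟨h, hh⟩ := hf.exists_glue hg (c := c) (by grind)
    fun a ha b hb => hU.not_adj a (by grind) b (by grind) (by grind)
  exact hs.not_isProperOn h (hh.mono (by grind))

variable [Fintype α]

theorem IsCriticalOn.card_le [DecidableRel G.Adj] (hs : IsCriticalOn G α s) {v : V} (hv : v ∈ s) :
    Fintype.card α ≤ #{w ∈ s | G.Adj v w} := by
  classical
  by_contra! hlt
  obtain ⟨f, hf⟩ := hs.exists_isProperOn _ (erase_ssubset hv)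
  have hcard : #({w ∈ s.erase v | G.Adj v w}.image f) < Fintype.card α :=
    calc #({w ∈ s.erase v | G.Adj v w}.image f)
      _ ≤ #{w ∈ s.erase v | G.Adj v w} := card_image_le
      _ ≤ #{w ∈ s | G.Adj v w} := by gcongr; exact erase_subset v s
      _ < Fintype.card α := hlt
  obtain ⟨c, hc⟩ := hf.exists_update_insert hcard
  rw [insert_erase hv] at hc
  exact hs.not_isProperOn _ hc

theorem IsCriticalOn.not_isClique [Nonempty α] (hs : IsCriticalOn G α s)
    (hfree : G.CliqueFreeOn s (Fintype.card α + 1)) : ¬G.IsClique s := by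
  classical
  intro hclique
  obtain ⟨v, hv⟩ : s.Nonempty := by
    rw [nonempty_iff_ne_empty]
    rintro rfl
    exact hs.not_isProperOn (fun _ => Classical.arbitrary α) (by simp [IsProperOn])
  have hcard : Fintype.card α + 1 ≤ #s :=
    calc Fintype.card α + 1
      _ ≤ #{w ∈ s | G.Adj v w} + 1 := by gcongr; exact hs.card_le hv
      _ ≤ #s := card_lt_card ⟨filter_subset _ _, fun h => by simpa using h hv⟩
  exact (hfree.mono G hcard) Set.Subset.rfl ⟨hclique, rfl⟩

variable [DecidableRel G.Adj]

theorem IsProperOn.exists_extend_erase [DecidableEq V] (hf : IsProperOn G f s)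
    (hst : Disjoint s t) (ht : PreconnectedOn G t) {v : V} (hv : v ∈ t)
    (hdeg : ∀ u ∈ t, #{w ∈ s ∪ t | G.Adj u w} ≤ Fintype.card α) :
    ∃ g : V → α, IsProperOn G g (s ∪ t.erase v) ∧ ∀ a ∈ s, g a = f a := by
  -- Within any uncoloured set `U`, a vertex with a neighbour in `t \ U` can be coloured last.
  refine hf.exists_extend (hst.mono_right (erase_subset v t)) fun U hU hUne => ?_
  have hUt : U ⊂ t := hU.trans_ssubset (erase_ssubset hv)
  obtain ⟨u, hu, w, hw, hwU, huw⟩ := ht.exists_adj hUne hUt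
  have hws : w ∉ s := fun h => hst.forall_ne_finset h hw rfl
  refine ⟨u, hu, (card_lt_card ?_).trans_le (hdeg u (hUt.subset hu))⟩
  refine ⟨filter_subset_filter _ (union_subset_union_right hUt.subset), fun h => ?_⟩
  have := h (mem_filter.2 ⟨mem_union_right s hw, huw⟩)
  grind

theorem exists_isProperOn_of_preconnectedOn_erase_erase [DecidableEq V] [Nonempty α]
    {v a b : V} (ha : a ∈ s) (hb : b ∈ s) (hv : v ∈ s) (hva : G.Adj v a) (hvb : G.Adj v b)
    (hab : a ≠ b) (hnadj : ¬G.Adj a b) (hpre : PreconnectedOn G ((s.erase a).erase b))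
    (hdeg : ∀ u ∈ s, #{w ∈ s | G.Adj u w} ≤ Fintype.card α) :
    ∃ f : V → α, IsProperOn G f s := by
  have hproper : IsProperOn G (fun _ => Classical.arbitrary α) {a, b} := by
    intro x hx y hy hxy
    have hyx := hxy.symm
    have := hxy.ne
    grind
  have hdisj : Disjoint {a, b} ((s.erase a).erase b) := by
    rw [Finset.disjoint_left]
    grind
  have hunion : {a, b} ∪ (s.erase a).erase b = s := by grind
  have hvab : v ∈ (s.erase a).erase b := by simp [hv, hva.ne, hvb.ne]
  obtain ⟨g, hg, hgab⟩ := hproper.exists_extend_erase hdisj hpre hvab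
    fun u hu => by rw [hunion]; exact hdeg u (by grind)
  have hsub : {a, b} ∪ ((s.erase a).erase b).erase v ⊆ s := by grind
  obtain ⟨c, hc⟩ := hg.exists_update_insert_of_eq (by simp) (by simp) hva hvb hab
    (by rw [hgab a (by simp), hgab b (by simp)])
    ((card_le_card (filter_subset_filter _ hsub)).trans (hdeg v hv))
  exact ⟨_, hc.mono (by grind)⟩

theorem exists_isProperOn_of_cliqueFreeOn (hα : 3 ≤ Fintype.card α)
    (hdeg : ∀ v ∈ s, #{w ∈ s | G.Adj v w} ≤ Fintype.card α)
    (hfree : G.CliqueFreeOn s (Fintype.card α + 1)) : ∃ f : V → α, IsProperOn G f s := by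
  classical
  have : Nonempty α := Fintype.card_pos_iff.1 (by lia)
  induction s using Finset.strongInduction with
  | H s ih =>
    by_contra! hnot
    have hcrit : IsCriticalOn G α s := ⟨hnot, fun t hts =>
      ih t hts (fun v hv => (card_le_card (filter_subset_filter _ hts.subset)).trans
        (hdeg v (hts.subset hv))) (hfree.subset G (coe_subset.2 hts.subset))⟩
    obtain ⟨v, hv, a, ha, b, hb, hva, hvb, hab, hnadj, hpre⟩ :=
      exists_adj_adj_not_adj_preconnectedOn hcrit.preconnectedOn_erase
        (fun v hv => hα.trans (hcrit.card_le hv)) (hcrit.not_isClique hfree)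
    obtain ⟨f, hf⟩ := exists_isProperOn_of_preconnectedOn_erase_erase (α := α)
      ha hb hv hva hvb hab hnadj hpre hdeg
    exact hnot f hf

theorem colorable_of_maxDegree_le_of_cliqueNum_le [Fintype V] {k : ℕ} (hk : 3 ≤ k)
    (hdeg : G.maxDegree ≤ k) (hω : G.cliqueNum ≤ k) : G.Colorable k := by
  obtain ⟨f, hf⟩ : ∃ f : V → Fin k, IsProperOn G f univ := by
    refine exists_isProperOn_of_cliqueFreeOn (by rwa [Fintype.card_fin]) (fun v _ => ?_) ?_
    · rw [Fintype.card_fin, ← neighborFinset_eq_filter, card_neighborFinset_eq_degree]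
      exact (G.degree_le_maxDegree v).trans hdeg
    · intro t _ ht
      have := ht.card_eq ▸ ht.isClique.card_le_cliqueNum
      rw [Fintype.card_fin] at this
      lia
  exact ⟨Coloring.mk f fun {a b} hab => hf (mem_univ a) (mem_univ b) hab⟩

end Brooks

section DeleteVertex

variable {V : Type*} {G : SimpleGraph V} {u : V} {n : ℕ}

theorem colorable_succ_of_colorable_induce_compl (h : (G.induce ({u}ᶜ : Set V)).Colorable n) :
    G.Colorable (n + 1) := by
  classical
  obtain ⟨C⟩ := h
  let f : V → Option (Fin n) := fun v => if hv : v = u then none else some (C ⟨v, hv⟩)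
  have hf : ∀ {v w}, G.Adj v w → f v ≠ f w := fun {v w} hvw => by
    by_cases hv : v = u <;> by_cases hw : w = u
    · exact absurd (hv.trans hw.symm) hvw.ne
    · simp [f, hv, hw]
    · simp [f, hv, hw]
    · simpa [f, hv, hw] using C.valid (v := ⟨v, hv⟩) (w := ⟨w, hw⟩) hvw
  simpa using (Coloring.mk f hf).colorable

theorem cliqueNum_le_maxDegree_sub_one_of_not_colorable [Fintype V] [DecidableRel G.Adj]
    (hΔ : 3 ≤ G.maxDegree) (hχ : ¬G.Colorable (max (G.maxDegree - 1) G.cliqueNum)) :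
    G.cliqueNum ≤ G.maxDegree - 1 := by
  by_contra! hω
  rw [max_eq_right hω.le] at hχ
  exact hχ (colorable_of_maxDegree_le_of_cliqueNum_le (by lia) (by lia) le_rfl)

open scoped Classical in
theorem min_counterexample_delete_vertex_chromatic_general [Fintype V] (hΔ : 4 ≤ G.maxDegree)
    (hχ : ((max (G.maxDegree - 1) G.cliqueNum : ℕ) : ℕ∞) < G.chromaticNumber)
    (hbound : (G.induce ({u}ᶜ : Set V)).maxDegree = G.maxDegree →
      (G.induce ({u}ᶜ : Set V)).chromaticNumber ≤
        ((max ((G.induce ({u}ᶜ : Set V)).maxDegree - 1)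
          (G.induce ({u}ᶜ : Set V)).cliqueNum : ℕ) : ℕ∞)) :
    (G.induce ({u}ᶜ : Set V)).chromaticNumber = ((G.maxDegree - 1 : ℕ) : ℕ∞) := by
  have hnot : ¬G.Colorable (max (G.maxDegree - 1) G.cliqueNum) := by
    rwa [← chromaticNumber_le_iff_colorable, not_le]
  have hω : G.cliqueNum ≤ G.maxDegree - 1 :=
    cliqueNum_le_maxDegree_sub_one_of_not_colorable (by lia) hnot
  have hωu : (G.induce ({u}ᶜ : Set V)).cliqueNum ≤ G.maxDegree - 1 :=
    (G.cliqueNum_induce_le _).trans hω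
  rw [max_eq_left hω] at hnot
  obtain ⟨n, hn⟩ : ∃ n, G.maxDegree - 1 = n + 1 := ⟨G.maxDegree - 2, by lia⟩
  have hcol : (G.induce ({u}ᶜ : Set V)).Colorable (G.maxDegree - 1) := by
    rcases (Copy.induce G ({u}ᶜ : Set V)).maxDegree_mono.eq_or_lt with heq | hlt
    · rw [← chromaticNumber_le_iff_colorable]
      simpa only [heq, max_eq_left hωu] using hbound heq
    · exact colorable_of_maxDegree_le_of_cliqueNum_le (by lia) (by lia) hωu
  rw [hn] at hnot hcol ⊢
  exact chromaticNumber_eq_iff_colorable_not_colorable.2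
    ⟨hcol, fun h => hnot (colorable_succ_of_colorable_induce_compl h)⟩

end DeleteVertex

open scoped Classical in
/-- In a vertex-minimal counterexample `G` to the Borodin–Kostochka bound,
for every vertex `u`, the graph `G - u` has chromatic number exactly `Δ(G) - 1`. -/
theorem min_counterexample_delete_vertex_chromatic {V : Type*} [Fintype V]
    (G : SimpleGraph V) (hconn : G.Connected)
    (hΔ : 9 ≤ G.maxDegree)
    (hχ : ((max (G.maxDegree - 1) G.cliqueNum : ℕ) : ℕ∞) < G.chromaticNumber)
    (hmin : ∀ s : Finset V, s ≠ Finset.univ →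
      9 ≤ (G.induce (s : Set V)).maxDegree →
      (G.induce (s : Set V)).chromaticNumber ≤
        ((max ((G.induce (s : Set V)).maxDegree - 1)
          (G.induce (s : Set V)).cliqueNum : ℕ) : ℕ∞)) :
    ∀ u : V, (G.induce ({u}ᶜ : Set V)).chromaticNumber = ((G.maxDegree - 1 : ℕ) : ℕ∞) := by
  intro u
  refine min_counterexample_delete_vertex_chromatic_general (by lia) hχ fun heq => ?_
  have hΔu : 9 ≤ (G.induce ({u}ᶜ : Set V)).maxDegree := hΔ.trans_eq heq.symm
  convert hmin {u}ᶜ (by simp) (by convert hΔu <;> simp) <;> simp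
end

section
/- Every 4K₁-free graph G with Δ(G) ≥ 9 satisfies χ(G) ≤ max{Δ(G) − 1, ω(G)}. -/
open SimpleGraph Finset

/-- A graph is `4K₁`-free: no set of 4 pairwise non-adjacent vertices. -/
def FourK1Free {V : Type*} (G : SimpleGraph V) : Prop :=
  ¬ ∃ s : Finset V, s.card = 4 ∧ ∀ v ∈ s, ∀ w ∈ s, v ≠ w → ¬ G.Adj v w

/-!
Put `k = max {Δ - 1, ω}` and take a vertex-critical graph that is not `k`-colourable. Colour all of
it except the vertices of a clique `Q`: the colouring extends unless Hall's condition for the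
colours free at the vertices of `Q` fails, and since every degree is at most `k + 1` there is little
room for a violator. Applied to suitable cliques and recolourings this first excludes cliques on `k`
vertices. Exchanging an uncoloured vertex `x` with its only neighbour of some colour then shows that
every class of a `k`-colouring of `G - x` has exactly three vertices, so `G` has `3 k + 1` vertices.
But in a graph that large two non-adjacent vertices have at most two common neighbours, because
their common non-neighbours form a clique. Hence the non-neighbours of any vertex are close to a
union of two cliques on fewer than `k` vertices, while there are at least `2 k - 1` of them: one of
them has both few neighbours and few non-neighbours in one of the cliques.
-/

namespace BorodinKostochka

open Classical

variable {V : Type*} {G : SimpleGraph V} {Q T : Finset V} {k m : ℕ}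

section FourK1Free

theorem card_le_three_of_isIndepSet (hG : FourK1Free G) (hT : G.IsIndepSet T) : #T ≤ 3 := by
  by_contra! h
  obtain ⟨s, hsT, hs⟩ := exists_subset_card_eq h
  exact hG ⟨s, hs, fun v hv w hw => hT (hsT hv) (hsT hw)⟩

theorem exists_adj_of_isIndepSet (hG : FourK1Free G) (hT : G.IsIndepSet T) (hT3 : #T = 3)
    {v : V} (hv : v ∉ T) : ∃ t ∈ T, G.Adj t v := by
  by_contra! h
  have hind : G.IsIndepSet (insert v T : Finset V) := by
    rw [coe_insert, IsIndepSet, Set.pairwise_insert]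
    exact ⟨hT, fun t ht _ => ⟨fun e => h t ht e.symm, h t ht⟩⟩
  have := card_le_three_of_isIndepSet hG hind
  rw [card_insert_of_notMem hv] at this
  omega

theorem isIndepSet_triple {a b c : V} (hab : ¬ G.Adj a b) (hac : ¬ G.Adj a c)
    (hbc : ¬ G.Adj b c) : G.IsIndepSet ({a, b, c} : Finset V) := by
  simp [IsIndepSet, Set.pairwise_insert, hab, hac, hbc, mt Adj.symm hab, mt Adj.symm hac,
    mt Adj.symm hbc]

end FourK1Free

section SmallGraphs

theorem exists_not_adj_of_cliqueFree (hG : G.CliqueFree m) {W : Finset V} (hW : m ≤ #W) :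
    ∃ a ∈ W, ∃ b ∈ W, a ≠ b ∧ ¬ G.Adj a b := by
  by_contra! h
  have hclique : G.IsClique (W : Set V) := fun a ha b hb hab => h a ha b hb hab
  exact hG.mono hW W ⟨hclique, rfl⟩

theorem exists_not_adj_of_isNClique (hG : G.CliqueFree (m + 1)) (hQ : G.IsNClique m Q) (u : V) :
    ∃ z ∈ Q, ¬ G.Adj z u := by
  by_contra! h
  exact hG _ (hQ.insert fun z hz => (h z hz).symm)

theorem not_adj_of_isNClique (hG : G.CliqueFree (m + 2)) (hQ : G.IsNClique m Q) {u v : V}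
    (hu : ∀ z ∈ Q, G.Adj u z) (hv : ∀ z ∈ Q, G.Adj v z) : ¬ G.Adj u v := fun huv =>
  hG _ ((hQ.insert hv).insert (forall_mem_insert v Q _ |>.2 ⟨huv, hu⟩))

variable [Fintype V]

theorem colorable_of_card_image_le (g : V → V) (hg : ∀ u v, G.Adj u v → g u ≠ g v)
    (hm : #(univ.image g) ≤ m) : G.Colorable m := by
  let C : G.Coloring (univ.image g) := Coloring.mk
    (fun v => ⟨g v, mem_image_of_mem g (mem_univ v)⟩)
    fun {u v} huv h => hg u v huv (congrArg Subtype.val h)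
  exact C.colorable.mono (by rwa [Fintype.card_coe])

theorem colorable_of_not_adj (hV : Fintype.card V ≤ m + 1) {a b : V} (hab : a ≠ b)
    (nab : ¬ G.Adj a b) : G.Colorable m := by
  refine colorable_of_card_image_le (fun v => if v = b then a else v) (fun u v huv => ?_) ?_
  · grind [huv.symm, huv.ne]
  · have himage : univ.image (fun v => if v = b then a else v) ⊆ univ.erase b := by
      intro z hz
      grind
    have := card_le_card himage
    rw [card_erase_of_mem (mem_univ b), card_univ] at this
    omega

/-- Merging `b` into `a` and `d` into `c`; the case `a = c` merges an independent triple. -/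
theorem colorable_of_not_adj_of_not_adj (hV : Fintype.card V ≤ m + 2) {a b c d : V}
    (hab : a ≠ b) (hcd : c ≠ d) (had : a ≠ d) (hbc : b ≠ c) (hbd : b ≠ d) (nab : ¬ G.Adj a b)
    (ncd : ¬ G.Adj c d) (nbd : a = c → ¬ G.Adj b d) : G.Colorable m := by
  refine colorable_of_card_image_le (fun v => if v = b then a else if v = d then c else v)
    (fun u v huv => ?_) ?_
  · grind [huv.symm, huv.ne, G.adj_comm]
  · have himage : univ.image (fun v => if v = b then a else if v = d then c else v) ⊆
        univ \ {b, d} := by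
      intro z hz
      grind
    have := card_le_card himage
    rw [card_sdiff_of_subset (subset_univ _), card_pair hbd, card_univ] at this
    omega

theorem colorable_of_card_le_add_two (hV : Fintype.card V ≤ m + 2) (hG : G.CliqueFree (m + 1)) :
    G.Colorable m := by
  rcases Nat.lt_or_ge m (Fintype.card V) with hlt | hle
  swap
  · exact colorable_of_card_image_le id (fun u v huv => huv.ne) (by simpa using hle)
  obtain ⟨a, -, b, -, hab, nab⟩ := exists_not_adj_of_cliqueFree hG (W := univ) (by simpa using hlt)
  rcases Nat.lt_or_ge (m + 1) (Fintype.card V) with hlt' | hle'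
  swap
  · exact colorable_of_not_adj hle' hab nab
  set K : Finset V := univ \ {a, b} with hK
  have hKcard : #K = m := by
    rw [hK, card_sdiff_of_subset (subset_univ _), card_pair hab, card_univ]; omega
  have hmemK : ∀ {v}, v ∈ K ↔ v ≠ a ∧ v ≠ b := by simp [hK]
  by_cases hclique : ∃ c ∈ K, ∃ d ∈ K, c ≠ d ∧ ¬ G.Adj c d
  · obtain ⟨c, hc, d, hd, hcd, ncd⟩ := hclique
    rw [hmemK] at hc hd
    exact colorable_of_not_adj_of_not_adj hV hab hcd hd.1.symm hc.2.symm hd.2.symm nab ncd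
      fun e => absurd e.symm hc.1
  have hnonadj : ∀ v, v ∉ K → ∃ c ∈ K, ¬ G.Adj v c := by
    intro v hv
    by_contra! h
    obtain ⟨c, hc, d, hd, hcd, ncd⟩ := exists_not_adj_of_cliqueFree hG (W := insert v K)
      (by rw [card_insert_of_notMem hv, hKcard])
    grind [G.adj_comm]
  obtain ⟨c, hc, nac⟩ := hnonadj a (by simp [hK])
  obtain ⟨d, hd, nbd⟩ := hnonadj b (by simp [hK])
  rw [hmemK] at hc hd
  by_cases hcd : c = d
  · subst hcd
    exact colorable_of_not_adj_of_not_adj hV hab hc.1.symm hc.1.symm hab.symm hc.2.symm nab nac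
      fun _ => nbd
  · exact colorable_of_not_adj_of_not_adj hV hc.1.symm hd.2.symm hd.1.symm hc.2 hcd nac nbd
      fun e => absurd e hab

end SmallGraphs

section PartialColorings

variable {ι : Type*} {φ : V → ι} {u v z : V} {c e : ι}

/-- `φ` is a proper colouring of `G - Q`; its values on `Q` are irrelevant. -/
def IsProperOff (G : SimpleGraph V) (Q : Finset V) (φ : V → ι) : Prop :=
  ∀ u v, u ∉ Q → v ∉ Q → G.Adj u v → φ u ≠ φ v

/-- `z` has a neighbour of colour `c` in `G - Q`. -/
def Sees (G : SimpleGraph V) (Q : Finset V) (φ : V → ι) (z : V) (c : ι) : Prop :=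
  ∃ v, v ∉ Q ∧ G.Adj z v ∧ φ v = c

/-- The colour class `c` dominates `Q`. -/
def Dominates (G : SimpleGraph V) (Q : Finset V) (φ : V → ι) (c : ι) : Prop :=
  ∀ z ∈ Q, Sees G Q φ z c

/-- The vertex `u` of `G - Q` may be moved into the colour class `c`. -/
def Free (G : SimpleGraph V) (Q : Finset V) (φ : V → ι) (u : V) (c : ι) : Prop :=
  c ≠ φ u ∧ ¬ Sees G Q φ u c

/-- The neighbours of `u` in `S`. -/
noncomputable def nbrsIn (G : SimpleGraph V) (S : Finset V) (u : V) : Finset V :=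
  {v ∈ S | G.Adj u v}

/-- The vertices of colour `c` in `G - Q`. -/
noncomputable def colorClass [Fintype V] (Q : Finset V) (φ : V → ι) (c : ι) : Finset V :=
  {v | v ∉ Q ∧ φ v = c}

theorem mem_nbrsIn : v ∈ nbrsIn G Q u ↔ v ∈ Q ∧ G.Adj u v := mem_filter

theorem mem_colorClass [Fintype V] : v ∈ colorClass Q φ c ↔ v ∉ Q ∧ φ v = c :=
  mem_filter_univ v

theorem nbrsIn_subset : nbrsIn G Q u ⊆ Q := filter_subset _ _

theorem nbrsIn_mono (h : T ⊆ Q) (u : V) : nbrsIn G T u ⊆ nbrsIn G Q u :=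
  filter_subset_filter _ h

theorem card_le_sum_card_nbrsIn {D : Finset V} (h : ∀ z ∈ Q, ∃ u ∈ D, G.Adj u z) :
    #Q ≤ ∑ u ∈ D, #(nbrsIn G Q u) := by
  refine (card_le_card fun z hz => ?_).trans (card_biUnion_le (s := D) (t := nbrsIn G Q))
  obtain ⟨u, hu, huz⟩ := h z hz
  exact mem_biUnion.2 ⟨u, hu, mem_nbrsIn.2 ⟨hz, huz⟩⟩

theorem exists_lt_card_nbrsIn {D : Finset V} (h : ∀ z ∈ Q, ∃ u ∈ D, G.Adj u z)
    (hm : #D * m < #Q) : ∃ u ∈ D, m < #(nbrsIn G Q u) := by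
  by_contra! hcon
  have := (card_le_sum_card_nbrsIn h).trans (sum_le_card_nsmul D _ m hcon)
  rw [smul_eq_mul] at this
  omega

theorem Dominates.exists_mem_colorClass [Fintype V] (h : Dominates G Q φ c) (hz : z ∈ Q) :
    ∃ u ∈ colorClass Q φ c, G.Adj u z := by
  obtain ⟨v, hv, hzv, hvc⟩ := h z hz
  exact ⟨v, mem_colorClass.2 ⟨hv, hvc⟩, hzv.symm⟩

theorem IsProperOff.isIndepSet_colorClass [Fintype V] (hφ : IsProperOff G Q φ) (c : ι) :
    G.IsIndepSet (colorClass Q φ c : Set V) := fun u hu v hv _ huv => by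
  rw [mem_coe, mem_colorClass] at hu hv
  exact hφ u v hu.1 hv.1 huv (hu.2.trans hv.2.symm)

theorem IsProperOff.mono (hφ : IsProperOff G T φ) (h : T ⊆ Q) : IsProperOff G Q φ :=
  fun u v hu hv => hφ u v (fun e => hu (h e)) fun e => hv (h e)

theorem IsProperOff.update (hφ : IsProperOff G Q φ) (hu : Free G Q φ u c) :
    IsProperOff G Q (Function.update φ u c) := by
  intro a b ha hb hab
  have hseen : ∀ v, v ∉ Q → G.Adj u v → φ v ≠ c := fun v hv huv e => hu.2 ⟨v, hv, huv, e⟩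
  have := hφ a b ha hb hab
  simp only [Function.update_apply]
  grind [hab.symm, hab.ne]

theorem sees_update : Sees G Q (Function.update φ u c) z e ↔
    (∃ v, v ∉ Q ∧ v ≠ u ∧ G.Adj z v ∧ φ v = e) ∨ (u ∉ Q ∧ e = c ∧ G.Adj z u) := by
  simp only [Sees, Function.update_apply]
  grind

theorem sees_of_sees_update (hzu : ¬ G.Adj z u)
    (h : Sees G Q (Function.update φ u c) z e) : Sees G Q φ z e := by
  rcases sees_update.1 h with ⟨v, hv, -, hzv, rfl⟩ | ⟨-, -, hadj⟩
  · exact ⟨v, hv, hzv, rfl⟩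
  · exact absurd hadj hzu

theorem subset_image_nbrsIn_compl [Fintype V] [DecidableEq ι] {F : Finset ι}
    (hF : ∀ c ∈ F, Sees G Q φ z c) :
    F ⊆ (nbrsIn G Qᶜ z).image φ := by
  intro c hc
  obtain ⟨v, hv, hzv, hvc⟩ := hF c hc
  exact mem_image.2 ⟨v, mem_nbrsIn.2 ⟨mem_compl.2 hv, hzv⟩, hvc⟩

theorem card_le_card_nbrsIn_compl [Fintype V] {F : Finset ι} (hF : ∀ c ∈ F, Sees G Q φ z c) :
    #F ≤ #(nbrsIn G Qᶜ z) :=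
  (card_le_card (subset_image_nbrsIn_compl hF)).trans card_image_le

theorem image_nbrsIn_compl_eq [Fintype V] [DecidableEq ι] {F : Finset ι}
    (hF : ∀ c ∈ F, Sees G Q φ z c) (hcard : #(nbrsIn G Qᶜ z) ≤ #F) :
    (nbrsIn G Qᶜ z).image φ = F :=
  (eq_of_subset_of_card_le (subset_image_nbrsIn_compl hF) (card_image_le.trans hcard)).symm

theorem injOn_nbrsIn_compl [Fintype V] {F : Finset ι} (hF : ∀ c ∈ F, Sees G Q φ z c)
    (hcard : #(nbrsIn G Qᶜ z) ≤ #F) : Set.InjOn φ (nbrsIn G Qᶜ z) :=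
  card_image_iff.1 (card_image_le.antisymm (by rwa [image_nbrsIn_compl_eq hF hcard]))

end PartialColorings

section Hall

variable {φ : V → Fin k} {S : Finset V}

/-- The colours seen by every vertex of `S`. -/
noncomputable def commonColors (G : SimpleGraph V) (Q : Finset V) (φ : V → Fin k)
    (S : Finset V) : Finset (Fin k) :=
  {c | ∀ z ∈ S, Sees G Q φ z c}

theorem mem_commonColors {c : Fin k} :
    c ∈ commonColors G Q φ S ↔ ∀ z ∈ S, Sees G Q φ z c :=
  mem_filter_univ c

theorem colorable_of_isProperOff_empty (hφ : IsProperOff G ∅ φ) : G.Colorable k :=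
  ⟨Coloring.mk φ fun {u v} => hφ u v (notMem_empty u) (notMem_empty v)⟩

theorem colorable_of_injective_extension (hφ : IsProperOff G Q φ) {f : Q → Fin k}
    (hf : Function.Injective f) (hsee : ∀ z : Q, ¬ Sees G Q φ z (f z)) : G.Colorable k := by
  refine colorable_of_isProperOff_empty (φ := fun v => if h : v ∈ Q then f ⟨v, h⟩ else φ v) ?_
  intro u v _ _ huv
  by_cases hu : u ∈ Q <;> by_cases hv : v ∈ Q <;> simp only [hu, hv, dite_true, dite_false]
  · exact hf.ne fun e => huv.ne (congrArg Subtype.val e)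
  · exact fun e => hsee ⟨u, hu⟩ ⟨v, hv, huv, e.symm⟩
  · exact fun e => hsee ⟨v, hv⟩ ⟨u, hu, huv.symm, e⟩
  · exact hφ u v hu hv huv

/-- Otherwise Hall's theorem gives the vertices of `Q` distinct colours they do not see. -/
theorem exists_lt_card_add_card_commonColors (hG : ¬ G.Colorable k) (hφ : IsProperOff G Q φ) :
    ∃ S ⊆ Q, k < #S + #(commonColors G Q φ S) := by
  by_contra! hcon
  let unseen : Q → Finset (Fin k) := fun z => {c | ¬ Sees G Q φ z c}
  have hall : ∀ s : Finset Q, #s ≤ #(s.biUnion unseen) := by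
    intro s
    have hunion : s.biUnion unseen = (commonColors G Q φ (s.map (.subtype _)))ᶜ := by
      ext c
      simp [unseen, mem_commonColors]
    have hle := hcon (s.map (.subtype _)) (map_subtype_subset s)
    rw [card_map] at hle
    rw [hunion, card_compl, Fintype.card_fin]
    omega
  obtain ⟨f, hf, hfunseen⟩ := (all_card_le_biUnion_card_iff_exists_injective unseen).1 hall
  exact hG (colorable_of_injective_extension hφ hf fun z => by simpa [unseen] using hfunseen z)

end Hall

/-- A vertex-critical counterexample to the bound `χ ≤ k`, where `k` plays the role of
`max {Δ - 1, ω}`. -/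
structure IsCriticalCounterexample [Fintype V] (G : SimpleGraph V) (k : ℕ) : Prop where
  eight_le : 8 ≤ k
  fourK1Free : FourK1Free G
  degree_le : ∀ v, G.degree v ≤ k + 1
  cliqueFree_succ : G.CliqueFree (k + 1)
  not_colorable : ¬ G.Colorable k
  colorable_induce_compl : ∀ v : V, (G.induce {v}ᶜ).Colorable k

section Critical

variable [Fintype V] {φ : V → Fin k} {q u z : V} {c d : Fin k}

theorem IsCriticalCounterexample.not_isProperOff_empty (hb : IsCriticalCounterexample G k)
    (φ : V → Fin k) : ¬ IsProperOff G ∅ φ :=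
  fun hφ => hb.not_colorable (colorable_of_isProperOff_empty hφ)

theorem IsCriticalCounterexample.exists_isProperOff (hb : IsCriticalCounterexample G k)
    (hq : q ∈ Q) : ∃ φ : V → Fin k, IsProperOff G Q φ := by
  obtain ⟨C⟩ := hb.colorable_induce_compl q
  have hk : 0 < k := by have := hb.eight_le; omega
  refine ⟨fun v => if h : v ≠ q then C ⟨v, h⟩ else ⟨0, hk⟩, fun u v hu hv huv => ?_⟩
  have huq : u ≠ q := fun e => hu (e ▸ hq)
  have hvq : v ≠ q := fun e => hv (e ▸ hq)
  simp only [huq, hvq, ne_eq, not_false_eq_true, dite_true]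
  exact C.valid huv

theorem IsCriticalCounterexample.card_colorClass_le (hb : IsCriticalCounterexample G k)
    (hφ : IsProperOff G Q φ) (c : Fin k) : #(colorClass Q φ c) ≤ 3 :=
  card_le_three_of_isIndepSet hb.fourK1Free (hφ.isIndepSet_colorClass c)

theorem IsCriticalCounterexample.card_nbrsIn_add_card_nbrsIn_compl_le
    (hb : IsCriticalCounterexample G k) (Q : Finset V) (u : V) :
    #(nbrsIn G Q u) + #(nbrsIn G Qᶜ u) ≤ k + 1 := by
  have hdisj : Disjoint (nbrsIn G Q u) (nbrsIn G Qᶜ u) :=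
    disjoint_filter_filter disjoint_compl_right
  have hunion : nbrsIn G Q u ∪ nbrsIn G Qᶜ u = G.neighborFinset u := by
    ext v
    simp only [mem_union, mem_nbrsIn, mem_compl, mem_neighborFinset]
    tauto
  rw [← card_union_of_disjoint hdisj, hunion, card_neighborFinset_eq_degree]
  exact hb.degree_le u

theorem IsCriticalCounterexample.card_nbrsIn_compl_add_card_le
    (hb : IsCriticalCounterexample G k) (hQ : G.IsClique (Q : Set V)) (hz : z ∈ Q) :
    #(nbrsIn G Qᶜ z) + #Q ≤ k + 2 := by
  have hinside : nbrsIn G Q z = Q.erase z := by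
    ext v
    rw [mem_nbrsIn, mem_erase]
    exact ⟨fun h => ⟨h.2.ne', h.1⟩, fun h => ⟨h.2, hQ hz h.2 h.1.symm⟩⟩
  have := hb.card_nbrsIn_add_card_nbrsIn_compl_le Q z
  rw [hinside, card_erase_of_mem hz] at this
  omega

theorem IsCriticalCounterexample.card_le_card_free_add_two (hb : IsCriticalCounterexample G k)
    (φ : V → Fin k) (u : V) :
    #(nbrsIn G Q u) ≤ #{c | Free G Q φ u c} + 2 := by
  have hcover : univ.erase (φ u) ⊆
      ({c | Free G Q φ u c} : Finset (Fin k)) ∪ (nbrsIn G Qᶜ u).image φ := by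
    intro c hc
    simp only [mem_union, mem_image, mem_nbrsIn, mem_compl, Free, Sees]
    grind
  have hcard := (card_le_card hcover).trans (card_union_le _ _)
  rw [card_erase_of_mem (mem_univ _), card_univ, Fintype.card_fin] at hcard
  have himage : #((nbrsIn G Qᶜ u).image φ) ≤ #(nbrsIn G Qᶜ u) := card_image_le
  have hdegree := hb.card_nbrsIn_add_card_nbrsIn_compl_le Q u
  omega

theorem IsCriticalCounterexample.exists_free (hb : IsCriticalCounterexample G k) (φ : V → Fin k)
    (hu : 3 ≤ #(nbrsIn G Q u)) : ∃ c, Free G Q φ u c := by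
  have := hb.card_le_card_free_add_two (Q := Q) φ u
  obtain ⟨c, hc⟩ := card_pos.1 (show 0 < #{c | Free G Q φ u c} by omega)
  exact ⟨c, (mem_filter_univ c).1 hc⟩

theorem IsCriticalCounterexample.exists_free_ne (hb : IsCriticalCounterexample G k)
    (φ : V → Fin k) (hu : 4 ≤ #(nbrsIn G Q u)) (e : Fin k) : ∃ c, c ≠ e ∧ Free G Q φ u c := by
  have := hb.card_le_card_free_add_two (Q := Q) φ u
  obtain ⟨c, hc, hce⟩ := exists_mem_ne (show 1 < #{c | Free G Q φ u c} by omega) e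
  exact ⟨c, hce, (mem_filter_univ c).1 hc⟩

/-- The Hall violator misses at most one vertex of the clique `Q`, since a vertex of `Q` sees at
most `k + 2 - #Q` colours. -/
theorem IsCriticalCounterexample.exists_dominates_or_almost_dominate
    (hb : IsCriticalCounterexample G k) (hQ : G.IsClique (Q : Set V)) (hφ : IsProperOff G Q φ)
    (B : Finset (Fin k)) (hB : #Q + #B = k) :
    (∃ c, c ∉ B ∧ Dominates G Q φ c) ∨ ∃ q ∈ Q, ∃ c d, c ∉ B ∧ d ∉ B ∧ c ≠ d ∧
      ∀ z ∈ Q, z ≠ q → Sees G Q φ z c ∧ Sees G Q φ z d := by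
  obtain ⟨S, hSQ, hS⟩ := exists_lt_card_add_card_commonColors hb.not_colorable hφ
  have hsdiff := le_card_sdiff B (commonColors G Q φ S)
  have hS_le : ∀ z ∈ S, #(commonColors G Q φ S) + #Q ≤ k + 2 := fun z hz =>
    (Nat.add_le_add_right
      (card_le_card_nbrsIn_compl fun c hc => mem_commonColors.1 hc z hz) _).trans
      (hb.card_nbrsIn_compl_add_card_le hQ (hSQ hz))
  rcases hSQ.eq_or_ssubset with rfl | hssubset
  · obtain ⟨c, hc⟩ := card_pos.1 (show 0 < #(commonColors G S φ S \ B) by omega)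
    rw [mem_sdiff, mem_commonColors] at hc
    exact .inl ⟨c, hc.2, hc.1⟩
  obtain ⟨z, hz⟩ : S.Nonempty := by
    rw [nonempty_iff_ne_empty]
    rintro rfl
    have := card_le_univ (commonColors G Q φ ∅)
    rw [Fintype.card_fin, card_empty] at *
    omega
  have hzS := hS_le z hz
  have hlt := card_lt_card hssubset
  obtain ⟨q, hqQ, hqS⟩ := exists_of_ssubset hssubset
  have hSerase : S = Q.erase q := eq_of_subset_of_card_le
    (fun w hw => mem_erase.2 ⟨fun e => hqS (e ▸ hw), hSQ hw⟩)
    (by rw [card_erase_of_mem hqQ]; omega)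
  obtain ⟨c, hc, d, hd, hcd⟩ :=
    one_lt_card.1 (show 1 < #(commonColors G Q φ S \ B) by omega)
  rw [mem_sdiff, mem_commonColors, hSerase] at hc hd
  exact .inr ⟨q, hqQ, c, d, hc.2, hd.2, hcd, fun w hw hwq =>
    ⟨hc.1 w (mem_erase.2 ⟨hwq, hw⟩), hd.1 w (mem_erase.2 ⟨hwq, hw⟩)⟩⟩

theorem IsCriticalCounterexample.colorable_compl_of_indep_triple
    (hb : IsCriticalCounterexample G k) (hQk : k ≤ #Q + 2) (hT : G.IsIndepSet (T : Set V))
    (hT3 : #T = 3) (hTQ : ∀ t ∈ T, ∀ z ∈ Q, G.Adj t z) (hsmall : k ≤ #Q + 1 ∨ G.CliqueFree k) :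
    (G.induce {v | v ∉ Q ∪ T}).Colorable (k - 1) := by
  have hk := hb.eight_le
  have hcompl : #(Q ∪ T)ᶜ ≤ 3 * (k + 1 - #Q) := by
    have hcover : (Q ∪ T)ᶜ ⊆ T.biUnion (nbrsIn G Qᶜ) := by
      intro v hv
      rw [mem_compl, mem_union, not_or] at hv
      obtain ⟨t, ht, htv⟩ := exists_adj_of_isIndepSet hb.fourK1Free hT hT3 hv.2
      exact mem_biUnion.2 ⟨t, ht, mem_nbrsIn.2 ⟨mem_compl.2 hv.1, htv⟩⟩
    refine (card_le_card hcover).trans (card_biUnion_le.trans ?_)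
    rw [← hT3, ← smul_eq_mul]
    refine sum_le_card_nsmul T _ _ fun t ht => ?_
    have hinside : nbrsIn G Q t = Q := filter_true_of_mem (hTQ t ht)
    have := hb.card_nbrsIn_add_card_nbrsIn_compl_le Q t
    rw [hinside] at this
    omega
  have hcard : Fintype.card {v | v ∉ Q ∪ T} = #(Q ∪ T)ᶜ := by
    rw [Fintype.card_ofFinset]; congr 1; ext; simp
  refine colorable_of_card_le_add_two (by omega) ?_
  rcases hsmall with hQ | hfree
  · exact cliqueFree_of_card_lt (by omega)
  · rw [show k - 1 + 1 = k by omega]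
    exact hfree.comap ⟨(Embedding.induce _).toCopy⟩

/-- Give the triple one colour and the rest of `G - Q` the other `k - 1` colours: every vertex of
`Q` then sees so few colours that the colouring extends to `Q`. -/
theorem IsCriticalCounterexample.not_indep_triple_complete
    (hb : IsCriticalCounterexample G k) (hQ : G.IsClique (Q : Set V)) (hQk : k ≤ #Q + 2)
    (hT : G.IsIndepSet (T : Set V)) (hT3 : #T = 3) (hTQ : ∀ t ∈ T, ∀ z ∈ Q, G.Adj t z)
    (hsmall : k ≤ #Q + 1 ∨ G.CliqueFree k) : False := by
  obtain ⟨C⟩ := hb.colorable_compl_of_indep_triple hQk hT hT3 hTQ hsmall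
  obtain ⟨m, rfl⟩ : ∃ m, k = m + 1 := ⟨k - 1, by have := hb.eight_le; omega⟩
  let ψ : V → Fin (m + 1) := fun v => if h : v ∉ Q ∪ T then (C ⟨v, h⟩).succ else 0
  have hψT : ∀ v ∉ Q, ψ v = 0 → v ∈ T := by
    intro v hvQ hv
    by_contra hvT
    simp [ψ, hvQ, hvT] at hv
  have hψ : IsProperOff G Q ψ := by
    intro u v hu hv huv he
    by_cases hu0 : ψ u = 0
    · exact hT (hψT u hu hu0) (hψT v hv (he ▸ hu0)) huv.ne huv
    have huT : u ∉ Q ∪ T := fun h => hu0 (dif_neg (not_not.2 h))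
    have hvT : v ∉ Q ∪ T := fun h => hu0 (he.trans (dif_neg (not_not.2 h)))
    simp only [ψ, huT, hvT, not_false_eq_true, dite_true, Fin.succ_inj] at he
    exact C.valid (show (G.induce {v | v ∉ Q ∪ T}).Adj ⟨u, huT⟩ ⟨v, hvT⟩ from huv) he
  obtain ⟨S, hSQ, hS⟩ := exists_lt_card_add_card_commonColors hb.not_colorable hψ
  obtain ⟨z, hz⟩ : S.Nonempty := by
    rw [nonempty_iff_ne_empty]
    rintro rfl
    have := card_le_univ (commonColors G Q ψ ∅)
    rw [Fintype.card_fin, card_empty] at *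
    omega
  have hsub : T ⊆ nbrsIn G Qᶜ z := fun t ht => mem_nbrsIn.2
    ⟨mem_compl.2 fun htQ => (hTQ t ht t htQ).ne rfl, (hTQ t ht z (hSQ hz)).symm⟩
  have hseen : (commonColors G Q ψ S).erase 0 ⊆ (nbrsIn G Qᶜ z \ T).image ψ := by
    intro c hc
    obtain ⟨v, hv, hzv, rfl⟩ := mem_commonColors.1 (mem_of_mem_erase hc) z hz
    refine mem_image_of_mem ψ (mem_sdiff.2 ⟨mem_nbrsIn.2 ⟨mem_compl.2 hv, hzv⟩, fun hvT => ?_⟩)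
    exact ne_of_mem_erase hc (by simp [ψ, hvT])
  have hcard := (card_le_card hseen).trans card_image_le
  rw [card_sdiff_of_subset hsub, hT3] at hcard
  have := card_le_card hsub
  have := card_le_card hSQ
  have := pred_card_le_card_erase (s := commonColors G Q ψ S) (a := 0)
  have := hb.card_nbrsIn_compl_add_card_le hQ (hSQ hz)
  omega

end Critical

section MaximumClique

variable [Fintype V] {φ : V → Fin k} {q u v w z : V} {A B C D E F L : Fin k}

theorem IsCriticalCounterexample.eq_or_eq_of_adj (hb : IsCriticalCounterexample G k)
    (hQ : G.IsNClique k Q) (hz : z ∈ Q) (hu : u ∉ Q) (hzu : G.Adj z u) (hv : v ∉ Q)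
    (hzv : G.Adj z v) (hw : w ∉ Q) (hzw : G.Adj z w) (huv : u ≠ v) : w = u ∨ w = v := by
  by_contra! hne
  have hle := hb.card_nbrsIn_compl_add_card_le hQ.isClique hz
  have hsub : {u, v, w} ⊆ nbrsIn G Qᶜ z := by
    simp [insert_subset_iff, mem_nbrsIn, *]
  have := card_le_card hsub
  rw [card_eq_three.2 ⟨u, v, w, huv, hne.1.symm, hne.2.symm, rfl⟩] at this
  have := hQ.card_eq
  omega

theorem IsCriticalCounterexample.eq_or_eq_of_sees (hb : IsCriticalCounterexample G k)
    (hQ : G.IsNClique k Q) (hz : z ∈ Q) (hA : Sees G Q φ z A) (hB : Sees G Q φ z B)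
    (hC : Sees G Q φ z C) (hAB : A ≠ B) : C = A ∨ C = B := by
  obtain ⟨u, hu, hzu, rfl⟩ := hA
  obtain ⟨v, hv, hzv, rfl⟩ := hB
  obtain ⟨w, hw, hzw, rfl⟩ := hC
  rcases hb.eq_or_eq_of_adj hQ hz hu hzu hv hzv hw hzw (ne_of_apply_ne φ hAB) with rfl | rfl
  exacts [.inl rfl, .inr rfl]

theorem IsCriticalCounterexample.eq_or_eq_of_sees_update (hb : IsCriticalCounterexample G k)
    (hQ : G.IsNClique k Q) (hz : z ∈ Q) (hu : u ∉ Q) (hzu : G.Adj z u) (hB : Sees G Q φ z B)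
    (huB : φ u ≠ B) (hE : Sees G Q (Function.update φ u C) z E) : E = B ∨ E = C := by
  obtain ⟨v, hv, hzv, rfl⟩ := hB
  rcases sees_update.1 hE with ⟨w, hw, hwu, hzw, rfl⟩ | ⟨-, rfl, -⟩
  · rcases hb.eq_or_eq_of_adj hQ hz hu hzu hv hzv hw hzw (ne_of_apply_ne φ huB) with rfl | rfl
    exacts [absurd rfl hwu, .inl rfl]
  · exact .inr rfl

/-- Recolour a vertex `u` of colour `A` with at least three neighbours in `Q`. If `u` misses some
`w ≠ q` in `Q`, then no Hall violator is left. -/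
theorem IsCriticalCounterexample.exists_complete_erase (hb : IsCriticalCounterexample G k)
    (hQ : G.IsNClique k Q) (hφ : IsProperOff G Q φ) (hq : q ∈ Q) (hAB : A ≠ B)
    (hA : ¬ Sees G Q φ q A) (hB : ¬ Sees G Q φ q B)
    (hsees : ∀ z ∈ Q, z ≠ q → Sees G Q φ z A ∧ Sees G Q φ z B) :
    ∃ u, u ∉ Q ∧ φ u = A ∧ ∀ z ∈ Q, z ≠ q → G.Adj u z := by
  have hk := hb.eight_le
  obtain ⟨u, hu, hu3⟩ : ∃ u ∈ colorClass Q φ A, 2 < #(nbrsIn G (Q.erase q) u) := by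
    refine exists_lt_card_nbrsIn (fun z hz => ?_) ?_
    · obtain ⟨v, hv, hzv, hvA⟩ := (hsees z (mem_of_mem_erase hz) (ne_of_mem_erase hz)).1
      exact ⟨v, mem_colorClass.2 ⟨hv, hvA⟩, hzv.symm⟩
    · have := hb.card_colorClass_le hφ A
      rw [card_erase_of_mem hq, hQ.card_eq]
      omega
  obtain ⟨huQ, rfl⟩ := mem_colorClass.1 hu
  refine ⟨u, huQ, rfl, ?_⟩
  by_contra! ⟨w, hw, hwq, huw⟩
  obtain ⟨C, hC⟩ := hb.exists_free φ
    (hu3.trans_le (card_le_card (nbrsIn_mono (erase_subset q Q) u)))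
  have hqu : ¬ G.Adj q u := fun h => hA ⟨u, huQ, h, rfl⟩
  have hsees_w : ∀ E, Sees G Q (Function.update φ u C) w E → E = φ u ∨ E = B := fun E hE =>
    hb.eq_or_eq_of_sees hQ hw (hsees w hw hwq).1 (hsees w hw hwq).2
      (sees_of_sees_update (fun h => huw h.symm) hE) hAB
  rcases hb.exists_dominates_or_almost_dominate hQ.isClique (hφ.update hC) ∅
    (by simp [hQ.card_eq]) with ⟨E, -, hE⟩ | ⟨p, hp, E, F, -, -, hEF, hp_sees⟩
  · have := sees_of_sees_update hqu (hE q hq)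
    rcases hsees_w E (hE w hw) with rfl | rfl <;> contradiction
  obtain ⟨z, hz, hzp⟩ := exists_mem_ne (show 1 < #(nbrsIn G (Q.erase q) u) by omega) p
  rw [mem_nbrsIn, mem_erase] at hz
  have hsees_z : ∀ E, Sees G Q (Function.update φ u C) z E → E = B ∨ E = C := fun E hE =>
    hb.eq_or_eq_of_sees_update hQ hz.1.2 huQ hz.2.symm (hsees z hz.1.2 hz.1.1).2 hAB hE
  have hE_z := hsees_z E (hp_sees z hz.1.2 hzp).1
  have hF_z := hsees_z F (hp_sees z hz.1.2 hzp).2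
  by_cases hwp : w = p
  · subst hwp
    have hE_q := sees_of_sees_update hqu (hp_sees q hq hwq.symm).1
    have hF_q := sees_of_sees_update hqu (hp_sees q hq hwq.symm).2
    grind
  · have hE_w := hsees_w E (hp_sees w hw hwp).1
    have hF_w := hsees_w F (hp_sees w hw hwp).2
    grind [hC.1]

theorem IsCriticalCounterexample.exists_dominates (hb : IsCriticalCounterexample G k)
    (hQ : G.IsNClique k Q) (hφ : IsProperOff G Q φ) : ∃ c, Dominates G Q φ c := by
  have hk := hb.eight_le
  rcases hb.exists_dominates_or_almost_dominate hQ.isClique hφ ∅ (by simp [hQ.card_eq])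
    with ⟨c, -, hc⟩ | ⟨q, hq, c, d, -, -, hcd, hsees⟩
  · exact ⟨c, hc⟩
  by_contra! hnone
  have hqc : ¬ Sees G Q φ q c := fun h => hnone c fun z hz => by
    by_cases e : z = q
    exacts [e ▸ h, (hsees z hz e).1]
  have hqd : ¬ Sees G Q φ q d := fun h => hnone d fun z hz => by
    by_cases e : z = q
    exacts [e ▸ h, (hsees z hz e).2]
  obtain ⟨u, hu, huc, huQ⟩ := hb.exists_complete_erase hQ hφ hq hcd hqc hqd hsees
  obtain ⟨v, hv, hvd, hvQ⟩ := hb.exists_complete_erase hQ hφ hq hcd.symm hqd hqc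
    fun z hz h => (hsees z hz h).symm
  have huv : u ≠ v := ne_of_apply_ne φ (by rwa [huc, hvd])
  have hclique : G.IsNClique (k - 1) (Q.erase q) := hQ.erase_of_mem hq
  have nuv : ¬ G.Adj u v := not_adj_of_isNClique
    (by rw [show k - 1 + 2 = k + 1 by omega]; exact hb.cliqueFree_succ) hclique
    (fun z hz => huQ z (mem_of_mem_erase hz) (ne_of_mem_erase hz))
    fun z hz => hvQ z (mem_of_mem_erase hz) (ne_of_mem_erase hz)
  refine hb.not_indep_triple_complete (T := {q, u, v}) hclique.isClique
    (by rw [hclique.card_eq]; omega) (isIndepSet_triple (fun h => hqc ⟨u, hu, h, huc⟩)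
      (fun h => hqd ⟨v, hv, h, hvd⟩) nuv)
    (card_eq_three.2 ⟨q, u, v, by grind, by grind, huv, rfl⟩) ?_
    (.inl (by rw [hclique.card_eq]; omega))
  simp only [mem_insert, mem_singleton, mem_erase]
  rintro t (rfl | rfl | rfl) z ⟨hzq, hz⟩
  exacts [hQ.isClique hq hz hzq.symm, huQ z hz hzq, hvQ z hz hzq]

theorem IsCriticalCounterexample.exists_disjoint_nbrsIn (hb : IsCriticalCounterexample G k)
    (hQ : 8 ≤ #Q) (hφ : IsProperOff G Q φ) (hD : Dominates G Q φ D)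
    (hle : ∀ u, u ∉ Q → φ u = D → #(nbrsIn G Q u) ≤ 3) :
    ∃ u v, u ∉ Q ∧ v ∉ Q ∧ φ u = D ∧ φ v = D ∧ u ≠ v ∧ 3 ≤ #(nbrsIn G Q u) ∧
      3 ≤ #(nbrsIn G Q v) ∧ ∀ z ∈ Q, G.Adj z u → ¬ G.Adj z v := by
  have hcard := hb.card_colorClass_le hφ D
  obtain ⟨u, hu, hu3⟩ := exists_lt_card_nbrsIn (m := 2) (fun z => hD.exists_mem_colorClass)
    (by omega)
  have hu' := mem_colorClass.1 hu
  have hule := hle u hu'.1 hu'.2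
  obtain ⟨v, hv, hv3⟩ := exists_lt_card_nbrsIn (G := G) (Q := Q \ nbrsIn G Q u) (m := 2)
    (D := (colorClass Q φ D).erase u) (fun z hz => by
      rw [mem_sdiff, mem_nbrsIn] at hz
      obtain ⟨v, hv, hvz⟩ := hD.exists_mem_colorClass hz.1
      exact ⟨v, mem_erase.2 ⟨fun e => hz.2 ⟨hz.1, e ▸ hvz⟩, hv⟩, hvz⟩) (by
      rw [card_erase_of_mem hu, card_sdiff_of_subset nbrsIn_subset]
      omega)
  rw [mem_erase, mem_colorClass] at hv
  have hvle := hle v hv.2.1 hv.2.2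
  have heq : nbrsIn G (Q \ nbrsIn G Q u) v = nbrsIn G Q v :=
    eq_of_subset_of_card_le (nbrsIn_mono sdiff_subset v) (by omega)
  refine ⟨u, v, hu'.1, hv.2.1, hu'.2, hv.2.2, hv.1.symm, hu3, heq ▸ hv3, fun z hz hzu hzv => ?_⟩
  have : z ∈ nbrsIn G Q v := mem_nbrsIn.2 ⟨hz, hzv.symm⟩
  rw [← heq, mem_nbrsIn, mem_sdiff] at this
  exact this.1.2 (mem_nbrsIn.2 ⟨hz, hzu.symm⟩)

theorem IsCriticalCounterexample.eq_of_color_ne_of_dominates (hb : IsCriticalCounterexample G k)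
    (hQ : G.IsNClique k Q) (hL : Dominates G Q φ L) (hz : z ∈ Q) (hu : u ∉ Q) (hzu : G.Adj z u)
    (huL : φ u ≠ L) (hv : v ∉ Q) (hzv : G.Adj z v) (hvL : φ v ≠ L) : u = v := by
  obtain ⟨w, hw, hzw, rfl⟩ := hL z hz
  by_contra huv
  rcases hb.eq_or_eq_of_adj hQ hz hu hzu hv hzv hw hzw huv with rfl | rfl <;> contradiction

/-- If every vertex of colour `D` were confined to moving into the class `L`, then two vertices of
colour `D` and two of colour `L` would be independent. -/
theorem IsCriticalCounterexample.exists_free_ne_of_dominates (hb : IsCriticalCounterexample G k)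
    (hQ : G.IsNClique k Q) (hφ : IsProperOff G Q φ) (hDL : D ≠ L) (hD : Dominates G Q φ D)
    (hL : Dominates G Q φ L) :
    ∃ u, u ∉ Q ∧ φ u = D ∧ 3 ≤ #(nbrsIn G Q u) ∧ ∃ C, C ≠ L ∧ Free G Q φ u C := by
  have hk := hb.eight_le
  have hcard := hQ.card_eq
  by_cases hlarge : ∃ u, u ∉ Q ∧ φ u = D ∧ 4 ≤ #(nbrsIn G Q u)
  · obtain ⟨u, hu, huD, hu4⟩ := hlarge
    exact ⟨u, hu, huD, by omega, hb.exists_free_ne φ hu4 L⟩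
  push Not at hlarge
  obtain ⟨u, v, hu, hv, huD, hvD, huv, hu3, hv3, -⟩ := hb.exists_disjoint_nbrsIn (by omega) hφ hD
    fun u hu huD => Nat.lt_succ_iff.1 (hlarge u hu huD)
  by_contra! hcon
  have hfree : ∀ t, t ∉ Q → φ t = D → 3 ≤ #(nbrsIn G Q t) → Free G Q φ t L := fun t ht htD ht3 => by
    obtain ⟨C, hC⟩ := hb.exists_free φ ht3
    exact (not_imp_not.1 (hcon t ht htD ht3 C) hC) ▸ hC
  obtain ⟨z, hz⟩ : Q.Nonempty := card_pos.1 (by omega)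
  obtain ⟨l, hl, -, hlL⟩ := hL z hz
  obtain ⟨w, hw, hwl⟩ := exists_not_adj_of_isNClique hb.cliqueFree_succ hQ l
  obtain ⟨l', hl', hwl', hlL'⟩ := hL w hw
  have hll' : l ≠ l' := fun e => hwl (e ▸ hwl')
  have hindep : G.IsIndepSet ({u, l, l'} : Finset V) := isIndepSet_triple
    (fun h => (hfree u hu huD hu3).2 ⟨l, hl, h, hlL⟩)
    (fun h => (hfree u hu huD hu3).2 ⟨l', hl', h, hlL'⟩)
    fun h => hφ l l' hl hl' h (hlL.trans hlL'.symm)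
  obtain ⟨t, ht, htv⟩ := exists_adj_of_isIndepSet hb.fourK1Free hindep
    (card_eq_three.2 ⟨u, l, l', by grind, by grind, hll', rfl⟩) (v := v) (by grind)
  simp only [mem_insert, mem_singleton] at ht
  rcases ht with rfl | rfl | rfl
  · exact hφ t v hu hv htv (huD.trans hvD.symm)
  · exact (hfree v hv hvD hv3).2 ⟨t, hl, htv.symm, hlL⟩
  · exact (hfree v hv hvD hv3).2 ⟨t, hl', htv.symm, hlL'⟩

/-- After moving `u` into `C` and then `l` into `E`, some class still dominates `Q`. -/
theorem IsCriticalCounterexample.eq_color_of_free_update (hb : IsCriticalCounterexample G k)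
    (hQ : G.IsNClique k Q) (hφ : IsProperOff G Q φ) (hDL : D ≠ L) (hD : Dominates G Q φ D)
    (hL : Dominates G Q φ L) (hu : u ∉ Q) (huD : φ u = D) (huQ : (nbrsIn G Q u).Nonempty)
    (hCL : C ≠ L) (hC : Free G Q φ u C) {l : V} (hl : l ∉ Q) (hlL : φ l = L)
    (hlQ : (nbrsIn G Q l).Nonempty) (hE : Free G Q (Function.update φ u C) l E) :
    (E = D ∧ ∀ z ∈ Q, G.Adj z u → G.Adj z l) ∨ (E = C ∧ ∀ z ∈ Q, G.Adj z u ∨ G.Adj z l) := by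
  have hlu : l ≠ u := ne_of_apply_ne φ (by rw [hlL, huD]; exact hDL.symm)
  have hCD : C ≠ D := huD ▸ hC.1
  have hEL : E ≠ L := by simpa [hlu, hlL] using hE.1
  obtain ⟨F, hF⟩ := hb.exists_dominates hQ ((hφ.update hC).update hE)
  have hcases : ∀ z ∈ Q, (F = D ∧ ¬ G.Adj z u) ∨ (F = L ∧ ¬ G.Adj z l) ∨
      (F = C ∧ G.Adj z u) ∨ (F = E ∧ G.Adj z l) := by
    intro z hz
    rcases sees_update.1 (hF z hz) with ⟨v, hv, hvl, hzv, hvF⟩ | ⟨-, hFE, hzl⟩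
    swap
    · exact .inr (.inr (.inr ⟨hFE, hzl⟩))
    by_cases hvu : v = u
    · subst hvu
      exact .inr (.inr (.inl ⟨by simpa using hvF.symm, hzv⟩))
    rw [Function.update_of_ne hvu] at hvF
    rcases hb.eq_or_eq_of_sees hQ hz (hD z hz) (hL z hz) ⟨v, hv, hzv, hvF⟩ hDL with rfl | rfl
    · exact .inl ⟨rfl, fun hzu => hvu (hb.eq_of_color_ne_of_dominates hQ hL hz hv hzv
        (by rwa [hvF]) hu hzu (by rwa [huD]))⟩
    · exact .inr (.inl ⟨rfl, fun hzl => hvl (hb.eq_of_color_ne_of_dominates hQ hD hz hv hzv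
        (by rw [hvF]; exact hDL.symm) hl hzl (by rw [hlL]; exact hDL.symm))⟩)
  obtain ⟨zu, hzu⟩ := huQ
  obtain ⟨zl, hzl⟩ := hlQ
  obtain ⟨wu, hwu, hwu'⟩ := exists_not_adj_of_isNClique hb.cliqueFree_succ hQ u
  obtain ⟨wl, hwl, hwl'⟩ := exists_not_adj_of_isNClique hb.cliqueFree_succ hQ l
  rw [mem_nbrsIn] at hzu hzl
  have hcases_zu := hcases zu hzu.1
  have hcases_zl := hcases zl hzl.1
  have hcases_wu := hcases wu hwu
  have hcases_wl := hcases wl hwl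
  have := hzu.2.symm
  have := hzl.2.symm
  grind

theorem IsCriticalCounterexample.card_nbrsIn_le_three_of_dominates
    (hb : IsCriticalCounterexample G k) (hQ : G.IsNClique k Q) (hφ : IsProperOff G Q φ)
    (hDL : D ≠ L) (hD : Dominates G Q φ D) (hL : Dominates G Q φ L) (hu : u ∉ Q) (huD : φ u = D)
    (huQ : (nbrsIn G Q u).Nonempty) (hCL : C ≠ L) (hC : Free G Q φ u C) {l : V} (hl : l ∉ Q)
    (hlL : φ l = L) : #(nbrsIn G Q l) ≤ 3 := by
  by_contra! hl4
  have hlQ : (nbrsIn G Q l).Nonempty := card_pos.1 (by omega)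
  obtain ⟨w, hw, hwl⟩ := exists_not_adj_of_isNClique hb.cliqueFree_succ hQ l
  obtain ⟨E, hED, hE⟩ := hb.exists_free_ne (Function.update φ u C) hl4 D
  obtain ⟨F, hFC, hF⟩ := hb.exists_free_ne (Function.update φ u C) hl4 C
  have hcover := ((hb.eq_color_of_free_update hQ hφ hDL hD hL hu huD huQ hCL hC hl hlL hlQ
    hE).resolve_left fun h => hED h.1).2 w hw
  have hsub := ((hb.eq_color_of_free_update hQ hφ hDL hD hL hu huD huQ hCL hC hl hlL hlQ
    hF).resolve_right fun h => hFC h.1).2 w hw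
  exact hwl (hcover.elim hsub id)

theorem IsCriticalCounterexample.eq_of_dominates (hb : IsCriticalCounterexample G k)
    (hQ : G.IsNClique k Q) (hφ : IsProperOff G Q φ) (hD : Dominates G Q φ D)
    (hL : Dominates G Q φ L) : D = L := by
  by_contra hDL
  have hk := hb.eight_le
  have hcard := hQ.card_eq
  obtain ⟨u, hu, huD, hu3, C, hCL, hC⟩ := hb.exists_free_ne_of_dominates hQ hφ hDL hD hL
  have huQ : (nbrsIn G Q u).Nonempty := card_pos.1 (by omega)
  have hmove : ∀ l, l ∉ Q → φ l = L → 3 ≤ #(nbrsIn G Q l) →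
      ∀ E, Free G Q (Function.update φ u C) l E →
        (E = D ∧ ∀ z ∈ Q, G.Adj z u → G.Adj z l) ∨ (E = C ∧ ∀ z ∈ Q, G.Adj z u ∨ G.Adj z l) :=
    fun l hl hlL hl3 E hE => hb.eq_color_of_free_update hQ hφ hDL hD hL hu huD huQ hCL hC hl hlL
      (card_pos.1 (by omega)) hE
  have hle : ∀ l, l ∉ Q → φ l = L → #(nbrsIn G Q l) ≤ 3 := fun l =>
    hb.card_nbrsIn_le_three_of_dominates hQ hφ hDL hD hL hu huD huQ hCL hC
  obtain ⟨l, l', hl, hl', hlL, hlL', -, hl3, hl3', hdisj⟩ :=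
    hb.exists_disjoint_nbrsIn (by omega) hφ hL hle
  have hnotcover : ¬ ∀ z ∈ Q, G.Adj z l ∨ G.Adj z l' := by
    intro hcover
    have := card_le_sum_card_nbrsIn (Q := Q) (D := {l, l'})
      fun z hz => by simpa [G.adj_comm z] using hcover z hz
    have := this.trans (sum_le_card_nsmul _ _ 3 fun t ht => by grind)
    have := card_le_two (a := l) (b := l')
    simp only [smul_eq_mul] at *
    omega
  obtain ⟨E, hE⟩ := hb.exists_free (Function.update φ u C) hl3
  obtain ⟨F, hF⟩ := hb.exists_free (Function.update φ u C) hl3'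
  obtain ⟨z, hz⟩ := huQ
  obtain ⟨w, hw, hwu⟩ := exists_not_adj_of_isNClique hb.cliqueFree_succ hQ u
  rw [mem_nbrsIn] at hz
  rcases hmove l hl hlL hl3 E hE with ⟨-, hlu⟩ | ⟨-, hlu⟩ <;>
    rcases hmove l' hl' hlL' hl3' F hF with ⟨-, hlu'⟩ | ⟨-, hlu'⟩
  · exact hdisj z hz.1 (hlu z hz.1 hz.2.symm) (hlu' z hz.1 hz.2.symm)
  · exact hnotcover fun z hz => (hlu' z hz).imp_left (hlu z hz)
  · exact hnotcover fun z hz => (hlu z hz).symm.imp_right (hlu' z hz)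
  · exact hdisj w hw ((hlu w hw).resolve_left hwu) ((hlu' w hw).resolve_left hwu)

theorem IsCriticalCounterexample.sees_of_free_of_card_colorClass_minimal
    (hb : IsCriticalCounterexample G k) (hQ : G.IsNClique k Q) (hφ : IsProperOff G Q φ)
    (hD : Dominates G Q φ D) (hmin : ∀ (ψ : V → Fin k) E, IsProperOff G Q ψ → Dominates G Q ψ E →
      #(colorClass Q φ D) ≤ #(colorClass Q ψ E))
    (hu : u ∉ Q) (huD : φ u = D) (hC : Free G Q φ u C) (hz : z ∈ Q) (hzu : ¬ G.Adj z u) :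
    Sees G Q φ z C := by
  obtain ⟨F, hF⟩ := hb.exists_dominates hQ (hφ.update hC)
  by_cases hFC : F = C
  · exact sees_of_sees_update hzu (hFC ▸ hF z hz)
  have hFφ : Dominates G Q φ F := fun z hz => by
    rcases sees_update.1 (hF z hz) with ⟨v, hv, -, hzv, hvF⟩ | ⟨-, e, -⟩
    exacts [⟨v, hv, hzv, hvF⟩, absurd e hFC]
  obtain rfl := hb.eq_of_dominates hQ hφ hD hFφ
  refine absurd (card_lt_card (?_ : colorClass Q (Function.update φ u C) D ⊂ colorClass Q φ D))
    (hmin _ D (hφ.update hC) hF).not_gt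
  refine ssubset_iff_of_subset (fun v hv => ?_) |>.2 ⟨u, mem_colorClass.2 ⟨hu, huD⟩, ?_⟩
  · rw [mem_colorClass, Function.update_apply] at hv
    exact mem_colorClass.2 (by grind)
  · simp [mem_colorClass, Ne.symm hFC]

theorem IsCriticalCounterexample.card_nbrsIn_le_three_of_sees (hb : IsCriticalCounterexample G k)
    (hQ : G.IsNClique k Q) (hD : Dominates G Q φ (φ u))
    (hsees : ∀ C, Free G Q φ u C → ∀ z ∈ Q, ¬ G.Adj z u → Sees G Q φ z C) :
    #(nbrsIn G Q u) ≤ 3 := by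
  by_contra! hu4
  obtain ⟨w, hw, hwu⟩ := exists_not_adj_of_isNClique hb.cliqueFree_succ hQ u
  obtain ⟨E, -, hE⟩ := hb.exists_free_ne φ hu4 (φ u)
  obtain ⟨F, hFE, hF⟩ := hb.exists_free_ne φ hu4 E
  rcases hb.eq_or_eq_of_sees hQ hw (hsees E hE w hw hwu) (hsees F hF w hw hwu) (hD w hw) hFE.symm
    with h | h
  exacts [hE.1 h.symm, hF.1 h.symm]

theorem IsCriticalCounterexample.card_colorClass_not_minimal (hb : IsCriticalCounterexample G k)
    (hQ : G.IsNClique k Q) (hφ : IsProperOff G Q φ) (hD : Dominates G Q φ D) :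
    ∃ (ψ : V → Fin k) (E : Fin k), IsProperOff G Q ψ ∧ Dominates G Q ψ E ∧
      #(colorClass Q ψ E) < #(colorClass Q φ D) := by
  by_contra! hmin
  have hk := hb.eight_le
  have hcard := hQ.card_eq
  have hsees : ∀ u, u ∉ Q → φ u = D → ∀ C, Free G Q φ u C → ∀ z ∈ Q, ¬ G.Adj z u →
      Sees G Q φ z C := fun u hu huD C hC z hz =>
    hb.sees_of_free_of_card_colorClass_minimal hQ hφ hD hmin hu huD hC hz
  have hle : ∀ u, u ∉ Q → φ u = D → #(nbrsIn G Q u) ≤ 3 := fun u hu huD =>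
    hb.card_nbrsIn_le_three_of_sees hQ (huD ▸ hD) (hsees u hu huD)
  obtain ⟨u, v, hu, hv, huD, hvD, -, hu3, hv3, hdisj⟩ :=
    hb.exists_disjoint_nbrsIn (by omega) hφ hD hle
  obtain ⟨E, hE⟩ := hb.exists_free φ hu3
  obtain ⟨F, hF⟩ := hb.exists_free φ hv3
  have hED : E ≠ D := huD ▸ hE.1
  have hFD : F ≠ D := hvD ▸ hF.1
  obtain ⟨z, hz, hzuv⟩ : ∃ z ∈ Q, z ∉ nbrsIn G Q u ∪ nbrsIn G Q v := by
    by_contra! hcover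
    have := (card_le_card hcover).trans (card_union_le _ _)
    have := hle u hu huD
    have := hle v hv hvD
    omega
  have hz_not : ¬ G.Adj z u ∧ ¬ G.Adj z v := by
    simpa [mem_nbrsIn, hz, G.adj_comm z] using hzuv
  have hEF : E = F := by
    by_contra hne
    rcases hb.eq_or_eq_of_sees hQ hz (hsees u hu huD E hE z hz hz_not.1)
      (hsees v hv hvD F hF z hz hz_not.2) (hD z hz) hne with h | h
    exacts [hED h.symm, hFD h.symm]
  subst hEF
  refine hED (hb.eq_of_dominates hQ hφ (fun z hz => ?_) hD)
  by_cases hzu : G.Adj z u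
  exacts [hsees v hv hvD E hF z hz (hdisj z hz hzu), hsees u hu huD E hE z hz hzu]

theorem IsCriticalCounterexample.cliqueFree (hb : IsCriticalCounterexample G k) :
    G.CliqueFree k := by
  intro Q hQ
  obtain ⟨q, hq⟩ : Q.Nonempty := card_pos.1 (by have := hb.eight_le; rw [hQ.card_eq]; omega)
  obtain ⟨φ₀, hφ₀⟩ := hb.exists_isProperOff hq
  obtain ⟨D₀, hD₀⟩ := hb.exists_dominates hQ hφ₀
  obtain ⟨⟨φ, D⟩, hφD, hmin⟩ := exists_min_image
    ({p | IsProperOff G Q p.1 ∧ Dominates G Q p.1 p.2} : Finset ((V → Fin k) × Fin k))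
    (fun p => #(colorClass Q p.1 p.2)) ⟨(φ₀, D₀), (mem_filter_univ _).2 ⟨hφ₀, hD₀⟩⟩
  rw [mem_filter_univ] at hφD
  obtain ⟨ψ, E, hψ, hE, hlt⟩ := hb.card_colorClass_not_minimal hQ hφD.1 hφD.2
  exact (hmin (ψ, E) ((mem_filter_univ _).2 ⟨hψ, hE⟩)).not_gt hlt

end MaximumClique

section DoublyDominated

/-- `z` has two neighbours of colour `c` in `G - Q`. -/
def SeesTwice {ι : Type*} (G : SimpleGraph V) (Q : Finset V) (φ : V → ι) (z : V) (c : ι) : Prop :=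
  ∃ u v, u ≠ v ∧ u ∉ Q ∧ v ∉ Q ∧ G.Adj z u ∧ G.Adj z v ∧ φ u = c ∧ φ v = c

variable [Fintype V] {φ : V → Fin k} {B : Finset (Fin k)} {d j b C e : Fin k} {r u v w x z : V}

/-- A clique `Q` of size `k - #B` each of whose vertices sees every colour of `B` once and the
colour `d` twice, together with a further colour class contained in `{r}`. The last field asserts
that a class of three vertices in `B` contains a vertex which may be moved to that class. -/
structure IsDoublyDominated (G : SimpleGraph V) (Q : Finset V) (φ : V → Fin k)
    (B : Finset (Fin k)) (d j : Fin k) (r : V) : Prop where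
  critical : IsCriticalCounterexample G k
  isClique : G.IsClique (Q : Set V)
  isProperOff : IsProperOff G Q φ
  card_add_card : #Q + #B = k
  nonempty : B.Nonempty
  card_le_two : #B ≤ 2
  double_notMem : d ∉ B
  single_notMem : j ∉ B
  single_ne_double : j ≠ d
  seesTwice : ∀ z ∈ Q, SeesTwice G Q φ z d
  dominates : ∀ b ∈ B, Dominates G Q φ b
  eq_of_color_eq : ∀ v, v ∉ Q → φ v = j → v = r
  eq_of_adj : ∀ u v, u ∉ Q → v ∉ Q → φ u = d → φ v = d → G.Adj u r → G.Adj v r → u = v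
  exists_not_adj : #B = 2 → ∀ b ∈ B, #(colorClass Q φ b) = 3 → ∃ u, u ∉ Q ∧ φ u = b ∧ ¬ G.Adj u r

namespace IsDoublyDominated

theorem isNClique (h : IsDoublyDominated G Q φ B d j r) : G.IsNClique (k - #B) Q :=
  ⟨h.isClique, by have := h.card_add_card; omega⟩

theorem six_le_card (h : IsDoublyDominated G Q φ B d j r) : 6 ≤ #Q := by
  have := h.critical.eight_le
  have := h.card_add_card
  have := h.card_le_two
  omega

theorem free_single (h : IsDoublyDominated G Q φ B d j r) (hur : ¬ G.Adj u r) (hu : φ u ≠ j) :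
    Free G Q φ u j := by
  refine ⟨hu.symm, ?_⟩
  rintro ⟨x, hx, hux, hxj⟩
  exact hur (h.eq_of_color_eq x hx hxj ▸ hux)

/-- A vertex of `Q` has at most `#B + 2` neighbours outside `Q`, which are all accounted for by
the colours it is known to see. -/
theorem image_color_eq (h : IsDoublyDominated G Q φ B d j r) (hz : z ∈ Q) :
    {v ∈ nbrsIn G Qᶜ z | φ v ≠ d}.image φ = B ∧
      Set.InjOn φ ({v ∈ nbrsIn G Qᶜ z | φ v ≠ d} : Finset V) := by
  have hle := h.critical.card_nbrsIn_compl_add_card_le h.isClique hz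
  have hcard := h.card_add_card
  have hsplit := card_filter_add_card_filter_not (s := nbrsIn G Qᶜ z) (fun v => φ v = d)
  have htwo : 1 < #{v ∈ nbrsIn G Qᶜ z | φ v = d} := by
    obtain ⟨u, v, huv, hu, hv, hzu, hzv, hud, hvd⟩ := h.seesTwice z hz
    exact one_lt_card.2 ⟨u, by simp [mem_nbrsIn, *], v, by simp [mem_nbrsIn, *], huv⟩
  have hsub : B ⊆ {v ∈ nbrsIn G Qᶜ z | φ v ≠ d}.image φ := by
    intro b hb
    obtain ⟨v, hv, hzv, rfl⟩ := h.dominates b hb z hz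
    exact mem_image_of_mem φ (mem_filter.2
      ⟨mem_nbrsIn.2 ⟨mem_compl.2 hv, hzv⟩, fun e => h.double_notMem (e ▸ hb)⟩)
  have hBle := card_le_card hsub
  have himage : #({v ∈ nbrsIn G Qᶜ z | φ v ≠ d}.image φ) ≤ #{v ∈ nbrsIn G Qᶜ z | φ v ≠ d} :=
    card_image_le
  have hne : #{v ∈ nbrsIn G Qᶜ z | φ v ≠ d} = #{v ∈ nbrsIn G Qᶜ z | ¬ φ v = d} := rfl
  exact ⟨(eq_of_subset_of_card_le hsub (by omega)).symm, card_image_iff.1 (by omega)⟩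

theorem color_eq_or_mem (h : IsDoublyDominated G Q φ B d j r) (hz : z ∈ Q) (hv : v ∉ Q)
    (hzv : G.Adj z v) : φ v = d ∨ φ v ∈ B := by
  rw [or_iff_not_imp_left]
  intro hvd
  rw [← (h.image_color_eq hz).1]
  exact mem_image_of_mem φ (mem_filter.2 ⟨mem_nbrsIn.2 ⟨mem_compl.2 hv, hzv⟩, hvd⟩)

theorem eq_of_color_mem (h : IsDoublyDominated G Q φ B d j r) (hz : z ∈ Q) (hv : v ∉ Q)
    (hzv : G.Adj z v) (hw : w ∉ Q) (hzw : G.Adj z w) (hvw : φ v = φ w) (hvB : φ v ∈ B) :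
    v = w := by
  have hvd : φ v ≠ d := fun e => h.double_notMem (e ▸ hvB)
  exact (h.image_color_eq hz).2
    (mem_coe.2 (mem_filter.2 ⟨mem_nbrsIn.2 ⟨mem_compl.2 hv, hzv⟩, hvd⟩))
    (mem_coe.2 (mem_filter.2 ⟨mem_nbrsIn.2 ⟨mem_compl.2 hw, hzw⟩, hvw ▸ hvd⟩)) hvw

theorem adj_of_not_adj (h : IsDoublyDominated G Q φ B d j r) (hclass : colorClass Q φ d = {u, v, w})
    (hz : z ∈ Q) (hzw : ¬ G.Adj z w) : G.Adj z u ∧ G.Adj z v := by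
  obtain ⟨x, y, hxy, hx, hy, hzx, hzy, hxd, hyd⟩ := h.seesTwice z hz
  have hx' : x ∈ ({u, v, w} : Finset V) := hclass ▸ mem_colorClass.2 ⟨hx, hxd⟩
  have hy' : y ∈ ({u, v, w} : Finset V) := hclass ▸ mem_colorClass.2 ⟨hy, hyd⟩
  simp only [mem_insert, mem_singleton] at hx' hy'
  grind

theorem sees_update_update (h : IsDoublyDominated G Q φ B d j r)
    (hclass : colorClass Q φ d = {u, v, w}) (hz : z ∈ Q) (hcB : c ∉ B)
    (hc : Sees G Q (Function.update (Function.update φ u j) v C) z c) :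
    (c = d ∧ G.Adj z w) ∨ (c = j ∧ G.Adj z u) ∨ (c = C ∧ G.Adj z v) := by
  rcases sees_update.1 hc with ⟨x, hx, hxv, hzx, hxc⟩ | ⟨-, hcC, hzv⟩
  swap
  · exact .inr (.inr ⟨hcC, hzv⟩)
  rw [Function.update_apply] at hxc
  have hxuvw : x ∈ ({u, v, w} : Finset V) ↔ x ∉ Q ∧ φ x = d := hclass ▸ mem_colorClass
  simp only [mem_insert, mem_singleton] at hxuvw
  have hcolor := h.color_eq_or_mem hz hx hzx
  grind

/-- Move `u` into the class of `r` and then `v` anywhere else: the classes `d`, `j` and `C` now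
see the complements of three proper subsets of `Q`, which rules out a Hall violator. -/
theorem card_nbrsIn_le_of_not_adj (h : IsDoublyDominated G Q φ B d j r)
    (hnot : ∀ x, x ∉ Q → φ x = d → ∃ z ∈ Q, ¬ G.Adj z x)
    (hclass : colorClass Q φ d = {u, v, w}) (huv : u ≠ v) (hur : ¬ G.Adj u r) :
    #(nbrsIn G Q v) ≤ 3 := by
  by_contra! hv4
  have hmem : ∀ x, x ∈ ({u, v, w} : Finset V) ↔ x ∉ Q ∧ φ x = d := fun x =>
    hclass ▸ mem_colorClass
  have hu := (hmem u).1 (by simp)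
  have hv := (hmem v).1 (by simp)
  have hw := (hmem w).1 (by simp)
  have hj : Free G Q φ u j := h.free_single hur (by rw [hu.2]; exact h.single_ne_double.symm)
  obtain ⟨C, hCj, hC⟩ := h.critical.exists_free_ne (Function.update φ u j) hv4 j
  have hCd : C ≠ d := by simpa [huv.symm, hv.2] using hC.1
  have hsees := fun z (hz : z ∈ Q) c (hcB : c ∉ B) => h.sees_update_update (C := C) hclass hz hcB
  obtain ⟨zu, hzu, hzu'⟩ := hnot u hu.1 hu.2
  obtain ⟨zv, hzv, hzv'⟩ := hnot v hv.1 hv.2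
  obtain ⟨zw, hzw, hzw'⟩ := hnot w hw.1 hw.2
  have hjd := h.single_ne_double
  rcases h.critical.exists_dominates_or_almost_dominate h.isClique
    ((h.isProperOff.update hj).update hC) B h.card_add_card
    with ⟨c, hcB, hc⟩ | ⟨q, hq, c, e, hcB, heB, hce, hq_sees⟩
  · have hc_u := hsees zu hzu c hcB (hc zu hzu)
    have hc_v := hsees zv hzv c hcB (hc zv hzv)
    have hc_w := hsees zw hzw c hcB (hc zw hzw)
    grind
  · have hq_adj := h.adj_of_not_adj hclass hq
    have hboth : ∀ z ∈ Q, z ≠ q → _ ∧ _ := fun z hz hzq =>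
      ⟨hsees z hz c hcB (hq_sees z hz hzq).1, hsees z hz e heB (hq_sees z hz hzq).2⟩
    have hboth_u := hboth zu hzu
    have hboth_v := hboth zv hzv
    have hboth_w := hboth zw hzw
    have hq_v := h.adj_of_not_adj (hclass.trans (by grind : _ = {u, w, v})) hq
    clear hboth hsees hq_sees hnot hmem hclass
    by_cases zu = q <;> by_cases zv = q <;> by_cases zw = q <;> grind

theorem not_adj_imp_adj (h : IsDoublyDominated G Q φ B d j r)
    (hnot : ∀ x, x ∉ Q → φ x = d → ∃ z ∈ Q, ¬ G.Adj z x)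
    (hclass : colorClass Q φ d = {u, v, w}) (huv : u ≠ v) (hur : ¬ G.Adj u r) : G.Adj v r := by
  by_contra hvr
  have hv3 := h.card_nbrsIn_le_of_not_adj hnot hclass huv hur
  have hu3 := h.card_nbrsIn_le_of_not_adj hnot (hclass.trans (Finset.insert_comm u v {w})) huv.symm
    hvr
  have hcover : Q ⊆ nbrsIn G Q u ∪ nbrsIn G Q v := by
    intro z hz
    have := h.adj_of_not_adj (hclass.trans (by grind : _ = {v, w, u})) hz
    simp only [mem_union, mem_nbrsIn]
    grind [G.adj_comm]
  have hw := mem_colorClass.1 (hclass ▸ (by simp) : w ∈ colorClass Q φ d)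
  obtain ⟨z, hz, hzw⟩ := hnot w hw.1 hw.2
  have hzuv := h.adj_of_not_adj hclass hz hzw
  have hpos : 0 < #(nbrsIn G Q u ∩ nbrsIn G Q v) := card_pos.2
    ⟨z, mem_inter.2 ⟨mem_nbrsIn.2 ⟨hz, hzuv.1.symm⟩, mem_nbrsIn.2 ⟨hz, hzuv.2.symm⟩⟩⟩
  have := card_le_card hcover
  have := card_union_add_card_inter (nbrsIn G Q u) (nbrsIn G Q v)
  have := h.six_le_card
  omega

theorem exists_complete_double (h : IsDoublyDominated G Q φ B d j r) :
    ∃ x, φ x = d ∧ ∀ z ∈ Q, G.Adj x z := by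
  by_contra! hcon
  have hnot : ∀ x, x ∉ Q → φ x = d → ∃ z ∈ Q, ¬ G.Adj z x := fun x _ hxd => by
    simpa only [G.adj_comm x] using hcon x hxd
  obtain ⟨z, hz⟩ : Q.Nonempty := card_pos.1 (by have := h.six_le_card; omega)
  obtain ⟨u, -, -, hu, -, -, -, hud, -⟩ := h.seesTwice z hz
  obtain ⟨z', hz', hzu⟩ := hnot u hu hud
  obtain ⟨v, w, hvw, hv, hw, hzv, hzw, hvd, hwd⟩ := h.seesTwice z' hz'
  have huv : u ≠ v := fun e => hzu (e ▸ hzv)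
  have huw : u ≠ w := fun e => hzu (e ▸ hzw)
  have hclass : colorClass Q φ d = {u, v, w} := by
    refine (eq_of_subset_of_card_le ?_ ?_).symm
    · simp [insert_subset_iff, mem_colorClass, *]
    · rw [card_eq_three.2 ⟨u, v, w, huv, huw, hvw, rfl⟩]
      exact h.critical.card_colorClass_le h.isProperOff d
  have huv_adj := h.not_adj_imp_adj hnot hclass huv
  have huw_adj := h.not_adj_imp_adj hnot (hclass.trans (by grind : _ = {u, w, v})) huw
  have hvw_adj := h.not_adj_imp_adj hnot (hclass.trans (by grind : _ = {v, w, u})) hvw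
  have hr_uv := h.eq_of_adj u v hu hv hud hvd
  have hr_uw := h.eq_of_adj u w hu hw hud hwd
  have hr_vw := h.eq_of_adj v w hv hw hvd hwd
  tauto

/-- After the move, Hall's condition can only fail if `C` replaces `b` as a colour seen by all of
`Q`. -/
theorem adj_of_free (h : IsDoublyDominated G Q φ B d j r) (hu : u ∉ Q) (huB : φ u ∈ B)
    (hC : Free G Q φ u C) (huQ : (nbrsIn G Q u).Nonempty) : ∀ z ∈ Q, G.Adj u z := by
  by_contra! ⟨w, hw, huw⟩
  obtain ⟨y, hy⟩ := huQ
  rw [mem_nbrsIn] at hy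
  have hCu := hC.1
  have hcard : #(insert d (B.erase (φ u))) = #B := by
    rw [card_insert_of_notMem fun e => h.double_notMem (mem_of_mem_erase e), card_erase_of_mem huB,
      Nat.sub_add_cancel (card_pos.2 ⟨_, huB⟩)]
  have hsees : ∀ z ∈ Q, ∀ e, e ∉ insert d (B.erase (φ u)) →
      Sees G Q (Function.update φ u C) z e →
      (e = φ u ∧ ¬ G.Adj u z) ∨ (e = C ∧ G.Adj u z) := by
    intro z hz e heB he
    rw [mem_insert, mem_erase, not_or] at heB
    rcases sees_update.1 he with ⟨x, hx, hxu, hzx, rfl⟩ | ⟨-, heC, hzu⟩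
    swap
    · exact .inr ⟨heC, hzu.symm⟩
    have hxB := (h.color_eq_or_mem hz hx hzx).resolve_left heB.1
    have hxc : φ x = φ u := by_contra fun hne => heB.2 ⟨hne, hxB⟩
    exact .inl ⟨hxc, fun huz => hxu (h.eq_of_color_mem hz hx hzx hu huz.symm hxc hxB)⟩
  rcases h.critical.exists_dominates_or_almost_dominate h.isClique (h.isProperOff.update hC) _
    (hcard ▸ h.card_add_card) with ⟨c, hcB, hc⟩ | ⟨q, -, c, e, hcB, heB, hce, hq_sees⟩
  · have hc_w := hsees w hw c hcB (hc w hw)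
    have hc_y := hsees y hy.1 c hcB (hc y hy.1)
    grind
  · obtain ⟨z, hz, hzq⟩ := exists_mem_ne (show 1 < #Q by have := h.six_le_card; omega) q
    have hc_z := hsees z hz c hcB (hq_sees z hz hzq).1
    have he_z := hsees z hz e heB (hq_sees z hz hzq).2
    grind

theorem exists_complete_of_mem (h : IsDoublyDominated G Q φ B d j r) (hB2 : #B = 2) (hb : b ∈ B) :
    ∃ x, φ x = b ∧ ∀ z ∈ Q, G.Adj x z := by
  suffices hfree : ∃ u, u ∉ Q ∧ φ u = b ∧ (nbrsIn G Q u).Nonempty ∧ ∃ C, Free G Q φ u C by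
    obtain ⟨u, hu, rfl, huQ, C, hC⟩ := hfree
    exact ⟨u, rfl, h.adj_of_free hu hb hC huQ⟩
  by_cases hlarge : ∃ u, u ∉ Q ∧ φ u = b ∧ 3 ≤ #(nbrsIn G Q u)
  · obtain ⟨u, hu, hub, hu3⟩ := hlarge
    exact ⟨u, hu, hub, card_pos.1 (by omega), h.critical.exists_free φ hu3⟩
  push Not at hlarge
  have hsmall : ∀ u ∈ colorClass Q φ b, #(nbrsIn G Q u) ≤ 2 := fun u hu =>
    Nat.lt_succ_iff.1 (hlarge u (mem_colorClass.1 hu).1 (mem_colorClass.1 hu).2)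
  have hcover := card_le_sum_card_nbrsIn fun z => (h.dominates b hb).exists_mem_colorClass (z := z)
  have hsum := hcover.trans (sum_le_card_nsmul _ _ 2 hsmall)
  have hclass := h.critical.card_colorClass_le h.isProperOff b
  have hQ := h.six_le_card
  rw [smul_eq_mul] at hsum
  obtain ⟨u, hu, hub, hur⟩ := h.exists_not_adj hB2 b hb (by omega)
  refine ⟨u, hu, hub, card_pos.1 ?_, j, h.free_single hur fun e => h.single_notMem (e ▸ hub ▸ hb)⟩
  have hmem : u ∈ colorClass Q φ b := mem_colorClass.2 ⟨hu, hub⟩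
  have hrest := sum_le_card_nsmul _ _ 2 fun x hx => hsmall x (mem_of_mem_erase (a := u) hx)
  rw [← add_sum_erase _ _ hmem] at hcover
  rw [card_erase_of_mem hmem, smul_eq_mul] at hrest
  omega

end IsDoublyDominated

theorem not_isDoublyDominated : ¬ IsDoublyDominated G Q φ B d j r := by
  intro h
  have hk := h.critical.eight_le
  have hfree := h.critical.cliqueFree
  obtain ⟨x, hxd, hx⟩ := h.exists_complete_double
  have hpos := card_pos.2 h.nonempty
  rcases h.card_le_two.lt_or_eq with hB1 | hB2
  · obtain ⟨z, hz, hzx⟩ := exists_not_adj_of_isNClique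
      (by rwa [show k - #B + 1 = k by omega]) h.isNClique x
    exact hzx (hx z hz).symm
  obtain ⟨b, b', hbb', hB⟩ := card_eq_two.1 hB2
  obtain ⟨y, hyb, hy⟩ := h.exists_complete_of_mem hB2 (b := b) (by simp [hB])
  obtain ⟨w, hwb, hw⟩ := h.exists_complete_of_mem hB2 (b := b') (by simp [hB])
  have hdB := h.double_notMem
  have hnot {s t : V} (hs : ∀ z ∈ Q, G.Adj s z) (ht : ∀ z ∈ Q, G.Adj t z) : ¬ G.Adj s t :=
    not_adj_of_isNClique (by rwa [show k - #B + 2 = k by omega]) h.isNClique hs ht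
  refine h.critical.not_indep_triple_complete (T := {x, y, w}) h.isClique
    (by have := h.card_add_card; omega) (isIndepSet_triple (hnot hx hy) (hnot hx hw) (hnot hy hw))
    (card_eq_three.2 ⟨x, y, w, by grind, by grind, by grind, rfl⟩) ?_ (.inr hfree)
  simp only [mem_insert, mem_singleton, forall_eq_or_imp, forall_eq]
  exact ⟨hx, hy, hw⟩

end DoublyDominated

section TwinDominated

variable [Fintype V] {φ ψ : V → Fin k} {b b' j c e C : Fin k} {f : Fin k → V}
  {q r s u v w z : V}

/-- Every vertex of `Q` other than `q` sees the colour `c`. -/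
def AlmostDominates {ι : Type*} (G : SimpleGraph V) (Q : Finset V) (φ : V → ι) (q : V) (c : ι) :
    Prop :=
  ∀ z ∈ Q, z ≠ q → Sees G Q φ z c

/-- Every vertex of `Q` other than `q` is adjacent to `v`. -/
def AlmostComplete (G : SimpleGraph V) (Q : Finset V) (q v : V) : Prop :=
  ∀ z ∈ Q, z ≠ q → G.Adj z v

theorem IsCriticalCounterexample.eq_of_almostComplete (hb : IsCriticalCounterexample G k)
    (hQ : G.IsClique (Q : Set V)) (hk : #Q + 1 = k) (hq : q ∈ Q) (hu : u ∉ Q) (hv : v ∉ Q)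
    (huQ : AlmostComplete G Q q u) (hvQ : AlmostComplete G Q q v) : u = v := by
  by_contra huv
  have hcard := card_erase_of_mem hq
  have hk8 := hb.eight_le
  have hclique : G.IsNClique (k - 2) (Q.erase q) := ⟨hQ.subset (by simp), by omega⟩
  have hnot {s t : V} (hs : ∀ z ∈ Q.erase q, G.Adj s z) (ht : ∀ z ∈ Q.erase q, G.Adj t z) :
      ¬ G.Adj s t :=
    not_adj_of_isNClique (by rw [show k - 2 + 2 = k by omega]; exact hb.cliqueFree) hclique hs ht
  have hq_adj : ∀ z ∈ Q.erase q, G.Adj q z := fun z hz =>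
    hQ hq (mem_of_mem_erase hz) (ne_of_mem_erase hz).symm
  have hu_adj : ∀ z ∈ Q.erase q, G.Adj u z := fun z hz =>
    (huQ z (mem_of_mem_erase hz) (ne_of_mem_erase hz)).symm
  have hv_adj : ∀ z ∈ Q.erase q, G.Adj v z := fun z hz =>
    (hvQ z (mem_of_mem_erase hz) (ne_of_mem_erase hz)).symm
  refine hb.not_indep_triple_complete (T := {q, u, v}) hclique.isClique (by omega)
    (isIndepSet_triple (hnot hq_adj hu_adj) (hnot hq_adj hv_adj) (hnot hu_adj hv_adj))
    (card_eq_three.2 ⟨q, u, v, by grind, by grind, huv, rfl⟩) ?_ (.inr hb.cliqueFree)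
  simp only [mem_insert, mem_singleton, forall_eq_or_imp, forall_eq]
  exact ⟨hq_adj, hu_adj, hv_adj⟩

theorem sees_update_of_colorClass_eq_pair (hclass : colorClass Q ψ b = {v, w})
    (he : Sees G Q (Function.update ψ v C) z e) :
    (e = b ∧ G.Adj z w) ∨ (e ≠ b ∧ Sees G Q ψ z e) ∨ (e = C ∧ G.Adj z v) := by
  rcases sees_update.1 he with ⟨x, hx, hxv, hzx, hxe⟩ | ⟨-, heC, hzv⟩
  · by_cases heb : e = b
    · have hxclass : x ∈ ({v, w} : Finset V) := hclass ▸ mem_colorClass.2 ⟨hx, hxe.trans heb⟩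
      rw [mem_insert, mem_singleton] at hxclass
      exact .inl ⟨heb, hxclass.resolve_left hxv ▸ hzx⟩
    · exact .inr (.inl ⟨heb, x, hx, hzx, hxe⟩)
  · exact .inr (.inr ⟨heC, hzv⟩)

/-- A clique `Q` of size `k - 1` dominated by two colours `b` and `b'`, a colour class `{r}`
not seen by `Q`, and for each other colour `c` a private vertex `f c` of `Q` not seeing it. The last
two fields assert that `b`- and `b'`-classes of three vertices contain a vertex which may be moved
to the class of `r`. -/
structure IsTwinDominated (G : SimpleGraph V) (Q : Finset V) (φ : V → Fin k) (b b' j : Fin k)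
    (r : V) (f : Fin k → V) : Prop where
  critical : IsCriticalCounterexample G k
  isClique : G.IsClique (Q : Set V)
  isProperOff : IsProperOff G Q φ
  card_add_one : #Q + 1 = k
  left_ne_right : b ≠ b'
  single_ne_left : j ≠ b
  single_ne_right : j ≠ b'
  dominates_left : Dominates G Q φ b
  dominates_right : Dominates G Q φ b'
  notMem : r ∉ Q
  color_eq : φ r = j
  eq_of_color_eq : ∀ v, v ∉ Q → φ v = j → v = r
  not_adj : ∀ z ∈ Q, ¬ G.Adj z r
  mem : ∀ c, c ≠ b → c ≠ b' → c ≠ j → f c ∈ Q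
  not_sees : ∀ c, c ≠ b → c ≠ b' → c ≠ j → ¬ Sees G Q φ (f c) c
  injOn : {c | c ≠ b ∧ c ≠ b' ∧ c ≠ j}.InjOn f
  exists_not_adj_left : #(colorClass Q φ b) = 3 → ∃ u, u ∉ Q ∧ φ u = b ∧ ¬ G.Adj u r
  exists_not_adj_right : #(colorClass Q φ b') = 3 → ∃ u, u ∉ Q ∧ φ u = b' ∧ ¬ G.Adj u r

/-- `c` is an ordinary colour and `f c` is the only vertex of `Q` not seeing it. -/
structure IsSaturated (G : SimpleGraph V) (Q : Finset V) (φ : V → Fin k) (b b' j : Fin k)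
    (f : Fin k → V) (c : Fin k) : Prop where
  ne_left : c ≠ b
  ne_right : c ≠ b'
  ne_single : c ≠ j
  almostDominates : AlmostDominates G Q φ (f c) c

/-- A recolouring `ψ` of `φ` that shrinks the class `b` to at most two vertices and alters no
other class but `j`, which `Q` sees through `s` only. -/
structure IsShrinking (G : SimpleGraph V) (Q : Finset V) (φ : V → Fin k) (b b' j : Fin k)
    (ψ : V → Fin k) (s : V) : Prop where
  isProperOff : IsProperOff G Q ψ
  dominates_left : Dominates G Q ψ b
  dominates_right : Dominates G Q ψ b'
  card_le_two : #(colorClass Q ψ b) ≤ 2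
  sees_of_sees : ∀ c z, c ≠ b → c ≠ j → Sees G Q ψ z c → Sees G Q φ z c
  color_eq : ∀ v, v ∉ Q → ψ v = b → φ v = b
  notMem : s ∉ Q
  color_single : ψ s = j
  adj_of_sees : ∀ z ∈ Q, Sees G Q ψ z j → G.Adj z s
  color_eq_or_not_adj : φ s = b ∨ ∀ z ∈ Q, ¬ G.Adj z s

namespace IsTwinDominated

theorem symm (h : IsTwinDominated G Q φ b b' j r f) : IsTwinDominated G Q φ b' b j r f where
  __ := h
  left_ne_right := h.left_ne_right.symm
  single_ne_left := h.single_ne_right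
  single_ne_right := h.single_ne_left
  dominates_left := h.dominates_right
  dominates_right := h.dominates_left
  mem c hb hb' hj := h.mem c hb' hb hj
  not_sees c hb hb' hj := h.not_sees c hb' hb hj
  injOn _ hc _ he hce := h.injOn ⟨hc.2.1, hc.1, hc.2.2⟩ ⟨he.2.1, he.1, he.2.2⟩ hce
  exists_not_adj_left := h.exists_not_adj_right
  exists_not_adj_right := h.exists_not_adj_left

theorem seven_le_card (h : IsTwinDominated G Q φ b b' j r f) : 7 ≤ #Q := by
  have := h.critical.eight_le
  have := h.card_add_one
  omega

theorem exists_not_adj (h : IsTwinDominated G Q φ b b' j r f) (u : V) : ∃ z ∈ Q, ¬ G.Adj z u :=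
  exists_not_adj_of_isNClique (by rw [h.card_add_one]; exact h.critical.cliqueFree)
    ⟨h.isClique, rfl⟩ u

theorem eq_of_almostComplete (h : IsTwinDominated G Q φ b b' j r f) (hq : q ∈ Q) (hu : u ∉ Q)
    (hv : v ∉ Q) (huQ : AlmostComplete G Q q u) (hvQ : AlmostComplete G Q q v) : u = v :=
  h.critical.eq_of_almostComplete h.isClique h.card_add_one hq hu hv huQ hvQ

theorem card_nbrsIn_compl_le (h : IsTwinDominated G Q φ b b' j r f) (hz : z ∈ Q) :
    #(nbrsIn G Qᶜ z) ≤ 3 := by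
  have := h.critical.card_nbrsIn_compl_add_card_le h.isClique hz
  have := h.card_add_one
  omega

/-- A vertex of `Q` has at most three neighbours outside `Q`. -/
theorem eq_of_sees (h : IsTwinDominated G Q φ b b' j r f) (hz : z ∈ Q) (hb : Sees G Q ψ z b)
    (hb' : Sees G Q ψ z b') (hc : Sees G Q ψ z c) (he : Sees G Q ψ z e) (hcb : c ≠ b)
    (hcb' : c ≠ b') (heb : e ≠ b) (heb' : e ≠ b') : c = e := by
  have hF : #{b, b', c} = 3 :=
    card_eq_three.2 ⟨b, b', c, h.left_ne_right, hcb.symm, hcb'.symm, rfl⟩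
  have himage := image_nbrsIn_compl_eq (G := G) (φ := ψ) (F := {b, b', c})
    (by simp only [mem_insert, mem_singleton, forall_eq_or_imp, forall_eq]; exact ⟨hb, hb', hc⟩)
    (hF ▸ h.card_nbrsIn_compl_le hz)
  obtain ⟨x, hx, hzx, rfl⟩ := he
  have hmem : ψ x ∈ ({b, b', c} : Finset (Fin k)) :=
    himage ▸ mem_image_of_mem ψ (mem_nbrsIn.2 ⟨mem_compl.2 hx, hzx⟩)
  simp only [mem_insert, mem_singleton] at hmem
  grind

theorem eq_of_dominates_update (h : IsTwinDominated G Q φ b b' j r f)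
    (hψ : IsShrinking G Q φ b b' j ψ s) (hclass : colorClass Q ψ b = {v, w}) (hcb' : c ≠ b')
    (hc : Dominates G Q (Function.update ψ v C) c) : c = C := by
  by_contra hcC
  have hcases {z : V} (hz : z ∈ Q) := sees_update_of_colorClass_eq_pair hclass (hc z hz)
  obtain ⟨z, hz, hzw⟩ := h.exists_not_adj w
  obtain ⟨t, ht, hts⟩ := h.exists_not_adj s
  have hz_cases := hcases hz
  have ht_cases := hcases ht
  have hs := hψ.adj_of_sees t ht
  have hf := h.mem c
  have hf_sees := h.not_sees c
  have hf_cases := hcases (z := f c)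
  have hlower := hψ.sees_of_sees c (f c)
  grind

theorem almostDominates_update_cases (h : IsTwinDominated G Q φ b b' j r f)
    (hψ : IsShrinking G Q φ b b' j ψ s) (hclass : colorClass Q ψ b = {v, w}) (hcC : c ≠ C)
    (hcb' : c ≠ b') (hc : AlmostDominates G Q (Function.update ψ v C) q c) :
    (c = b ∧ AlmostComplete G Q q w) ∨ c ≠ b ∧ AlmostDominates G Q ψ q c ∧
      (c = j ∧ AlmostComplete G Q q s ∨ IsSaturated G Q φ b b' j f c ∧ f c = q) := by
  have hcases {z : V} (hz : z ∈ Q) (hzq : z ≠ q) :=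
    sees_update_of_colorClass_eq_pair hclass (hc z hz hzq)
  by_cases hcb : c = b
  · exact .inl ⟨hcb, fun z hz hzq => by grind [hcases hz hzq]⟩
  have hsees : AlmostDominates G Q ψ q c := fun z hz hzq => by grind [hcases hz hzq]
  refine .inr ⟨hcb, hsees, ?_⟩
  by_cases hcj : c = j
  · subst hcj
    exact .inl ⟨rfl, fun z hz hzq => hψ.adj_of_sees z hz (hsees z hz hzq)⟩
  have hfq : f c = q := by
    by_contra hne
    exact h.not_sees c hcb hcb' hcj
      (hψ.sees_of_sees c _ hcb hcj (hsees _ (h.mem c hcb hcb' hcj) hne))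
  exact .inr ⟨⟨hcb, hcb', hcj, fun z hz hzf =>
    hψ.sees_of_sees c z hcb hcj (hsees z hz (hfq ▸ hzf))⟩, hfq⟩

theorem not_isSaturated_of_almostComplete (h : IsTwinDominated G Q φ b b' j r f)
    (hψ : IsShrinking G Q φ b b' j ψ s)
    (hnot : ∀ c, IsSaturated G Q φ b b' j f c → ∀ x, x ∉ Q → φ x = b →
      ¬ AlmostComplete G Q (f c) x)
    (hs : AlmostComplete G Q (f c) s) : ¬ IsSaturated G Q φ b b' j f c := by
  intro hc
  rcases hψ.color_eq_or_not_adj with hsb | hsQ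
  · exact hnot c hc s hψ.notMem hsb hs
  · obtain ⟨z, hz, hzf⟩ := exists_mem_ne (show 1 < #Q by have := h.seven_le_card; omega) (f c)
    exact hsQ z hz (hs z hz hzf)

theorem not_almostDominates_update_pair (h : IsTwinDominated G Q φ b b' j r f)
    (hψ : IsShrinking G Q φ b b' j ψ s) (hclass : colorClass Q ψ b = {v, w})
    (hnot : ∀ c, IsSaturated G Q φ b b' j f c → ∀ x, x ∉ Q → φ x = b →
      ¬ AlmostComplete G Q (f c) x)
    (hq : q ∈ Q) (hce : c ≠ e) (hcC : c ≠ C) (heC : e ≠ C) (hcb' : c ≠ b') (heb' : e ≠ b')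
    (hc : AlmostDominates G Q (Function.update ψ v C) q c) :
    ¬ AlmostDominates G Q (Function.update ψ v C) q e := by
  intro he
  have hw := mem_colorClass.1 (hclass ▸ (by simp) : w ∈ colorClass Q ψ b)
  have hws : w ≠ s := fun hws => h.single_ne_left (hψ.color_single.symm.trans (hws ▸ hw.2))
  have hwφ := hψ.color_eq w hw.1 hw.2
  have heq_ws := h.eq_of_almostComplete hq hw.1 hψ.notMem
  have hnot_s (a : Fin k) := h.not_isSaturated_of_almostComplete hψ hnot (c := a)
  have hinj (hcS : IsSaturated G Q φ b b' j f c) (heS : IsSaturated G Q φ b b' j f e) :=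
    h.injOn ⟨hcS.ne_left, hcS.ne_right, hcS.ne_single⟩ ⟨heS.ne_left, heS.ne_right, heS.ne_single⟩
  have hc_cases := h.almostDominates_update_cases hψ hclass hcC hcb' hc
  have he_cases := h.almostDominates_update_cases hψ hclass heC heb' he
  grind

theorem not_almostDominates_update_target (h : IsTwinDominated G Q φ b b' j r f)
    (hψ : IsShrinking G Q φ b b' j ψ s) (hclass : colorClass Q ψ b = {v, w})
    (hnot : ∀ c, IsSaturated G Q φ b b' j f c → ∀ x, x ∉ Q → φ x = b →
      ¬ AlmostComplete G Q (f c) x)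
    (hq : q ∈ Q) (hCb : C ≠ b) (hCb' : C ≠ b') (hcb : c ≠ b) (hcb' : c ≠ b') (hcC : c ≠ C)
    (hc : AlmostDominates G Q (Function.update ψ v C) q c) :
    ¬ AlmostDominates G Q (Function.update ψ v C) q C := by
  intro hC
  have hv := mem_colorClass.1 (hclass ▸ (by simp) : v ∈ colorClass Q ψ b)
  obtain ⟨-, hc_sees, hc_cases⟩ :=
    (h.almostDominates_update_cases hψ hclass hcC hcb' hc).resolve_left fun hcb_w => hcb hcb_w.1
  have hvQ : AlmostComplete G Q q v := by
    intro z hz hzq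
    by_contra hzv
    have hC_sees : Sees G Q ψ z C := by
      grind [sees_update_of_colorClass_eq_pair hclass (hC z hz hzq)]
    exact hcC (h.eq_of_sees hz (hψ.dominates_left z hz) (hψ.dominates_right z hz)
      (hc_sees z hz hzq) hC_sees hcb hcb' hCb hCb')
  rcases hc_cases with ⟨-, hsQ⟩ | ⟨hcS, rfl⟩
  · have hvs := h.eq_of_almostComplete hq hv.1 hψ.notMem hvQ hsQ
    exact h.single_ne_left (hψ.color_single.symm.trans (hvs ▸ hv.2))
  · exact hnot c hcS v hv.1 (hψ.color_eq v hv.1 hv.2) hvQ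

theorem sees_of_almostDominates_update (h : IsTwinDominated G Q φ b b' j r f)
    (hψ : IsShrinking G Q φ b b' j ψ s) (hclass : colorClass Q ψ b = {v, w}) (hCb : C ≠ b)
    (hb : AlmostDominates G Q (Function.update ψ v C) q b)
    (hC : AlmostDominates G Q (Function.update ψ v C) q C) (hz : z ∈ Q) (hzv : ¬ G.Adj z v) :
    Sees G Q ψ z C := by
  have hwQ : AlmostComplete G Q q w := fun y hy hyq => by
    grind [sees_update_of_colorClass_eq_pair hclass (hb y hy hyq)]
  have hzq : z ≠ q := by
    rintro rfl
    obtain ⟨x, hx, hzx, hxb⟩ := hψ.dominates_left z hz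
    have hxvw : x ∈ ({v, w} : Finset V) := hclass ▸ mem_colorClass.2 ⟨hx, hxb⟩
    obtain ⟨y, hy, hyw⟩ := h.exists_not_adj w
    have hyz := hwQ y hy
    grind
  grind [sees_update_of_colorClass_eq_pair hclass (hC z hz hzq)]

theorem sees_of_free (h : IsTwinDominated G Q φ b b' j r f)
    (hψ : IsShrinking G Q φ b b' j ψ s) (hclass : colorClass Q ψ b = {v, w})
    (hnot : ∀ c, IsSaturated G Q φ b b' j f c → ∀ x, x ∉ Q → φ x = b →
      ¬ AlmostComplete G Q (f c) x)
    (hC : Free G Q ψ v C) : C ≠ b' ∧ ∀ z ∈ Q, ¬ G.Adj z v → Sees G Q ψ z C := by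
  have hv := mem_colorClass.1 (hclass ▸ (by simp) : v ∈ colorClass Q ψ b)
  have hCb : C ≠ b := hv.2 ▸ hC.1
  rcases h.critical.exists_dominates_or_almost_dominate h.isClique (hψ.isProperOff.update hC) {b'}
    (by simpa using h.card_add_one) with ⟨c, hcb', hc⟩ | ⟨q, hq, c, e, hcb', heb', hce, hq_sees⟩
  · rw [mem_singleton] at hcb'
    obtain rfl := h.eq_of_dominates_update hψ hclass hcb' hc
    exact ⟨hcb', fun z hz hzv => by grind [sees_update_of_colorClass_eq_pair hclass (hc z hz)]⟩
  rw [mem_singleton] at hcb' heb'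
  have hc : AlmostDominates G Q (Function.update ψ v C) q c := fun z hz hzq => (hq_sees z hz hzq).1
  have he : AlmostDominates G Q (Function.update ψ v C) q e := fun z hz hzq => (hq_sees z hz hzq).2
  have htarget (a : Fin k) := h.not_almostDominates_update_target hψ hclass hnot hq hCb (c := a)
  by_cases hcC : c = C
  · subst hcC
    have heb : e = b := by_contra fun heb => htarget e hcb' heb heb' hce.symm he hc
    exact ⟨hcb', fun z => h.sees_of_almostDominates_update hψ hclass hCb (heb ▸ he) hc⟩
  by_cases heC : e = C
  · subst heC
    have hcb : c = b := by_contra fun hcb => htarget c heb' hcb hcb' hce hc he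
    exact ⟨heb', fun z => h.sees_of_almostDominates_update hψ hclass hCb (hcb ▸ hc) he⟩
  · exact absurd he
      (h.not_almostDominates_update_pair hψ hclass hnot hq hce hcC heC hcb' heb' hc)

theorem exists_isSaturated_of_isShrinking (h : IsTwinDominated G Q φ b b' j r f)
    (hψ : IsShrinking G Q φ b b' j ψ s) :
    ∃ c, IsSaturated G Q φ b b' j f c ∧ ∃ v, v ∉ Q ∧ φ v = b ∧ AlmostComplete G Q (f c) v := by
  by_contra! hnot
  have hQ := h.seven_le_card
  have hclass := hψ.card_le_two
  obtain ⟨v, hv, hv4⟩ := exists_lt_card_nbrsIn (m := 3)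
    (fun z => hψ.dominates_left.exists_mem_colorClass (z := z)) (by omega)
  obtain ⟨z, hz, hzv⟩ := h.exists_not_adj v
  obtain ⟨w, hw, hwz⟩ := hψ.dominates_left.exists_mem_colorClass hz
  have hvw : v ≠ w := fun e => hzv (e ▸ hwz.symm)
  have hclass : colorClass Q ψ b = {v, w} :=
    (eq_of_subset_of_card_le (by simp [insert_subset_iff, hv, hw])
      (by rwa [card_pair hvw])).symm
  have hvb := (mem_colorClass.1 hv).2
  obtain ⟨C, -, hC⟩ := h.critical.exists_free_ne ψ hv4 b
  obtain ⟨D, hDC, hD⟩ := h.critical.exists_free_ne ψ hv4 C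
  obtain ⟨hCb', hC_sees⟩ := h.sees_of_free hψ hclass hnot hC
  obtain ⟨hDb', hD_sees⟩ := h.sees_of_free hψ hclass hnot hD
  exact hDC (h.eq_of_sees hz (hψ.dominates_left z hz) (hψ.dominates_right z hz)
    (hD_sees z hz hzv) (hC_sees z hz hzv) (hvb ▸ hD.1) hDb' (hvb ▸ hC.1) hCb')

theorem free_single (h : IsTwinDominated G Q φ b b' j r f) (hub : φ u = b) (hur : ¬ G.Adj u r) :
    Free G Q φ u j := by
  refine ⟨hub ▸ h.single_ne_left, ?_⟩
  rintro ⟨x, hx, hux, hxj⟩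
  exact hur (h.eq_of_color_eq x hx hxj ▸ hux)

theorem adj_of_sees_update (h : IsTwinDominated G Q φ b b' j r f) (hz : z ∈ Q)
    (hsees : Sees G Q (Function.update φ u j) z j) : G.Adj z u := by
  rcases sees_update.1 hsees with ⟨x, hx, -, hzx, hxj⟩ | ⟨-, -, hzu⟩
  · exact absurd (h.eq_of_color_eq x hx hxj ▸ hzx) (h.not_adj z hz)
  · exact hzu

theorem sees_update_right (h : IsTwinDominated G Q φ b b' j r f) (hub : φ u = b) (hz : z ∈ Q) :
    Sees G Q (Function.update φ u j) z b' := by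
  obtain ⟨x, hx, hzx, hxb'⟩ := h.dominates_right z hz
  exact sees_update.2 (.inl ⟨x, hx, by have := h.left_ne_right; grind, hzx, hxb'⟩)

theorem isShrinking_self (h : IsTwinDominated G Q φ b b' j r f) (hclass : #(colorClass Q φ b) ≤ 2) :
    IsShrinking G Q φ b b' j φ r where
  isProperOff := h.isProperOff
  dominates_left := h.dominates_left
  dominates_right := h.dominates_right
  card_le_two := hclass
  sees_of_sees _ _ _ _ := id
  color_eq _ _ := id
  notMem := h.notMem
  color_single := h.color_eq
  adj_of_sees := by
    rintro z - ⟨x, hx, hzx, hxj⟩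
    exact h.eq_of_color_eq x hx hxj ▸ hzx
  color_eq_or_not_adj := .inr h.not_adj

theorem isShrinking_update (h : IsTwinDominated G Q φ b b' j r f) (hu : u ∉ Q) (hub : φ u = b)
    (hur : ¬ G.Adj u r) (hdom : Dominates G Q (Function.update φ u j) b) :
    IsShrinking G Q φ b b' j (Function.update φ u j) u where
  isProperOff := h.isProperOff.update (h.free_single hub hur)
  dominates_left := hdom
  dominates_right _ := h.sees_update_right hub
  card_le_two := by
    have hsub : colorClass Q (Function.update φ u j) b ⊆ (colorClass Q φ b).erase u := by
      intro x hx
      rw [mem_colorClass, Function.update_apply] at hx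
      have := h.single_ne_left
      exact mem_erase.2 ⟨by grind, mem_colorClass.2 (by grind)⟩
    have hle := card_le_card hsub
    have := h.critical.card_colorClass_le h.isProperOff b
    rw [card_erase_of_mem (mem_colorClass.2 ⟨hu, hub⟩)] at hle
    omega
  sees_of_sees c z _ hcj hsees := by grind [sees_update, Sees]
  color_eq v _ hv := by grind [Function.update_apply]
  notMem := hu
  color_single := Function.update_self ..
  adj_of_sees _ := h.adj_of_sees_update
  color_eq_or_not_adj := .inl hub

theorem almostDominates_update_single_cases (h : IsTwinDominated G Q φ b b' j r f) (hcb' : c ≠ b')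
    (hc : AlmostDominates G Q (Function.update φ u j) q c) :
    c = b ∨ (c = j ∧ AlmostComplete G Q q u) ∨ IsSaturated G Q φ b b' j f c ∧ f c = q := by
  by_cases hcb : c = b
  · exact .inl hcb
  by_cases hcj : c = j
  · subst hcj
    exact .inr (.inl ⟨rfl, fun z hz hzq => h.adj_of_sees_update hz (hc z hz hzq)⟩)
  have hsees : AlmostDominates G Q φ q c := fun z hz hzq => by
    grind [sees_update.1 (hc z hz hzq), Sees]
  have hfq : f c = q := by
    by_contra hne
    exact h.not_sees c hcb hcb' hcj (hsees _ (h.mem c hcb hcb' hcj) hne)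
  exact .inr (.inr ⟨⟨hcb, hcb', hcj, hfq ▸ hsees⟩, hfq⟩)

theorem dominates_update_of_almostComplete (h : IsTwinDominated G Q φ b b' j r f)
    (hb : AlmostDominates G Q (Function.update φ u j) q b) (hu : AlmostComplete G Q q u) :
    Dominates G Q (Function.update φ u j) b := by
  intro z hz
  by_cases hzq : z = q
  swap
  · exact hb z hz hzq
  obtain ⟨x, hx, hzx, hxb⟩ := h.dominates_left z hz
  obtain ⟨y, hy, hyu⟩ := h.exists_not_adj u
  have huy := hu y hy
  exact sees_update.2 (.inl ⟨x, hx, by grind, hzx, hxb⟩)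

theorem not_adj_of_almostDominates_update (h : IsTwinDominated G Q φ b b' j r f) (hu : u ∉ Q)
    (hub : φ u = b) (hb : AlmostDominates G Q (Function.update φ u j) (f c) b)
    (hc : AlmostDominates G Q (Function.update φ u j) (f c) c)
    (hcS : IsSaturated G Q φ b b' j f c) : ∀ z ∈ Q, z ≠ f c → ¬ G.Adj z u := by
  intro z hz hzf hzu
  refine hcS.ne_single (h.eq_of_sees (ψ := Function.update φ u j) hz (hb z hz hzf)
    (h.sees_update_right hub hz) (hc z hz hzf) ⟨u, hu, hzu, Function.update_self ..⟩ hcS.ne_left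
    hcS.ne_right h.single_ne_left h.single_ne_right)

/-- If the class `b` has three vertices, move one of them to the class of `r` and apply Hall. -/
theorem exists_isSaturated (h : IsTwinDominated G Q φ b b' j r f) :
    ∃ c, IsSaturated G Q φ b b' j f c ∧
      ((∃ v, v ∉ Q ∧ φ v = b ∧ AlmostComplete G Q (f c) v) ∨
        ∃ u, u ∉ Q ∧ φ u = b ∧ ¬ G.Adj u r ∧ ∀ z ∈ Q, z ≠ f c → ¬ G.Adj z u) := by
  by_contra! hcon
  have hshrink {ψ : V → Fin k} {s : V} (hψ : IsShrinking G Q φ b b' j ψ s) : False := by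
    obtain ⟨c, hc, v, hv, hvb, hvQ⟩ := h.exists_isSaturated_of_isShrinking hψ
    exact (hcon c hc).1 v hv hvb hvQ
  have hclass2 : ¬ #(colorClass Q φ b) ≤ 2 := fun hclass => hshrink (h.isShrinking_self hclass)
  have hclass3 := h.critical.card_colorClass_le h.isProperOff b
  obtain ⟨u, hu, hub, hur⟩ := h.exists_not_adj_left (by omega)
  have hndom : ¬ Dominates G Q (Function.update φ u j) b := fun hdom =>
    hshrink (h.isShrinking_update hu hub hur hdom)
  rcases h.critical.exists_dominates_or_almost_dominate h.isClique
    (h.isProperOff.update (h.free_single hub hur)) {b'} (by simpa using h.card_add_one) with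
    ⟨c, hcb', hc⟩ | ⟨q, -, c, e, hcb', heb', hce, hq_sees⟩
  · rw [mem_singleton] at hcb'
    obtain ⟨q, hq, hqu⟩ := h.exists_not_adj u
    rcases h.almostDominates_update_single_cases hcb' (q := r) fun z hz _ => hc z hz with
      rfl | ⟨rfl, -⟩ | ⟨hcS, hfr⟩
    · exact hndom hc
    · exact hqu (h.adj_of_sees_update hq (hc q hq))
    · exact h.notMem (hfr ▸ h.mem c hcS.ne_left hcS.ne_right hcS.ne_single)
  rw [mem_singleton] at hcb' heb'
  have hc : AlmostDominates G Q (Function.update φ u j) q c := fun z hz hzq => (hq_sees z hz hzq).1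
  have he : AlmostDominates G Q (Function.update φ u j) q e := fun z hz hzq => (hq_sees z hz hzq).2
  have hcomplete (hb : AlmostDominates G Q (Function.update φ u j) q b) :
      ¬ AlmostComplete G Q q u := fun huQ => hndom (h.dominates_update_of_almostComplete hb huQ)
  have hright (a) (ha : IsSaturated G Q φ b b' j f a)
      (hb : AlmostDominates G Q (Function.update φ u j) (f a) b) :
      ¬ AlmostDominates G Q (Function.update φ u j) (f a) a := by
    intro hfa
    obtain ⟨z, hz, hzf, hzu⟩ := (hcon a ha).2 u hu hub hur
    exact h.not_adj_of_almostDominates_update hu hub hb hfa ha z hz hzf hzu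
  have hinj (hcS : IsSaturated G Q φ b b' j f c) (heS : IsSaturated G Q φ b b' j f e) :=
    h.injOn ⟨hcS.ne_left, hcS.ne_right, hcS.ne_single⟩ ⟨heS.ne_left, heS.ne_right, heS.ne_single⟩
  have hc_cases := h.almostDominates_update_single_cases hcb' hc
  have he_cases := h.almostDominates_update_single_cases heb' he
  grind

theorem exists_free_of_not_adj (h : IsTwinDominated G Q φ b b' j r f)
    (hc : IsSaturated G Q φ b b' j f c) (hu : u ∉ Q) (hub : φ u = b)
    (huQ : ∀ z ∈ Q, z ≠ f c → ¬ G.Adj z u) :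
    ∃ v, v ≠ u ∧ v ∉ Q ∧ φ v = b ∧ 2 < #(nbrsIn G (Q.erase (f c)) v) ∧
      ∃ C, Free G Q (Function.update φ u j) v C ∧ (G.Adj (f c) v → C ≠ c) := by
  have hQ := h.seven_le_card
  have hfQ := h.mem c hc.ne_left hc.ne_right hc.ne_single
  have hclass := h.critical.card_colorClass_le h.isProperOff b
  have hcover : ∀ z ∈ Q.erase (f c), ∃ v ∈ (colorClass Q φ b).erase u, G.Adj v z := by
    intro z hz
    rw [mem_erase] at hz
    obtain ⟨v, hv, hvz⟩ := h.dominates_left.exists_mem_colorClass hz.2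
    exact ⟨v, mem_erase.2 ⟨fun e => huQ z hz.2 hz.1 (e ▸ hvz.symm), hv⟩, hvz⟩
  obtain ⟨v, hv, hv3⟩ := exists_lt_card_nbrsIn (m := 2) hcover (by
    rw [card_erase_of_mem (mem_colorClass.2 ⟨hu, hub⟩), card_erase_of_mem hfQ]; omega)
  rw [mem_erase, mem_colorClass] at hv
  refine ⟨v, hv.1, hv.2.1, hv.2.2, hv3, ?_⟩
  have hmono := nbrsIn_mono (G := G) (erase_subset (f c) Q) v
  by_cases hfv : G.Adj (f c) v
  · have hlt := card_lt_card (hmono.ssubset_of_mem_notMem (mem_nbrsIn.2 ⟨hfQ, hfv.symm⟩)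
      (by simp [mem_nbrsIn]))
    obtain ⟨C, hCc, hC⟩ := h.critical.exists_free_ne (Function.update φ u j)
      (show 4 ≤ #(nbrsIn G Q v) by omega) c
    exact ⟨C, hC, fun _ => hCc⟩
  · obtain ⟨C, hC⟩ := h.critical.exists_free (Function.update φ u j)
      (hv3.trans_le (card_le_card hmono))
    exact ⟨C, hC, fun e => absurd e hfv⟩

theorem sees_update_update_cases (h : IsTwinDominated G Q φ b b' j r f)
    (hc : IsSaturated G Q φ b b' j f c) (huQ : ∀ z ∈ Q, z ≠ f c → ¬ G.Adj z u) (hv : v ∉ Q)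
    (hvb : φ v = b) (hz : z ∈ Q) (hzf : z ≠ f c) (heb' : e ≠ b')
    (he : Sees G Q (Function.update (Function.update φ u j) v C) z e) :
    (e = b ∧ ¬ G.Adj z v) ∨ (e = C ∧ G.Adj z v) ∨ e = c := by
  rcases sees_update.1 he with ⟨x, hx, hxv, hzx, hxe⟩ | ⟨-, heC, hzv⟩
  swap
  · exact .inr (.inl ⟨heC, hzv⟩)
  have hxu : x ≠ u := fun hxu => huQ z hz hzf (hxu ▸ hzx)
  rw [Function.update_of_ne hxu] at hxe
  by_cases heb : e = b
  swap
  · exact .inr (.inr (h.eq_of_sees hz (h.dominates_left z hz) (h.dominates_right z hz)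
      ⟨x, hx, hzx, hxe⟩ (hc.almostDominates z hz hzf) heb heb' hc.ne_left hc.ne_right))
  refine .inl ⟨heb, fun hzv => hxv ?_⟩
  have hF : #{b, b', c} = 3 :=
    card_eq_three.2 ⟨b, b', c, h.left_ne_right, hc.ne_left.symm, hc.ne_right.symm, rfl⟩
  refine injOn_nbrsIn_compl (F := {b, b', c}) ?_ (hF ▸ h.card_nbrsIn_compl_le hz)
    (mem_nbrsIn.2 ⟨mem_compl.2 hx, hzx⟩) (mem_nbrsIn.2 ⟨mem_compl.2 hv, hzv⟩)
    ((hxe.trans heb).trans hvb.symm)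
  simp only [mem_insert, mem_singleton, forall_eq_or_imp, forall_eq]
  exact ⟨h.dominates_left z hz, h.dominates_right z hz, hc.almostDominates z hz hzf⟩

theorem exists_almostComplete_of_not_adj (h : IsTwinDominated G Q φ b b' j r f)
    (hc : IsSaturated G Q φ b b' j f c) (hu : u ∉ Q) (hub : φ u = b) (hur : ¬ G.Adj u r)
    (huQ : ∀ z ∈ Q, z ≠ f c → ¬ G.Adj z u) :
    ∃ v, v ∉ Q ∧ φ v = b ∧ AlmostComplete G Q (f c) v := by
  obtain ⟨v, hvu, hv, hvb, hv3, C, hC, hCc⟩ := h.exists_free_of_not_adj hc hu hub huQ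
  refine ⟨v, hv, hvb, fun y hy hyf => by_contra fun hyv => ?_⟩
  have hCb : C ≠ b := by simpa [hvu, hvb] using hC.1
  have hfQ := h.mem c hc.ne_left hc.ne_right hc.ne_single
  have hsees (z : V) (hz : z ∈ Q) (hzf : z ≠ f c) (e : Fin k) (heb' : e ≠ b') :=
    h.sees_update_update_cases (e := e) (C := C) hc huQ hv hvb hz hzf heb'
  have hf_sees : ¬ Sees G Q (Function.update (Function.update φ u j) v C) (f c) c := by
    have := h.not_sees c hc.ne_left hc.ne_right hc.ne_single
    have := hc.ne_single
    rw [sees_update]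
    grind [Function.update_apply, Sees]
  have hnbr (q : V) : ∃ z ∈ Q, z ≠ f c ∧ z ≠ q ∧ G.Adj z v := by
    obtain ⟨z, hz, hzq⟩ := exists_mem_ne (by omega : 1 < #(nbrsIn G (Q.erase (f c)) v)) q
    rw [mem_nbrsIn, mem_erase] at hz
    exact ⟨z, hz.1.2, hz.1.1, hzq, hz.2.symm⟩
  rcases h.critical.exists_dominates_or_almost_dominate h.isClique
    ((h.isProperOff.update (h.free_single hub hur)).update hC) {b'}
    (by simpa using h.card_add_one) with ⟨a, hab', ha⟩ | ⟨q, -, a, e, hab', heb', hae, hq_sees⟩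
  · rw [mem_singleton] at hab'
    obtain ⟨z, hz, hzf, -, hzv⟩ := hnbr v
    have hz_cases := hsees z hz hzf a hab' (ha z hz)
    have hy_cases := hsees y hy hyf a hab' (ha y hy)
    have hf_a := ha (f c) hfQ
    grind
  · rw [mem_singleton] at hab' heb'
    obtain ⟨z, hz, hzf, hzq, hzv⟩ := hnbr q
    have hz_a := hsees z hz hzf a hab' (hq_sees z hz hzq).1
    have hz_e := hsees z hz hzf e heb' (hq_sees z hz hzq).2
    have hfq : f c = q := by grind
    have hy_a := hsees y hy hyf a hab' (hq_sees y hy (hfq ▸ hyf)).1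
    have hy_e := hsees y hy hyf e heb' (hq_sees y hy (hfq ▸ hyf)).2
    grind

theorem exists_isSaturated_almostComplete (h : IsTwinDominated G Q φ b b' j r f) :
    ∃ c, IsSaturated G Q φ b b' j f c ∧ ∃ v, v ∉ Q ∧ φ v = b ∧ AlmostComplete G Q (f c) v := by
  obtain ⟨c, hc, hv | ⟨u, hu, hub, hur, huQ⟩⟩ := h.exists_isSaturated
  · exact ⟨c, hc, hv⟩
  · exact ⟨c, hc, h.exists_almostComplete_of_not_adj hc hu hub hur huQ⟩

end IsTwinDominated

theorem not_isTwinDominated : ¬ IsTwinDominated G Q φ b b' j r f := by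
  intro h
  obtain ⟨c, hc, v, hv, hvb, hvQ⟩ := h.exists_isSaturated_almostComplete
  obtain ⟨e, he, w, hw, hwb, hwQ⟩ := h.symm.exists_isSaturated_almostComplete
  have hce : c = e := by
    obtain ⟨z, hz⟩ : ((Q.erase (f c)).erase (f e)).Nonempty := card_pos.1 (by
      have := pred_card_le_card_erase (s := Q.erase (f c)) (a := f e)
      have := pred_card_le_card_erase (s := Q) (a := f c)
      have := h.seven_le_card
      omega)
    obtain ⟨hze, hzc, hzQ⟩ : z ≠ f e ∧ z ≠ f c ∧ z ∈ Q := by simpa using hz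
    exact h.eq_of_sees hzQ (h.dominates_left z hzQ) (h.dominates_right z hzQ)
      (hc.almostDominates z hzQ hzc) (he.almostDominates z hzQ hze) hc.ne_left hc.ne_right
      he.ne_right he.ne_left
  subst hce
  have hvw := h.eq_of_almostComplete (h.mem c hc.ne_left hc.ne_right hc.ne_single) hv hw hvQ hwQ
  exact h.left_ne_right (hvb.symm.trans ((congrArg φ hvw).trans hwb))

end TwinDominated

section UniqueNeighbors

variable {ι : Type*} {φ : V → ι} {a u v x z : V} {c e : ι}

/-- `a` is the only neighbour of `z` of colour `c` in `G - Q`, so that an uncoloured `z` may take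
the colour `c` at the price of uncolouring `a`. -/
structure IsUniqueNbr (G : SimpleGraph V) (Q : Finset V) (φ : V → ι) (z : V) (c : ι) (a : V) :
    Prop where
  notMem : a ∉ Q
  adj : G.Adj z a
  color_eq : φ a = c
  eq_of_adj : ∀ v, v ∉ Q → G.Adj z v → φ v = c → v = a

theorem IsUniqueNbr.sees (h : IsUniqueNbr G Q φ z c a) : Sees G Q φ z c :=
  ⟨a, h.notMem, h.adj, h.color_eq⟩

theorem SeesTwice.sees (h : SeesTwice G Q φ z c) : Sees G Q φ z c := by
  obtain ⟨u, -, -, hu, -, hzu, -, huc, -⟩ := h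
  exact ⟨u, hu, hzu, huc⟩

theorem seesTwice_of_not_isUniqueNbr (ha : a ∉ Q) (hza : G.Adj z a) (hac : φ a = c)
    (h : ¬ IsUniqueNbr G Q φ z c a) : SeesTwice G Q φ z c := by
  by_contra hcon
  refine h ⟨ha, hza, hac, fun v hv hzv hvc => ?_⟩
  by_contra hva
  exact hcon ⟨v, a, hva, hv, ha, hzv, hza, hvc, hac⟩

theorem Sees.exists_isUniqueNbr (h : Sees G Q φ z c) (h2 : ¬ SeesTwice G Q φ z c) :
    ∃ a, IsUniqueNbr G Q φ z c a := by
  obtain ⟨a, ha, hza, hac⟩ := h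
  exact ⟨a, not_not.1 fun hcon => h2 (seesTwice_of_not_isUniqueNbr ha hza hac hcon)⟩

theorem IsProperOff.exchange (hφ : IsProperOff G (insert x Q) φ)
    (ha : IsUniqueNbr G (insert x Q) φ x c a) :
    IsProperOff G (insert a Q) (Function.update φ x c) := by
  intro u v hu hv huv
  have := ha.eq_of_adj u
  have := ha.eq_of_adj v
  have := hφ u v
  simp only [Function.update_apply]
  grind [huv.symm, huv.ne]

theorem notMem_insert_and_update_eq_iff (hac : φ a = c) (hec : e ≠ c) :
    (v ∉ insert a Q ∧ Function.update φ x c v = e) ↔ (v ∉ insert x Q ∧ φ v = e) := by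
  simp only [Function.update_apply]
  grind

theorem sees_exchange_iff (hac : φ a = c) (hec : e ≠ c) :
    Sees G (insert a Q) (Function.update φ x c) z e ↔ Sees G (insert x Q) φ z e := by
  have := fun v => notMem_insert_and_update_eq_iff (Q := Q) (v := v) (x := x) hac hec
  simp only [Sees]
  grind

theorem seesTwice_exchange_iff (hac : φ a = c) (hec : e ≠ c) :
    SeesTwice G (insert a Q) (Function.update φ x c) z e ↔ SeesTwice G (insert x Q) φ z e := by
  have := fun v => notMem_insert_and_update_eq_iff (Q := Q) (v := v) (x := x) hac hec
  simp only [SeesTwice]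
  grind

theorem IsUniqueNbr.exchange (h : IsUniqueNbr G (insert x Q) φ z e u) (hac : φ a = c)
    (hec : e ≠ c) : IsUniqueNbr G (insert a Q) (Function.update φ x c) z e u := by
  have huiff := fun v => notMem_insert_and_update_eq_iff (Q := Q) (v := v) (x := x) hac hec
  have hu := (huiff u).2 ⟨h.notMem, h.color_eq⟩
  exact ⟨hu.1, h.adj, hu.2, fun v hv hzv hvc =>
    have hv' := (huiff v).1 ⟨hv, hvc⟩
    h.eq_of_adj v hv'.1 hzv hv'.2⟩

theorem card_add_card_le_card_nbrsIn_compl [Fintype V] {F D : Finset ι}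
    (hF : ∀ c ∈ F, Sees G Q φ z c) (hD : ∀ c ∈ D, SeesTwice G Q φ z c) (hDF : D ⊆ F) :
    #F + #D ≤ #(nbrsIn G Qᶜ z) := by
  have hfibre : ∀ c ∈ F, (if c ∈ D then 2 else 1) ≤ #{v ∈ nbrsIn G Qᶜ z | φ v = c} := by
    intro c hc
    split_ifs with hcD
    · obtain ⟨u, v, huv, hu, hv, hzu, hzv, huc, hvc⟩ := hD c hcD
      refine one_lt_card.2 ⟨u, ?_, v, ?_, huv⟩ <;> simp [mem_nbrsIn, *]
    · obtain ⟨v, hv, hzv, hvc⟩ := hF c hc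
      exact card_pos.2 ⟨v, by simp [mem_nbrsIn, *]⟩
  calc #F + #D = ∑ c ∈ F, (if c ∈ D then 2 else 1) := by
        have hsplit : ∀ c ∈ F, (if c ∈ D then 2 else 1) = 1 + if c ∈ D then 1 else 0 := by grind
        rw [sum_congr rfl hsplit, sum_add_distrib, sum_boole, filter_mem_eq_inter,
          inter_eq_right.2 hDF]
        simp
    _ ≤ ∑ c ∈ F, #{v ∈ nbrsIn G Qᶜ z | φ v = c} := sum_le_sum hfibre
    _ ≤ #(nbrsIn G Qᶜ z) :=
      (sum_card_fiberwise_eq_card_filter _ _ _).trans_le (card_filter_le _ _)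

end UniqueNeighbors

section UncoloredEdge

variable {φ : V → Fin k} {a a' x y z : V} {b c c' d j : Fin k} {S : Finset (Fin k)}
  {f : Fin k → V}

/-- A common neighbour `a` of colour `c` of the ends of an uncoloured edge which may be moved to
the class `j` and, for one end, is its only neighbour of colour `c`. Exchanging `a` with that end
gives another uncoloured edge. -/
structure IsExchangeable (G : SimpleGraph V) (φ : V → Fin k) (x y : V) (j c : Fin k) (a : V) :
    Prop where
  adj_left : G.Adj x a
  adj_right : G.Adj y a
  not_sees : ¬ Sees G {x, y} φ a j
  isUniqueNbr_or : IsUniqueNbr G {x, y} φ x c a ∨ IsUniqueNbr G {x, y} φ y c a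

/-- The clique formed by an uncoloured edge and one exchangeable vertex for each colour in `S`. -/
noncomputable def exchangeClique (x y : V) (S : Finset (Fin k)) (f : Fin k → V) : Finset V :=
  insert x (insert y (S.image f))

theorem mem_exchangeClique :
    z ∈ exchangeClique x y S f ↔ z = x ∨ z = y ∨ ∃ c ∈ S, f c = z := by
  simp [exchangeClique]

theorem pair_subset_exchangeClique : {x, y} ⊆ exchangeClique x y S f := by
  simp [exchangeClique, insert_subset_iff]

namespace IsExchangeable

theorem notMem (h : IsExchangeable G φ x y j c a) : a ∉ ({x, y} : Finset V) :=
  h.isUniqueNbr_or.elim (·.notMem) (·.notMem)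

theorem color_eq (h : IsExchangeable G φ x y j c a) : φ a = c :=
  h.isUniqueNbr_or.elim (·.color_eq) (·.color_eq)

theorem swap (h : IsExchangeable G φ x y j c a) : IsExchangeable G φ y x j c a := by
  refine ⟨h.adj_right, h.adj_left, ?_, ?_⟩ <;> rw [pair_comm]
  exacts [h.not_sees, h.isUniqueNbr_or.symm]

theorem notMem_exchangeClique (hf : ∀ c ∈ S, IsExchangeable G φ x y j c (f c))
    (hz : z ∉ ({x, y} : Finset V)) (hzS : φ z ∉ S) : z ∉ exchangeClique x y S f := by
  rw [mem_exchangeClique]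
  rintro (rfl | rfl | ⟨c, hc, rfl⟩)
  · simp at hz
  · simp at hz
  · exact hzS ((hf c hc).color_eq.symm ▸ hc)

end IsExchangeable

variable [Fintype V]

theorem IsCriticalCounterexample.card_add_card_add_card_nbrsIn_le
    (hb : IsCriticalCounterexample G k) {F D : Finset (Fin k)} (hF : ∀ c ∈ F, Sees G Q φ z c)
    (hD : ∀ c ∈ D, SeesTwice G Q φ z c) (hDF : D ⊆ F) :
    #F + #D + #(nbrsIn G Q z) ≤ k + 1 := by
  have := card_add_card_le_card_nbrsIn_compl hF hD hDF
  have := hb.card_nbrsIn_add_card_nbrsIn_compl_le Q z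
  omega

/-- A colouring of `G - x - y` in which neither `x` nor `y` sees the colour `j`. Such `x` and `y`
are adjacent, by `IsUncoloredEdge.adj`. -/
structure IsUncoloredEdge (G : SimpleGraph V) (φ : V → Fin k) (x y : V) (j : Fin k) : Prop where
  critical : IsCriticalCounterexample G k
  isProperOff : IsProperOff G {x, y} φ
  not_sees_left : ¬ Sees G {x, y} φ x j
  not_sees_right : ¬ Sees G {x, y} φ y j

namespace IsUncoloredEdge

theorem swap (h : IsUncoloredEdge G φ x y j) : IsUncoloredEdge G φ y x j := by
  refine ⟨h.critical, ?_, ?_, ?_⟩ <;> rw [pair_comm]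
  exacts [h.isProperOff, h.not_sees_right, h.not_sees_left]

theorem adj (h : IsUncoloredEdge G φ x y j) : G.Adj x y := by
  by_contra hxy
  have hx := h.not_sees_left
  have hy := h.not_sees_right
  simp only [Sees, not_exists, not_and] at hx hy
  refine h.critical.not_isProperOff_empty (fun v => if v = x ∨ v = y then j else φ v) ?_
  intro u v _ _ huv
  have := h.isProperOff u v
  grind [huv.symm, huv.ne]

theorem sees_left (h : IsUncoloredEdge G φ x y j) (hc : c ≠ j) : Sees G {x, y} φ x c := by
  by_contra hx
  have hy := h.not_sees_right
  simp only [Sees, not_exists, not_and] at hx hy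
  refine h.critical.not_isProperOff_empty
    (fun v => if v = x then c else if v = y then j else φ v) ?_
  intro u v _ _ huv
  have := h.isProperOff u v
  grind [huv.symm, huv.ne]

theorem sees_right (h : IsUncoloredEdge G φ x y j) (hc : c ≠ j) : Sees G {x, y} φ y c := by
  rw [pair_comm]
  exact h.swap.sees_left hc

theorem ne_of_sees_left (h : IsUncoloredEdge G φ x y j) (hc : Sees G {x, y} φ x c) : c ≠ j :=
  fun e => h.not_sees_left (e ▸ hc)

theorem exchange (h : IsUncoloredEdge G φ x y j) (ha : IsUniqueNbr G {x, y} φ x c a)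
    (haj : ¬ Sees G {x, y} φ a j) : IsUncoloredEdge G (Function.update φ x c) a y j := by
  have hjc := (h.ne_of_sees_left ha.sees).symm
  exact ⟨h.critical, h.isProperOff.exchange ha, mt (sees_exchange_iff ha.color_eq hjc).1 haj,
    mt (sees_exchange_iff ha.color_eq hjc).1 h.not_sees_right⟩

theorem isExchangeable_of_isUniqueNbr (h : IsUncoloredEdge G φ x y j)
    (ha : IsUniqueNbr G {x, y} φ x c a) (haj : ¬ Sees G {x, y} φ a j) :
    IsExchangeable G φ x y j c a :=
  ⟨ha.adj, (h.exchange ha haj).adj.symm, haj, .inl ha⟩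

theorem exists_isExchangeable (h : IsUncoloredEdge G φ x y j) (hc : c ≠ j)
    (hx : ∀ a, IsUniqueNbr G {x, y} φ x c a → ¬ Sees G {x, y} φ a j)
    (hy : ∀ a, IsUniqueNbr G {x, y} φ y c a → ¬ Sees G {x, y} φ a j)
    (hxy : ¬ (SeesTwice G {x, y} φ x c ∧ SeesTwice G {x, y} φ y c)) :
    ∃ a, IsExchangeable G φ x y j c a := by
  rcases not_and_or.1 hxy with hx2 | hy2
  · obtain ⟨a, ha⟩ := (h.sees_left hc).exists_isUniqueNbr hx2
    exact ⟨a, h.isExchangeable_of_isUniqueNbr ha (hx a ha)⟩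
  · obtain ⟨a, ha⟩ := (h.sees_right hc).exists_isUniqueNbr hy2
    have haj := hy a ha
    rw [pair_comm] at ha haj
    exact ⟨a, (h.swap.isExchangeable_of_isUniqueNbr ha haj).swap⟩

theorem sees_of_isUniqueNbr (h : IsUncoloredEdge G φ x y j)
    (ha : IsUniqueNbr G {x, y} φ x c a) (haj : ¬ Sees G {x, y} φ a j) (hbj : b ≠ j)
    (hbc : b ≠ c) : Sees G {x, y} φ a b :=
  (sees_exchange_iff ha.color_eq hbc).1 ((h.exchange ha haj).sees_left hbj)

theorem sees_of_isExchangeable (h : IsUncoloredEdge G φ x y j)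
    (ha : IsExchangeable G φ x y j c a) (hbj : b ≠ j) (hbc : b ≠ c) : Sees G {x, y} φ a b := by
  rcases ha.isUniqueNbr_or with hax | hay
  · exact h.sees_of_isUniqueNbr hax ha.not_sees hbj hbc
  · have haj := ha.not_sees
    rw [pair_comm] at hay haj ⊢
    exact h.swap.sees_of_isUniqueNbr hay haj hbj hbc

theorem adj_of_isUniqueNbr (h : IsUncoloredEdge G φ x y j) (ha : IsUniqueNbr G {x, y} φ x c a)
    (haj : ¬ Sees G {x, y} φ a j) (ha' : IsUniqueNbr G {x, y} φ y c' a')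
    (haj' : ¬ Sees G {x, y} φ a' j) (hcc' : c ≠ c') : G.Adj a a' := by
  have hedge := (h.exchange ha haj).swap
  have hunique := ha'.exchange (a := a) (c := c) ha.color_eq hcc'.symm
  have hjc := (h.ne_of_sees_left ha.sees).symm
  have hnot := mt (sees_exchange_iff (a := a) ha.color_eq hjc).1 haj'
  rw [pair_comm] at hunique hnot
  exact (hedge.isExchangeable_of_isUniqueNbr hunique hnot).adj_right

theorem eq_of_seesTwice_left (h : IsUncoloredEdge G φ x y j) (hc : SeesTwice G {x, y} φ x c)
    (hd : SeesTwice G {x, y} φ x d) : c = d := by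
  by_contra hcd
  have hcount := h.critical.card_add_card_add_card_nbrsIn_le (F := univ.erase j) (D := {c, d})
    (fun e he => h.sees_left (ne_of_mem_erase he)) (by simp [hc, hd]) (by
      simp [insert_subset_iff, h.ne_of_sees_left hc.sees, h.ne_of_sees_left hd.sees])
  have hy : 0 < #(nbrsIn G {x, y} x) := card_pos.2 ⟨y, mem_nbrsIn.2 ⟨by simp, h.adj⟩⟩
  rw [card_erase_of_mem (mem_univ j), card_pair hcd, card_univ, Fintype.card_fin] at hcount
  have := h.critical.eight_le
  omega

theorem eq_of_seesTwice_right (h : IsUncoloredEdge G φ x y j) (hc : SeesTwice G {x, y} φ y c)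
    (hd : SeesTwice G {x, y} φ y d) : c = d := by
  rw [pair_comm] at hc hd
  exact h.swap.eq_of_seesTwice_left hc hd

/-- If neither pair of opposite unique neighbours is available, one end sees both colours
twice. -/
theorem adj_of_isExchangeable (h : IsUncoloredEdge G φ x y j)
    (ha : IsExchangeable G φ x y j c a) (ha' : IsExchangeable G φ x y j c' a') (hcc' : c ≠ c') :
    G.Adj a a' := by
  by_cases hxy : IsUniqueNbr G {x, y} φ x c a ∧ IsUniqueNbr G {x, y} φ y c' a'
  · exact h.adj_of_isUniqueNbr hxy.1 ha.not_sees hxy.2 ha'.not_sees hcc'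
  by_cases hyx : IsUniqueNbr G {x, y} φ y c a ∧ IsUniqueNbr G {x, y} φ x c' a'
  · exact (h.adj_of_isUniqueNbr hyx.2 ha'.not_sees hyx.1 ha.not_sees hcc'.symm).symm
  have hor := ha.isUniqueNbr_or
  have hor' := ha'.isUniqueNbr_or
  by_cases hx : IsUniqueNbr G {x, y} φ x c a
  · exact absurd (h.eq_of_seesTwice_right
      (seesTwice_of_not_isUniqueNbr ha.notMem ha.adj_right ha.color_eq (by tauto))
      (seesTwice_of_not_isUniqueNbr ha'.notMem ha'.adj_right ha'.color_eq (by tauto))) hcc'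
  · exact absurd (h.eq_of_seesTwice_left
      (seesTwice_of_not_isUniqueNbr ha.notMem ha.adj_left ha.color_eq (by tauto))
      (seesTwice_of_not_isUniqueNbr ha'.notMem ha'.adj_left ha'.color_eq (by tauto))) hcc'

theorem isClique_exchangeClique (h : IsUncoloredEdge G φ x y j)
    (hf : ∀ c ∈ S, IsExchangeable G φ x y j c (f c)) :
    G.IsClique (exchangeClique x y S f : Set V) := by
  have himage : G.IsClique (f '' S) := by
    rintro _ ⟨c, hc, rfl⟩ _ ⟨d, hd, rfl⟩ hne
    exact h.adj_of_isExchangeable (hf c hc) (hf d hd) fun e => hne (e ▸ rfl)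
  rw [exchangeClique, coe_insert, coe_insert, coe_image]
  refine (himage.insert ?_).insert ?_
  · rintro _ ⟨c, hc, rfl⟩ -
    exact (hf c hc).adj_right
  · rintro _ (rfl | ⟨c, hc, rfl⟩) -
    exacts [h.adj, (hf c hc).adj_left]

theorem card_exchangeClique (h : IsUncoloredEdge G φ x y j)
    (hf : ∀ c ∈ S, IsExchangeable G φ x y j c (f c)) : #(exchangeClique x y S f) = #S + 2 := by
  have hinj : Set.InjOn f S := fun c hc d hd e => by
    rw [← (hf c hc).color_eq, ← (hf d hd).color_eq, e]
  have hne : ∀ c ∈ S, f c ≠ x ∧ f c ≠ y := fun c hc => by simpa using (hf c hc).notMem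
  rw [exchangeClique, card_insert_of_notMem, card_insert_of_notMem, card_image_of_injOn hinj]
  · exact fun e => (mem_image.1 e).elim fun c hc => (hne c hc.1).2 hc.2
  · rw [mem_insert, not_or]
    exact ⟨h.adj.ne, fun e => (mem_image.1 e).elim fun c hc => (hne c hc.1).1 hc.2⟩

theorem card_add_three_le (h : IsUncoloredEdge G φ x y j)
    (hf : ∀ c ∈ S, IsExchangeable G φ x y j c (f c)) : #S + 3 ≤ k := by
  by_contra hcon
  have hcard := h.card_exchangeClique hf
  exact h.critical.cliqueFree.mono (by omega) _ ⟨h.isClique_exchangeClique hf, hcard⟩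

theorem dominates_exchangeClique (h : IsUncoloredEdge G φ x y j)
    (hf : ∀ c ∈ S, IsExchangeable G φ x y j c (f c)) (hbj : b ≠ j) (hbS : b ∉ S) :
    Dominates G (exchangeClique x y S f) φ b := by
  intro z hz
  have hsees : Sees G {x, y} φ z b := by
    rcases mem_exchangeClique.1 hz with rfl | rfl | ⟨c, hc, rfl⟩
    · exact h.sees_left hbj
    · exact h.sees_right hbj
    · exact h.sees_of_isExchangeable (hf c hc) hbj fun e => hbS (e ▸ hc)
  obtain ⟨v, hv, hzv, rfl⟩ := hsees
  exact ⟨v, IsExchangeable.notMem_exchangeClique hf hv hbS, hzv, rfl⟩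

end IsUncoloredEdge

/-- If the class `j` were empty, all colours but `j` and at most one more would have an
exchangeable vertex, giving a clique of size at least `k`. -/
theorem IsCriticalCounterexample.exists_color_eq (hb : IsCriticalCounterexample G k)
    (hφ : IsProperOff G {x, y} φ) (j : Fin k) : ∃ v ∉ ({x, y} : Finset V), φ v = j := by
  by_contra! hempty
  have hnot : ∀ v, ¬ Sees G {x, y} φ v j := fun v ⟨w, hw, _, hwj⟩ => hempty w hw hwj
  have h : IsUncoloredEdge G φ x y j := ⟨hb, hφ, hnot x, hnot y⟩
  let S : Finset (Fin k) := {c ∈ univ.erase j | ¬ SeesTwice G {x, y} φ x c}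
  have hexists : ∀ c ∈ S, ∃ a, IsExchangeable G φ x y j c a := by
    intro c hc
    rw [mem_filter, mem_erase] at hc
    exact h.exists_isExchangeable hc.1.1 (fun a _ => hnot a) (fun a _ => hnot a) fun e => hc.2 e.1
  have : Nonempty V := ⟨x⟩
  choose! f hf using hexists
  have hsmall := h.card_add_three_le hf
  have htwice : #{c ∈ univ.erase j | SeesTwice G {x, y} φ x c} ≤ 1 :=
    card_le_one.2 fun c hc d hd =>
      h.eq_of_seesTwice_left (mem_filter.1 hc).2 (mem_filter.1 hd).2
  have hsplit := card_filter_add_card_filter_not (s := univ.erase j)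
    (fun c => SeesTwice G {x, y} φ x c)
  rw [card_erase_of_mem (mem_univ j), card_univ, Fintype.card_fin] at hsplit
  have := hb.eight_le
  change _ + #S = _ at hsplit
  omega

end UncoloredEdge

section AnchoredEdge

variable [Fintype V] {φ : V → Fin k} {a r x y z : V} {b b' c d j : Fin k} {S : Finset (Fin k)}
  {f : Fin k → V}

/-- An uncoloured edge `xy` such that `r` is the only vertex of the colour `j` unseen by its
ends. -/
structure IsAnchoredEdge (G : SimpleGraph V) (φ : V → Fin k) (x y : V) (j : Fin k) (r : V) : Prop
    extends IsUncoloredEdge G φ x y j where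
  anchor_notMem : r ∉ ({x, y} : Finset V)
  anchor_color : φ r = j
  eq_anchor : ∀ v, v ∉ ({x, y} : Finset V) → φ v = j → v = r

namespace IsAnchoredEdge

theorem swap (h : IsAnchoredEdge G φ x y j r) : IsAnchoredEdge G φ y x j r := by
  refine ⟨h.toIsUncoloredEdge.swap, ?_, h.anchor_color, ?_⟩ <;> rw [pair_comm]
  exacts [h.anchor_notMem, h.eq_anchor]

theorem sees_anchor_color_iff (h : IsAnchoredEdge G φ x y j r) :
    Sees G {x, y} φ z j ↔ G.Adj z r := by
  refine ⟨?_, fun hzr => ⟨r, h.anchor_notMem, hzr, h.anchor_color⟩⟩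
  rintro ⟨v, hv, hzv, hvj⟩
  exact h.eq_anchor v hv hvj ▸ hzv

theorem not_adj_left (h : IsAnchoredEdge G φ x y j r) : ¬ G.Adj x r :=
  mt h.sees_anchor_color_iff.2 h.not_sees_left

theorem not_adj_right (h : IsAnchoredEdge G φ x y j r) : ¬ G.Adj y r :=
  mt h.sees_anchor_color_iff.2 h.not_sees_right

theorem ne_of_anchor_sees (h : IsAnchoredEdge G φ x y j r) (hc : Sees G {x, y} φ r c) : c ≠ j := by
  rintro rfl
  exact (h.sees_anchor_color_iff.1 hc).ne rfl

/-- Otherwise `r` could be recoloured and the class `j` emptied. -/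
theorem anchor_sees (h : IsAnchoredEdge G φ x y j r) (hc : c ≠ j) : Sees G {x, y} φ r c := by
  by_contra hr
  have hφ := h.isProperOff.update (u := r) (c := c) ⟨h.anchor_color.symm ▸ hc, hr⟩
  obtain ⟨v, hv, hvj⟩ := h.critical.exists_color_eq hφ j
  have := h.eq_anchor v hv
  rw [Function.update_apply] at hvj
  grind

/-- Otherwise give `x` and `r` the colour `c` and uncolour `a`: this empties the class `j`. -/
theorem not_adj_of_isUniqueNbr (h : IsAnchoredEdge G φ x y j r)
    (ha : IsUniqueNbr G {x, y} φ x c a) (hr : ¬ SeesTwice G {x, y} φ r c) : ¬ G.Adj a r := by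
  intro har
  have hcj := h.ne_of_sees_left ha.sees
  have hrx : r ≠ x := fun e => h.anchor_notMem (by simp [e])
  have hcolor : Function.update φ x c r = j := by
    rw [Function.update_of_ne hrx, h.anchor_color]
  have hfree : Free G {a, y} (Function.update φ x c) r c := by
    refine ⟨hcolor.symm ▸ hcj, ?_⟩
    rintro ⟨w, hw, hrw, hwc⟩
    have hwx : w ≠ x := fun e => h.not_adj_left (e ▸ hrw).symm
    rw [Function.update_of_ne hwx] at hwc
    exact hr ⟨w, a, by grind, by grind, ha.notMem, hrw, har.symm, hwc, ha.color_eq⟩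
  have hφ := (h.isProperOff.exchange ha).update hfree
  obtain ⟨v, hv, hvj⟩ := h.critical.exists_color_eq hφ j
  have := h.eq_anchor v
  simp only [Function.update_apply] at hvj
  grind

theorem not_sees_of_isUniqueNbr (h : IsAnchoredEdge G φ x y j r)
    (ha : IsUniqueNbr G {x, y} φ x c a) (hr : ¬ SeesTwice G {x, y} φ r c) :
    ¬ Sees G {x, y} φ a j :=
  mt h.sees_anchor_color_iff.1 (h.not_adj_of_isUniqueNbr ha hr)

theorem exists_isExchangeable_of_not_seesTwice (h : IsAnchoredEdge G φ x y j r) (hc : c ≠ j)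
    (hr : ¬ SeesTwice G {x, y} φ r c)
    (hxy : ¬ (SeesTwice G {x, y} φ x c ∧ SeesTwice G {x, y} φ y c)) :
    ∃ a, IsExchangeable G φ x y j c a := by
  refine h.exists_isExchangeable hc (fun a ha => h.not_sees_of_isUniqueNbr ha hr) ?_ hxy
  rw [pair_comm] at hr ⊢
  exact fun a ha => h.swap.not_sees_of_isUniqueNbr ha hr

theorem card_anchor_seesTwice_le (h : IsAnchoredEdge G φ x y j r) :
    #{c | SeesTwice G {x, y} φ r c} ≤ 2 := by
  have hcount := h.critical.card_add_card_add_card_nbrsIn_le (F := univ.erase j)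
    (D := {c | SeesTwice G {x, y} φ r c}) (fun e he => h.anchor_sees (ne_of_mem_erase he))
    (fun c hc => (mem_filter_univ c).1 hc) fun c hc =>
      mem_erase.2 ⟨h.ne_of_anchor_sees ((mem_filter_univ c).1 hc).sees, mem_univ c⟩
  rw [card_erase_of_mem (mem_univ j), card_univ, Fintype.card_fin] at hcount
  have := h.critical.eight_le
  omega

/-- Otherwise `r` sees `b` twice and `c` three times, which exceeds its degree. -/
theorem exists_not_adj_anchor (h : IsAnchoredEdge G φ x y j r) (hbc : b ≠ c)
    (hb : SeesTwice G {x, y} φ r b) (hQ : {x, y} ⊆ Q) (hc : #(colorClass Q φ c) = 3) :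
    ∃ u, u ∉ Q ∧ φ u = c ∧ ¬ G.Adj u r := by
  by_contra! hcon
  obtain ⟨p, q, w, hpq, hpw, hqw, hclass⟩ := card_eq_three.1 hc
  have hmem : ∀ u ∈ ({p, q, w} : Finset V), u ∉ ({x, y} : Finset V) ∧ G.Adj r u ∧ φ u = c := by
    intro u hu
    rw [← hclass, mem_colorClass] at hu
    exact ⟨fun e => hu.1 (hQ e), (hcon u hu.1 hu.2).symm, hu.2⟩
  obtain ⟨hp, hrp, hpc⟩ := hmem p (by simp)
  obtain ⟨hq, hrq, hqc⟩ := hmem q (by simp)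
  obtain ⟨hw, hrw, hwc⟩ := hmem w (by simp)
  have hbj := h.ne_of_anchor_sees hb.sees
  have hcj := h.ne_of_anchor_sees ⟨p, hp, hrp, hpc⟩
  have hsees : ∀ e ∈ univ.erase j, Sees G {p, x, y} φ r e := by
    intro e he
    obtain ⟨v, hv, hrv, hve⟩ := h.anchor_sees (ne_of_mem_erase he)
    by_cases hec : e = c
    · exact ⟨q, by grind, hrq, by grind⟩
    · exact ⟨v, by grind, hrv, hve⟩
  have hcTwice : SeesTwice G {p, x, y} φ r c :=
    ⟨q, w, hqw, by grind, by grind, hrq, hrw, hqc, hwc⟩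
  have hbTwice : SeesTwice G {p, x, y} φ r b := by
    obtain ⟨s, t, hst, hs, ht, hrs, hrt, hsb, htb⟩ := hb
    exact ⟨s, t, hst, by grind, by grind, hrs, hrt, hsb, htb⟩
  have hcount := h.critical.card_add_card_add_card_nbrsIn_le (D := {b, c}) hsees
    (by simp [hbTwice, hcTwice]) (by simp [insert_subset_iff, hbj, hcj])
  have hpos : 0 < #(nbrsIn G {p, x, y} r) := card_pos.2 ⟨p, mem_nbrsIn.2 ⟨by simp, hrp⟩⟩
  rw [card_erase_of_mem (mem_univ j), card_pair hbc, card_univ, Fintype.card_fin] at hcount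
  omega

theorem eq_anchor_of_notMem_exchangeClique (h : IsAnchoredEdge G φ x y j r)
    (hz : z ∉ exchangeClique x y S f) (hzj : φ z = j) : z = r :=
  h.eq_anchor z (fun e => hz (pair_subset_exchangeClique e)) hzj

theorem not_adj_anchor_of_mem_exchangeClique (h : IsAnchoredEdge G φ x y j r)
    (hf : ∀ c ∈ S, IsExchangeable G φ x y j c (f c)) (hz : z ∈ exchangeClique x y S f) :
    ¬ G.Adj z r := by
  rcases mem_exchangeClique.1 hz with rfl | rfl | ⟨c, hc, rfl⟩
  · exact h.not_adj_left
  · exact h.not_adj_right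
  · exact mt h.sees_anchor_color_iff.2 (hf c hc).not_sees

theorem isTwinDominated_exchangeClique (h : IsAnchoredEdge G φ x y j r) (hbb' : b ≠ b')
    (hb : SeesTwice G {x, y} φ r b) (hb' : SeesTwice G {x, y} φ r b')
    (hf : ∀ c ∈ ({b, b', j}ᶜ : Finset (Fin k)), IsExchangeable G φ x y j c (f c)) :
    IsTwinDominated G (exchangeClique x y {b, b', j}ᶜ f) φ b b' j r f := by
  have hbj := h.ne_of_anchor_sees hb.sees
  have hbj' := h.ne_of_anchor_sees hb'.sees
  have hmem : ∀ c, c ≠ b → c ≠ b' → c ≠ j → c ∈ ({b, b', j}ᶜ : Finset (Fin k)) := by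
    simp +contextual
  have hcard : #({b, b', j}ᶜ : Finset (Fin k)) = k - 3 := by
    rw [card_compl, Fintype.card_fin, card_eq_three.2 ⟨b, b', j, hbb', hbj, hbj', rfl⟩]
  exact
    { critical := h.critical
      isClique := h.isClique_exchangeClique hf
      isProperOff := h.isProperOff.mono pair_subset_exchangeClique
      card_add_one := by
        have := h.critical.eight_le
        rw [h.card_exchangeClique hf]
        omega
      left_ne_right := hbb'
      single_ne_left := hbj.symm
      single_ne_right := hbj'.symm
      dominates_left := h.dominates_exchangeClique hf hbj (by simp)
      dominates_right := h.dominates_exchangeClique hf hbj' (by simp)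
      notMem := IsExchangeable.notMem_exchangeClique hf h.anchor_notMem (by simp [h.anchor_color])
      color_eq := h.anchor_color
      eq_of_color_eq := fun v => h.eq_anchor_of_notMem_exchangeClique
      not_adj := fun z => h.not_adj_anchor_of_mem_exchangeClique hf
      mem := fun c hcb hcb' hcj =>
        mem_exchangeClique.2 (.inr (.inr ⟨c, hmem c hcb hcb' hcj, rfl⟩))
      not_sees := by
        rintro c hcb hcb' hcj ⟨v, hv, hcv, hvc⟩
        have hfc := hf c (hmem c hcb hcb' hcj)
        exact h.isProperOff _ v hfc.notMem (fun e => hv (pair_subset_exchangeClique e)) hcv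
          (hfc.color_eq.trans hvc.symm)
      injOn := fun c hc d hd e => by
        rw [← (hf c (hmem c hc.1 hc.2.1 hc.2.2)).color_eq,
          ← (hf d (hmem d hd.1 hd.2.1 hd.2.2)).color_eq, e]
      exists_not_adj_left := h.exists_not_adj_anchor hbb'.symm hb' pair_subset_exchangeClique
      exists_not_adj_right := h.exists_not_adj_anchor hbb' hb pair_subset_exchangeClique }

/-- Otherwise every colour other than `j` that `r` does not see twice has an exchangeable vertex;
these form a clique of size at least `k`, or one to which `not_isTwinDominated` applies. -/
theorem exists_seesTwice_seesTwice (h : IsAnchoredEdge G φ x y j r) :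
    ∃ d, ¬ SeesTwice G {x, y} φ r d ∧ SeesTwice G {x, y} φ x d ∧ SeesTwice G {x, y} φ y d := by
  by_contra! hcon
  have hexists : ∀ c, c ≠ j → ¬ SeesTwice G {x, y} φ r c → ∃ a, IsExchangeable G φ x y j c a :=
    fun c hcj hr => h.exists_isExchangeable_of_not_seesTwice hcj hr fun e => hcon c hr e.1 e.2
  have : Nonempty V := ⟨x⟩
  choose! f hf using hexists
  let B : Finset (Fin k) := {c | SeesTwice G {x, y} φ r c}
  have hB : ∀ c, c ∈ B ↔ SeesTwice G {x, y} φ r c := mem_filter_univ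
  have hjB : j ∉ B := fun e => h.ne_of_anchor_sees ((hB j).1 e).sees rfl
  have hfB : ∀ c ∈ (insert j B)ᶜ, IsExchangeable G φ x y j c (f c) := by
    intro c hc
    rw [mem_compl, mem_insert, not_or, hB] at hc
    exact hf c hc.1 hc.2
  have hsmall := h.card_add_three_le hfB
  rw [card_compl, card_insert_of_notMem hjB, Fintype.card_fin] at hsmall
  have hle : #B ≤ 2 := h.card_anchor_seesTwice_le
  obtain ⟨b, b', hbb', hBeq⟩ := card_eq_two.1 (show #B = 2 by have := h.critical.eight_le; omega)
  have hcompl : (insert j B)ᶜ = ({b, b', j} : Finset (Fin k))ᶜ := by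
    rw [hBeq, insert_comm, pair_comm j b']
  rw [hcompl] at hfB
  exact not_isTwinDominated (h.isTwinDominated_exchangeClique hbb' ((hB b).1 (by simp [hBeq]))
    ((hB b').1 (by simp [hBeq])) hfB)

theorem exchange (h : IsAnchoredEdge G φ x y j r) (ha : IsUniqueNbr G {x, y} φ x c a)
    (haj : ¬ Sees G {x, y} φ a j) : IsAnchoredEdge G (Function.update φ x c) a y j r := by
  have hjc := (h.ne_of_sees_left ha.sees).symm
  have hanchor := (notMem_insert_and_update_eq_iff (Q := {y}) (x := x) ha.color_eq hjc).2
    ⟨h.anchor_notMem, h.anchor_color⟩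
  refine ⟨h.toIsUncoloredEdge.exchange ha haj, hanchor.1, hanchor.2, fun v hv hvj => ?_⟩
  have hv' := (notMem_insert_and_update_eq_iff (x := x) ha.color_eq hjc).1 ⟨hv, hvj⟩
  exact h.eq_anchor v hv'.1 hv'.2

theorem seesTwice_of_isUniqueNbr (h : IsAnchoredEdge G φ x y j r)
    (ha : IsUniqueNbr G {x, y} φ x c a) (haj : ¬ Sees G {x, y} φ a j)
    (hy : SeesTwice G {x, y} φ y d) (hdc : d ≠ c) : SeesTwice G {x, y} φ a d := by
  have hedge := h.exchange ha haj
  obtain ⟨e, -, hae, hye⟩ := hedge.exists_seesTwice_seesTwice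
  have hyd := (seesTwice_exchange_iff (Q := {y}) (x := x) ha.color_eq hdc).2 hy
  obtain rfl := hedge.eq_of_seesTwice_right hye hyd
  exact (seesTwice_exchange_iff ha.color_eq hdc).1 hae

theorem seesTwice_of_isExchangeable (h : IsAnchoredEdge G φ x y j r)
    (ha : IsExchangeable G φ x y j c a) (hx : SeesTwice G {x, y} φ x d)
    (hy : SeesTwice G {x, y} φ y d) (hdc : d ≠ c) : SeesTwice G {x, y} φ a d := by
  rcases ha.isUniqueNbr_or with hax | hay
  · exact h.seesTwice_of_isUniqueNbr hax ha.not_sees hy hdc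
  · have haj := ha.not_sees
    rw [pair_comm] at hay haj hx ⊢
    exact h.swap.seesTwice_of_isUniqueNbr hay haj hx hdc

theorem seesTwice_of_mem_exchangeClique (h : IsAnchoredEdge G φ x y j r)
    (hf : ∀ c ∈ S, IsExchangeable G φ x y j c (f c)) (hx : SeesTwice G {x, y} φ x d)
    (hy : SeesTwice G {x, y} φ y d) (hdS : d ∉ S) (hz : z ∈ exchangeClique x y S f) :
    SeesTwice G (exchangeClique x y S f) φ z d := by
  have htwice : SeesTwice G {x, y} φ z d := by
    rcases mem_exchangeClique.1 hz with rfl | rfl | ⟨c, hc, rfl⟩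
    · exact hx
    · exact hy
    · exact h.seesTwice_of_isExchangeable (hf c hc) hx hy fun e => hdS (e ▸ hc)
  obtain ⟨u, v, huv, hu, hv, hzu, hzv, hud, hvd⟩ := htwice
  exact ⟨u, v, huv, IsExchangeable.notMem_exchangeClique hf hu (hud ▸ hdS),
    IsExchangeable.notMem_exchangeClique hf hv (hvd ▸ hdS), hzu, hzv, hud, hvd⟩

theorem isDoublyDominated_exchangeClique {B : Finset (Fin k)} (h : IsAnchoredEdge G φ x y j r)
    (hB : ∀ c, c ∈ B ↔ SeesTwice G {x, y} φ r c) (hdr : ¬ SeesTwice G {x, y} φ r d)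
    (hdx : SeesTwice G {x, y} φ x d) (hdy : SeesTwice G {x, y} φ y d)
    (hf : ∀ c ∈ (insert j (insert d B))ᶜ, IsExchangeable G φ x y j c (f c)) :
    IsDoublyDominated G (exchangeClique x y (insert j (insert d B))ᶜ f) φ B d j r := by
  have hdj := h.ne_of_sees_left hdx.sees
  have hBj : ∀ b ∈ B, b ≠ j := fun b hb => h.ne_of_anchor_sees ((hB b).1 hb).sees
  have hdB : d ∉ B := mt (hB d).1 hdr
  have hBeq : B = ({c | SeesTwice G {x, y} φ r c} : Finset (Fin k)) := by
    ext c
    rw [hB, mem_filter_univ]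
  have hle : #B ≤ 2 := hBeq ▸ h.card_anchor_seesTwice_le
  have hcard : #(insert j (insert d B))ᶜ = k - (#B + 2) := by
    rw [card_compl, card_insert_of_notMem, card_insert_of_notMem hdB, Fintype.card_fin]
    rw [mem_insert, not_or]
    exact ⟨hdj.symm, fun e => hBj j e rfl⟩
  have hsmall := h.card_add_three_le hf
  have hk := h.critical.eight_le
  exact
    { critical := h.critical
      isClique := h.isClique_exchangeClique hf
      isProperOff := h.isProperOff.mono pair_subset_exchangeClique
      card_add_card := by rw [h.card_exchangeClique hf]; omega
      nonempty := card_pos.1 (by omega)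
      card_le_two := hle
      double_notMem := hdB
      single_notMem := fun e => hBj j e rfl
      single_ne_double := hdj.symm
      seesTwice := fun z => h.seesTwice_of_mem_exchangeClique hf hdx hdy (by simp)
      dominates := fun b hb => h.dominates_exchangeClique hf (hBj b hb) (by simp [hb])
      eq_of_color_eq := fun v => h.eq_anchor_of_notMem_exchangeClique
      eq_of_adj := by
        intro u v hu hv hud hvd hur hvr
        by_contra huv
        exact hdr ⟨u, v, huv, fun e => hu (pair_subset_exchangeClique e),
          fun e => hv (pair_subset_exchangeClique e), hur.symm, hvr.symm, hud, hvd⟩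
      exists_not_adj := by
        intro hB2 b _
        obtain ⟨b', hb', hne⟩ := exists_mem_ne (show 1 < #B by omega) b
        exact h.exists_not_adj_anchor hne ((hB b').1 hb') pair_subset_exchangeClique }

end IsAnchoredEdge

theorem not_isAnchoredEdge : ¬ IsAnchoredEdge G φ x y j r := by
  intro h
  obtain ⟨d, hdr, hdx, hdy⟩ := h.exists_seesTwice_seesTwice
  have hexists : ∀ c, c ≠ j → c ≠ d → ¬ SeesTwice G {x, y} φ r c →
      ∃ a, IsExchangeable G φ x y j c a := fun c hcj hcd hr =>
    h.exists_isExchangeable_of_not_seesTwice hcj hr fun e => hcd (h.eq_of_seesTwice_left e.1 hdx)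
  have : Nonempty V := ⟨x⟩
  choose! f hf using hexists
  let B : Finset (Fin k) := {c | SeesTwice G {x, y} φ r c}
  have hB : ∀ c, c ∈ B ↔ SeesTwice G {x, y} φ r c := mem_filter_univ
  refine not_isDoublyDominated (h.isDoublyDominated_exchangeClique hB hdr hdx hdy (f := f) ?_)
  intro c hc
  rw [mem_compl, mem_insert, mem_insert, not_or, not_or, hB] at hc
  exact hf c hc.1 hc.2.1 hc.2.2

end AnchoredEdge

section PairClass

variable [Fintype V] {φ : V → Fin k} {a b r x y : V} {c d j : Fin k}

/-- A colouring of `G - x` in which the colour class `j` consists of the two vertices `y`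
and `r`. -/
structure HasPairClass (G : SimpleGraph V) (φ : V → Fin k) (x y r : V) (j : Fin k) : Prop where
  critical : IsCriticalCounterexample G k
  isProperOff : IsProperOff G {x} φ
  left_ne_right : y ≠ r
  color_eq_iff : ∀ v, v ∉ ({x} : Finset V) ∧ φ v = j ↔ v = y ∨ v = r

theorem IsCriticalCounterexample.sees_of_singleton (hb : IsCriticalCounterexample G k)
    (hφ : IsProperOff G {x} φ) (c : Fin k) : Sees G {x} φ x c := by
  by_contra hx
  simp only [Sees, not_exists, not_and, mem_singleton] at hx
  refine hb.not_isProperOff_empty (Function.update φ x c) fun u v _ _ huv => ?_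
  have := hφ u v
  simp only [Function.update_apply]
  grind [huv.symm, huv.ne]

namespace HasPairClass

theorem swap (h : HasPairClass G φ x y r j) : HasPairClass G φ x r y j :=
  ⟨h.critical, h.isProperOff, h.left_ne_right.symm, fun v => (h.color_eq_iff v).trans or_comm⟩

theorem not_adj (h : HasPairClass G φ x y r j) : ¬ G.Adj y r := fun hyr => by
  have hy := (h.color_eq_iff y).2 (.inl rfl)
  have hr := (h.color_eq_iff r).2 (.inr rfl)
  exact h.isProperOff y r hy.1 hr.1 hyr (hy.2.trans hr.2.symm)

/-- Otherwise uncolouring `r` leaves the edge `xr` anchored at `y`. -/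
theorem adj_left (h : HasPairClass G φ x y r j) : G.Adj x y := by
  by_contra hxy
  have hy := (h.color_eq_iff y).2 (.inl rfl)
  have heq : ∀ v, v ∉ ({x, r} : Finset V) → φ v = j → v = y := fun v hv hvj => by
    have := h.color_eq_iff v
    grind
  refine not_isAnchoredEdge (G := G) (φ := φ) (x := x) (y := r) (j := j) (r := y)
    { critical := h.critical
      isProperOff := h.isProperOff.mono (by simp)
      not_sees_left := fun ⟨v, hv, hxv, hvj⟩ => hxy (heq v hv hvj ▸ hxv)
      not_sees_right := fun ⟨v, hv, hrv, hvj⟩ => h.not_adj (heq v hv hvj ▸ hrv).symm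
      anchor_notMem := by simpa [h.left_ne_right] using hy.1
      anchor_color := hy.2
      eq_anchor := heq }

theorem seesTwice (h : HasPairClass G φ x y r j) : SeesTwice G {x} φ x j := by
  have hy := (h.color_eq_iff y).2 (.inl rfl)
  have hr := (h.color_eq_iff r).2 (.inr rfl)
  exact ⟨y, r, h.left_ne_right, hy.1, hr.1, h.adj_left, h.swap.adj_left, hy.2, hr.2⟩

theorem exists_isUniqueNbr (h : HasPairClass G φ x y r j) (hc : c ≠ j) :
    ∃ a, IsUniqueNbr G {x} φ x c a := by
  have hsees := h.critical.sees_of_singleton h.isProperOff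
  refine (hsees c).exists_isUniqueNbr fun hc2 => ?_
  have hcount := h.critical.card_add_card_add_card_nbrsIn_le (F := univ) (D := {c, j})
    (fun e _ => hsees e) (by simp [hc2, h.seesTwice]) (subset_univ _)
  rw [card_pair hc, card_univ, Fintype.card_fin] at hcount
  omega

theorem exchange (h : HasPairClass G φ x y r j) (ha : IsUniqueNbr G {x} φ x c a) (hc : c ≠ j) :
    HasPairClass G (Function.update φ x c) a y r j := by
  rw [← insert_empty_eq x] at ha
  have hφ := h.isProperOff
  rw [← insert_empty_eq x] at hφ
  refine ⟨h.critical, by simpa using hφ.exchange ha, h.left_ne_right, fun v => ?_⟩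
  rw [← h.color_eq_iff, ← insert_empty_eq a, ← insert_empty_eq x]
  exact notMem_insert_and_update_eq_iff ha.color_eq hc.symm

theorem adj_of_isUniqueNbr (h : HasPairClass G φ x y r j) (ha : IsUniqueNbr G {x} φ x c a)
    (hc : c ≠ j) : G.Adj y a :=
  (h.exchange ha hc).adj_left.symm

/-- After exchanging `x` with `a` and then `a` with its unique neighbour of colour `d`, the vertex
`y` is adjacent to that neighbour, which is not `b`. -/
theorem seesTwice_of_not_adj (h : HasPairClass G φ x y r j) (hc : c ≠ j) (hd : d ≠ j)
    (hcd : c ≠ d) (ha : IsUniqueNbr G {x} φ x c a) (hb : IsUniqueNbr G {x} φ x d b)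
    (hab : ¬ G.Adj a b) : SeesTwice G {x} φ y d := by
  have hpair := h.exchange ha hc
  obtain ⟨w, hw⟩ := hpair.exists_isUniqueNbr hd
  have hwd := (notMem_insert_and_update_eq_iff (Q := ∅) (x := x) ha.color_eq hcd.symm).1
    ⟨hw.notMem, hw.color_eq⟩
  exact ⟨w, b, fun e => hab (e ▸ hw.adj), hwd.1, hb.notMem, hpair.adj_of_isUniqueNbr hw hd,
    h.adj_of_isUniqueNbr hb hd, hwd.2, hb.color_eq⟩

theorem adj_of_isUniqueNbr_of_isUniqueNbr (h : HasPairClass G φ x y r j) (hc : c ≠ j)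
    (hd : d ≠ j) (hcd : c ≠ d) (ha : IsUniqueNbr G {x} φ x c a)
    (hb : IsUniqueNbr G {x} φ x d b) : G.Adj a b := by
  by_contra hab
  have hsees : ∀ e ∈ univ.erase j, Sees G {x} φ y e := fun e he => by
    obtain ⟨w, hw⟩ := h.exists_isUniqueNbr (ne_of_mem_erase he)
    exact ⟨w, hw.notMem, h.adj_of_isUniqueNbr hw (ne_of_mem_erase he), hw.color_eq⟩
  have hcount := h.critical.card_add_card_add_card_nbrsIn_le (D := {c, d}) hsees
    (by simp [h.seesTwice_of_not_adj hc hd hcd ha hb hab,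
      h.seesTwice_of_not_adj hd hc hcd.symm hb ha (mt Adj.symm hab)])
    (by simp [insert_subset_iff, hc, hd])
  have hpos : 0 < #(nbrsIn G {x} y) := card_pos.2 ⟨x, mem_nbrsIn.2 ⟨by simp, h.adj_left.symm⟩⟩
  rw [card_erase_of_mem (mem_univ j), card_pair hcd, card_univ, Fintype.card_fin] at hcount
  omega

end HasPairClass

/-- The unique neighbours of `x` of the colours other than `j` would form a `k`-clique
with `x`. -/
theorem not_hasPairClass : ¬ HasPairClass G φ x y r j := by
  intro h
  have hexists : ∀ c, c ≠ j → ∃ a, IsUniqueNbr G {x} φ x c a := fun c => h.exists_isUniqueNbr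
  have : Nonempty V := ⟨x⟩
  choose! f hf using hexists
  have hfS : ∀ c ∈ univ.erase j, IsUniqueNbr G {x} φ x c (f c) :=
    fun c hc => hf c (ne_of_mem_erase hc)
  have hinj : Set.InjOn f (univ.erase j : Finset (Fin k)) := fun c hc d hd e => by
    rw [← (hfS c hc).color_eq, ← (hfS d hd).color_eq, e]
  have hclique : G.IsNClique (k - 1) ((univ.erase j).image f) := by
    refine ⟨?_, by rw [card_image_of_injOn hinj, card_erase_of_mem (mem_univ j), card_univ,
      Fintype.card_fin]⟩
    rw [coe_image]
    rintro _ ⟨c, hc, rfl⟩ _ ⟨d, hd, rfl⟩ hne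
    exact h.adj_of_isUniqueNbr_of_isUniqueNbr (ne_of_mem_erase hc) (ne_of_mem_erase hd)
      (fun e => hne (e ▸ rfl)) (hfS c hc) (hfS d hd)
  have hinsert := hclique.insert (a := x) (forall_mem_image.2 fun c hc => (hfS c hc).adj)
  have := h.critical.eight_le
  exact h.critical.cliqueFree.mono (by omega) _ hinsert

theorem IsCriticalCounterexample.card_colorClass_singleton (hb : IsCriticalCounterexample G k)
    (hφ : IsProperOff G {x} φ) (j : Fin k) : #(colorClass {x} φ j) = 3 := by
  refine (hb.card_colorClass_le hφ j).antisymm ?_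
  by_contra! hlt
  obtain ⟨y, hy, -, hyj⟩ := hb.sees_of_singleton hφ j
  obtain ⟨r, hr, hrj⟩ := hb.exists_color_eq (hφ.mono (Q := {x, y}) (by simp)) j
  rw [mem_insert, mem_singleton, not_or] at hr
  have hmem : ({y, r} : Finset V) ⊆ colorClass {x} φ j := by
    simp [insert_subset_iff, mem_colorClass, hyj, hrj, hr.1, mem_singleton.not.1 hy]
  have heq := eq_of_subset_of_card_le hmem (by rw [card_pair (Ne.symm hr.2)]; omega)
  refine not_hasPairClass (G := G) (φ := φ) (x := x) (y := y) (r := r) (j := j)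
    ⟨hb, hφ, Ne.symm hr.2, fun v => ?_⟩
  rw [← mem_colorClass, ← heq, mem_insert, mem_singleton]

end PairClass

section LargeOrder

variable [Fintype V] {a b q u v w x : V}

/-- The vertices other than `u` and `v` adjacent to neither of them. -/
noncomputable def commonNonNbrs (G : SimpleGraph V) (u v : V) : Finset V :=
  {w | (w ≠ u ∧ w ≠ v) ∧ ¬ G.Adj u w ∧ ¬ G.Adj v w}

theorem mem_commonNonNbrs :
    w ∈ commonNonNbrs G u v ↔ (w ≠ u ∧ w ≠ v) ∧ ¬ G.Adj u w ∧ ¬ G.Adj v w :=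
  mem_filter_univ w

theorem isClique_commonNonNbrs (hG : FourK1Free G) (huv : u ≠ v) (nuv : ¬ G.Adj u v) :
    G.IsClique (commonNonNbrs G u v : Set V) := by
  intro a ha b hb hab
  rw [mem_coe, mem_commonNonNbrs] at ha hb
  obtain ⟨t, ht, htb⟩ := exists_adj_of_isIndepSet hG (isIndepSet_triple nuv ha.2.1 ha.2.2)
    (card_eq_three.2 ⟨u, v, a, huv, ha.1.1.symm, ha.1.2.symm, rfl⟩)
    (v := b) (by simp [hb.1, hab.symm])
  simp only [mem_insert, mem_singleton] at ht
  rcases ht with rfl | rfl | rfl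
  exacts [absurd htb hb.2.1, absurd htb hb.2.2, htb]

/-- The vertices other than `q` not adjacent to `q`. -/
noncomputable def nonNbrs (G : SimpleGraph V) (q : V) : Finset V :=
  {w | w ≠ q ∧ ¬ G.Adj q w}

theorem mem_nonNbrs : w ∈ nonNbrs G q ↔ w ≠ q ∧ ¬ G.Adj q w := mem_filter_univ w

theorem mem_commonNonNbrs_of_mem_nonNbrs (hw : w ∈ nonNbrs G q) (hwv : w ≠ v)
    (nvw : ¬ G.Adj v w) : w ∈ commonNonNbrs G q v := by
  rw [mem_nonNbrs] at hw
  exact mem_commonNonNbrs.2 ⟨⟨hw.1, hwv⟩, hw.2, nvw⟩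

theorem mem_nonNbrs_of_mem_commonNonNbrs (hw : w ∈ commonNonNbrs G q v) : w ∈ nonNbrs G q := by
  rw [mem_commonNonNbrs] at hw
  exact mem_nonNbrs.2 ⟨hw.1.1, hw.2.1⟩

theorem adj_of_mem_nonNbrs (hG : FourK1Free G) (hu : u ∈ nonNbrs G q) (hv : v ∈ nonNbrs G q)
    (hw : w ∈ nonNbrs G q) (hvu : v ≠ u) (hwu : w ≠ u) (hvw : v ≠ w) (nuv : ¬ G.Adj u v)
    (nuw : ¬ G.Adj u w) : G.Adj v w := by
  have hqu := mem_nonNbrs.1 hu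
  exact isClique_commonNonNbrs hG hqu.1.symm hqu.2 (mem_commonNonNbrs_of_mem_nonNbrs hv hvu nuv)
    (mem_commonNonNbrs_of_mem_nonNbrs hw hwu nuw) hvw

theorem card_nonNbrs_le (q : V) (huv : u ≠ v) (nuv : ¬ G.Adj u v) :
    #(nonNbrs G q) ≤ #(commonNonNbrs G q v) + #(commonNonNbrs G q u) +
      #(nbrsIn G (nbrsIn G (nonNbrs G q) u) v) := by
  have hcover : nonNbrs G q ⊆ commonNonNbrs G q v ∪ commonNonNbrs G q u ∪
      nbrsIn G (nbrsIn G (nonNbrs G q) u) v := fun w hw => by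
    simp only [mem_union, mem_commonNonNbrs, mem_nbrsIn, mem_nonNbrs] at *
    grind [G.adj_comm]
  have := (card_le_card hcover).trans (card_union_le _ _)
  have := card_union_le (commonNonNbrs G q v) (commonNonNbrs G q u)
  omega

namespace IsCriticalCounterexample

theorem card_lt_of_isClique (hb : IsCriticalCounterexample G k) (hT : G.IsClique (T : Set V)) :
    #T < k := by
  by_contra! hcon
  exact hb.cliqueFree.mono hcon T ⟨hT, rfl⟩

/-- The neighbourhoods of `u` and `v` have at most `2(k + 1)` vertices in total, and the vertices
outside both form a clique. -/
theorem card_le_two_of_subset_commonNeighbors (hb : IsCriticalCounterexample G k)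
    (hn : 3 * k + 1 ≤ Fintype.card V) (huv : u ≠ v) (nuv : ¬ G.Adj u v)
    (hT : (T : Set V) ⊆ G.commonNeighbors u v) : #T ≤ 2 := by
  have hinter : T ⊆ G.neighborFinset u ∩ G.neighborFinset v := fun w hw => by
    simpa [mem_commonNeighbors] using hT hw
  have hcover : (univ : Finset V) ⊆
      G.neighborFinset u ∪ G.neighborFinset v ∪ ({u, v} ∪ commonNonNbrs G u v) := fun w _ => by
    simp only [mem_union, mem_neighborFinset, mem_insert, mem_singleton, mem_commonNonNbrs]
    tauto
  have hcard := (card_le_card hcover).trans (card_union_le _ _)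
  rw [card_univ] at hcard
  have hrest := card_union_le {u, v} (commonNonNbrs G u v)
  rw [card_pair huv] at hrest
  have hsum := card_union_add_card_inter (G.neighborFinset u) (G.neighborFinset v)
  rw [card_neighborFinset_eq_degree, card_neighborFinset_eq_degree] at hsum
  have := card_le_card hinter
  have := hb.card_lt_of_isClique (isClique_commonNonNbrs hb.fourK1Free huv nuv)
  have := hb.degree_le u
  have := hb.degree_le v
  omega

theorem card_add_card_lt_of_isClique (hb : IsCriticalCounterexample G k)
    (hn : 3 * k + 1 ≤ Fintype.card V) (hT : G.IsClique (T : Set V)) (hT3 : 3 ≤ #T)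
    (hQT : ∀ w ∈ Q, ∀ t ∈ T, G.Adj w t) : #T + #Q < k := by
  have hdisj : Disjoint T Q := disjoint_left.2 fun t ht ht' => (hQT t ht' t ht).ne rfl
  rw [← card_union_of_disjoint hdisj]
  refine hb.card_lt_of_isClique ?_
  rw [coe_union, IsClique, Set.pairwise_union]
  refine ⟨hT, fun a ha b hb' hab => ?_, fun t ht w hw _ => ⟨(hQT w hw t ht).symm, hQT w hw t ht⟩⟩
  by_contra nab
  have := hb.card_le_two_of_subset_commonNeighbors hn hab nab (T := T)
    fun w hw => ⟨hQT a ha w hw, hQT b hb' w hw⟩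
  omega

theorem le_card_nonNbrs_add_one (hb : IsCriticalCounterexample G k)
    (hn : 3 * k + 1 ≤ Fintype.card V) (q : V) : 2 * k ≤ #(nonNbrs G q) + 1 := by
  have hcover : (univ : Finset V) ⊆ insert q (G.neighborFinset q ∪ nonNbrs G q) := fun w _ => by
    simp only [mem_insert, mem_union, mem_neighborFinset, mem_nonNbrs]
    tauto
  have hcard := (card_le_card hcover).trans (card_insert_le _ _)
  have hunion := card_union_le (G.neighborFinset q) (nonNbrs G q)
  rw [card_neighborFinset_eq_degree] at hunion
  rw [card_univ] at hcard
  have := hb.degree_le q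
  omega

theorem card_commonNonNbrs_lt (hb : IsCriticalCounterexample G k) (hu : u ∈ nonNbrs G q) :
    #(commonNonNbrs G q u) < k :=
  have hqu := mem_nonNbrs.1 hu
  hb.card_lt_of_isClique (isClique_commonNonNbrs hb.fourK1Free hqu.1.symm hqu.2)

theorem le_card_commonNonNbrs_add_two (hb : IsCriticalCounterexample G k)
    (hn : 3 * k + 1 ≤ Fintype.card V) (hu : u ∈ nonNbrs G q) (huv : u ≠ v)
    (nuv : ¬ G.Adj u v) : k ≤ #(commonNonNbrs G q v) + 2 := by
  have hcommon : #(nbrsIn G (nbrsIn G (nonNbrs G q) u) v) ≤ 2 :=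
    hb.card_le_two_of_subset_commonNeighbors hn huv nuv fun w hw => by
      rw [mem_coe, mem_nbrsIn, mem_nbrsIn] at hw
      exact ⟨hw.1.2, hw.2⟩
  have := hb.le_card_nonNbrs_add_one hn q
  have := card_nonNbrs_le q huv nuv
  have := hb.card_commonNonNbrs_lt hu
  omega

/-- Otherwise the common neighbours of `u` and `v` could be distributed over the two cliques, of
total size at most `2k - 2`. -/
theorem exists_not_adj_not_adj (hb : IsCriticalCounterexample G k)
    (hn : 3 * k + 1 ≤ Fintype.card V) (hu : u ∈ nonNbrs G q) (hv : v ∈ nonNbrs G q)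
    (huv : u ≠ v) (nuv : ¬ G.Adj u v) :
    ∃ x ∈ nbrsIn G (nbrsIn G (nonNbrs G q) u) v, (∃ a ∈ commonNonNbrs G q v, ¬ G.Adj x a) ∧
      ∃ b ∈ commonNonNbrs G q u, ¬ G.Adj x b := by
  by_contra! hcon
  have hcard := card_nonNbrs_le q huv nuv
  set N := nbrsIn G (nbrsIn G (nonNbrs G q) u) v
  have hjoin : ∀ z ∈ nonNbrs G q, k ≤ #(commonNonNbrs G q z) + 2 →
      #(commonNonNbrs G q z) + #{x ∈ N | ∀ a ∈ commonNonNbrs G q z, G.Adj x a} < k := by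
    intro z hz hlarge
    have hqz := mem_nonNbrs.1 hz
    have := hb.eight_le
    exact hb.card_add_card_lt_of_isClique hn
      (isClique_commonNonNbrs hb.fourK1Free hqz.1.symm hqz.2) (by omega)
      fun x hx => (mem_filter.1 hx).2
  have hjoinV := hjoin v hv (hb.le_card_commonNonNbrs_add_two hn hu huv nuv)
  have hjoinU := hjoin u hu (hb.le_card_commonNonNbrs_add_two hn hv huv.symm (mt Adj.symm nuv))
  have hcover : N ⊆ {x ∈ N | ∀ a ∈ commonNonNbrs G q v, G.Adj x a} ∪
      {x ∈ N | ∀ a ∈ commonNonNbrs G q u, G.Adj x a} := by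
    intro x hx
    rw [mem_union, mem_filter, mem_filter]
    by_cases hxv : ∀ a ∈ commonNonNbrs G q v, G.Adj x a
    · exact .inl ⟨hx, hxv⟩
    · push Not at hxv
      exact .inr ⟨hx, hcon x hx hxv⟩
  have := (card_le_card hcover).trans (card_union_le _ _)
  have := hb.le_card_nonNbrs_add_one hn q
  omega

theorem card_nbrsIn_commonNonNbrs_le_two (hb : IsCriticalCounterexample G k)
    (hn : 3 * k + 1 ≤ Fintype.card V) (hv : v ∈ nonNbrs G q)
    (ha : a ∈ commonNonNbrs G q v) (hvx : G.Adj v x) (nxa : ¬ G.Adj x a) :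
    #(nbrsIn G (commonNonNbrs G q v) x) ≤ 2 := by
  have hqv := mem_nonNbrs.1 hv
  have hxa : x ≠ a := fun e => (mem_commonNonNbrs.1 ha).2.2 (e ▸ hvx)
  refine hb.card_le_two_of_subset_commonNeighbors hn hxa nxa fun w hw => ?_
  rw [mem_coe, mem_nbrsIn] at hw
  exact ⟨hw.2, isClique_commonNonNbrs hb.fourK1Free hqv.1.symm hqv.2 ha hw.1
    fun e => nxa (e ▸ hw.2)⟩

theorem card_not_adj_commonNonNbrs_le_two (hb : IsCriticalCounterexample G k)
    (hn : 3 * k + 1 ≤ Fintype.card V) (hv : v ∈ nonNbrs G q) (hu : u ∈ commonNonNbrs G q v)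
    (hx : x ∈ nonNbrs G q) (hux : G.Adj u x) (hvx : G.Adj v x)
    (hb' : b ∈ commonNonNbrs G q u) (nxb : ¬ G.Adj x b) :
    #{w ∈ commonNonNbrs G q v | ¬ G.Adj x w} ≤ 2 := by
  have hqv := mem_nonNbrs.1 hv
  have hub := mem_commonNonNbrs.1 hb'
  refine hb.card_le_two_of_subset_commonNeighbors hn hub.1.2.symm hub.2.2 fun w hw => ?_
  rw [mem_coe, mem_filter] at hw
  have hvw := mem_commonNonNbrs.1 hw.1
  have hclique := isClique_commonNonNbrs hb.fourK1Free hqv.1.symm hqv.2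
  have huw : G.Adj u w := hclique hu hw.1 fun e => hw.2 (e ▸ hux.symm)
  have hbw : b ≠ w := fun e => hub.2.2 (e ▸ huw)
  exact ⟨huw, adj_of_mem_nonNbrs hb.fourK1Free hx (mem_nonNbrs_of_mem_commonNonNbrs hb')
    (mem_nonNbrs_of_mem_commonNonNbrs hw.1) (fun e => hub.2.2 (e ▸ hux))
    (fun e => hvw.2.2 (e ▸ hvx)) hbw nxb hw.2⟩

theorem card_le_three_mul (hb : IsCriticalCounterexample G k) : Fintype.card V ≤ 3 * k := by
  by_contra! hn
  have hk := hb.eight_le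
  obtain ⟨q⟩ : Nonempty V := Fintype.card_pos_iff.1 (by omega)
  have hq := hb.le_card_nonNbrs_add_one hn q
  obtain ⟨u, hu, v, hv, huv, nuv⟩ :=
    exists_not_adj_of_cliqueFree hb.cliqueFree (W := nonNbrs G q) (by omega)
  obtain ⟨x, hx, ⟨a, ha, nxa⟩, b, hb', nxb⟩ := hb.exists_not_adj_not_adj hn hu hv huv nuv
  rw [mem_nbrsIn, mem_nbrsIn] at hx
  have hadj := hb.card_nbrsIn_commonNonNbrs_le_two hn hv ha hx.2 nxa
  have hnot := hb.card_not_adj_commonNonNbrs_le_two hn hv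
    (mem_commonNonNbrs_of_mem_nonNbrs hu huv (mt Adj.symm nuv)) hx.1.1 hx.1.2 hx.2 hb' nxb
  have hsplit := card_filter_add_card_filter_not (s := commonNonNbrs G q v) (fun w => G.Adj x w)
  rw [← nbrsIn] at hsplit
  have := hb.le_card_commonNonNbrs_add_two hn hu huv nuv
  omega

theorem card_eq (hb : IsCriticalCounterexample G k) (x : V) : Fintype.card V = 3 * k + 1 := by
  obtain ⟨φ, hφ⟩ := hb.exists_isProperOff (mem_singleton_self x)
  have hsum : #(univ.erase x) = ∑ j : Fin k, #{v ∈ univ.erase x | φ v = j} :=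
    card_eq_sum_card_fiberwise fun _ _ => mem_coe.2 (mem_univ _)
  have hclass : ∀ j : Fin k, {v ∈ univ.erase x | φ v = j} = colorClass {x} φ j := fun j => by
    ext v
    simp [mem_colorClass]
  simp only [hclass, hb.card_colorClass_singleton hφ] at hsum
  rw [card_erase_of_mem (mem_univ x), card_univ, sum_const, card_univ, Fintype.card_fin,
    smul_eq_mul] at hsum
  have : 0 < Fintype.card V := Fintype.card_pos_iff.2 ⟨x⟩
  omega

end IsCriticalCounterexample

theorem not_isCriticalCounterexample : ¬ IsCriticalCounterexample G k := by
  intro hb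
  obtain ⟨x⟩ : Nonempty V := by
    by_contra hV
    rw [not_nonempty_iff] at hV
    exact hb.not_colorable (.of_isEmpty k)
  have := hb.card_eq x
  have := hb.card_le_three_mul
  omega

end LargeOrder

section Reduction

variable {W : Type*} {H : SimpleGraph W}

theorem fourK1Free_of_embedding (f : H ↪g G) (hG : FourK1Free G) : FourK1Free H := by
  rintro ⟨s, hs, hind⟩
  refine hG ⟨s.map f.toEmbedding, by rw [card_map, hs], ?_⟩
  simp only [mem_map, forall_exists_index, and_imp]
  rintro _ a ha rfl _ b hb rfl hab hadj
  exact hind a ha b hb (fun e => hab (e ▸ rfl)) (f.map_adj_iff.1 hadj)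

theorem degree_le_degree_of_embedding [Fintype V] [Fintype W] (f : H ↪g G) (w : W) :
    H.degree w ≤ G.degree (f w) := by
  rw [← card_neighborFinset_eq_degree, ← card_neighborFinset_eq_degree,
    ← card_map f.toEmbedding]
  refine card_le_card fun v hv => ?_
  obtain ⟨z, hz, rfl⟩ := mem_map.1 hv
  rw [mem_neighborFinset] at hz ⊢
  exact f.map_adj_iff.2 hz

theorem exists_minimal_not_colorable_induce [Finite V] (hG : ¬ G.Colorable k) :
    ∃ s : Finset V, ¬ (G.induce (s : Set V)).Colorable k ∧
      ∀ v : (s : Set V), ((G.induce (s : Set V)).induce {v}ᶜ).Colorable k := by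
  have := Fintype.ofFinite V
  have huniv : ¬ (G.induce ((univ : Finset V) : Set V)).Colorable k := fun h =>
    hG (h.of_hom ⟨fun v => ⟨v, by simp⟩, id⟩)
  obtain ⟨s, -, hs⟩ := exists_minimal_le_of_wellFoundedLT
    (fun s : Finset V => ¬ (G.induce (s : Set V)).Colorable k) univ huniv
  refine ⟨s, hs.prop, fun v => ?_⟩
  have hcol : (G.induce ((s.erase v : Finset V) : Set V)).Colorable k :=
    not_not.1 (hs.not_prop_of_lt (erase_ssubset v.2))
  exact hcol.of_hom
    ⟨fun w => ⟨w.1, mem_coe.2 (mem_erase.2 ⟨fun e => w.2 (Subtype.ext e), w.1.2⟩)⟩, id⟩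

theorem colorable_of_fourK1Free [Fintype V] (hk : 8 ≤ k) (hG : FourK1Free G)
    (hdeg : ∀ v, G.degree v ≤ k + 1) (hclique : G.CliqueFree (k + 1)) : G.Colorable k := by
  by_contra hcol
  obtain ⟨s, hs, hcrit⟩ := exists_minimal_not_colorable_induce hcol
  let f : G.induce (s : Set V) ↪g G := Embedding.induce _
  exact not_isCriticalCounterexample
    { eight_le := hk
      fourK1Free := fourK1Free_of_embedding f hG
      degree_le := fun v => (degree_le_degree_of_embedding f v).trans (hdeg v)
      cliqueFree_succ := hclique.comap ⟨f.toCopy⟩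
      not_colorable := hs
      colorable_induce_compl := hcrit }

end Reduction

end BorodinKostochka

/-- Borodin–Kostochka conjecture for `4K₁`-free graphs: if `Δ(G) ≥ 9` then
`χ(G) ≤ max {Δ(G) - 1, ω(G)}`. -/
theorem borodin_kostochka_fourK1Free {V : Type*} [Fintype V]
    (G : SimpleGraph V) [DecidableRel G.Adj]
    (hG : FourK1Free G) (hΔ : 9 ≤ G.maxDegree) :
    G.chromaticNumber ≤ ((max (G.maxDegree - 1) G.cliqueNum : ℕ) : ℕ∞) := by
  refine (BorodinKostochka.colorable_of_fourK1Free (by omega) hG (fun v => ?_)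
    fun W hW => ?_).chromaticNumber_le
  · have hdeg : G.degree v ≤ max (G.maxDegree - 1) G.cliqueNum + 1 := by
      have := G.degree_le_maxDegree v
      omega
    convert hdeg
  · have := hW.isClique.card_le_cliqueNum
    have := hW.card_eq
    omega
end
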